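/- arXiv:2103.02924 — 3 statements merged into one kernel-verified Lean document; each statement's English description precedes it below -/
import Mathlib

section
/- Let val be the optimal value of the GMP over the simplex Δ_{n−1} with f_0, f_1, ..., f_m homogeneous polynomials of degree d and b_1, ..., b_m ∈ ℝ, and assume the GMP is feasible and a dual optimal solution (ȳ, t) ∈ ℝ^m × ℝ_{≥0} exists. Set f_{m+1} := (x_1 + ... + x_n)^d (which equals 1 on Δ_{n−1}), ȳ_{m+1} := −t, y_0 := 1 and y_i := −ȳ_i for i ∈ {1,...,m+1}. Then for every integer r > d(d−1)/2 + 1, 0 ≤ val − f_LP^(r) ≤ ( Σ_{i=0}^{m+1} B(y_i f_i) + t ) · d(d−1) / ( 2(r−1) − d(d−1) ). -/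
open MeasureTheory MvPolynomial

/-- For a homogeneous polynomial `f = ∑_{|α| = d} f_α x^α` of degree `d`,
`B(f) = max_{|α| = d} (α₁!⋯αₙ!/d!)·f_α`. -/
noncomputable def Bcoef {n : ℕ} (d : ℕ) (f : MvPolynomial (Fin n) ℝ) : ℝ :=
  sSup {c : ℝ | ∃ α : Fin n →₀ ℕ, (∑ i, α i) = d ∧
    c = ((∏ i, Nat.factorial (α i) : ℕ) : ℝ) / (Nat.factorial d : ℝ) * coeff α f}

/-!
Strong duality for the moment problem holds because the moments of measures of mass at most one on a
compact set form a compact convex set, which can be separated from any unattained value. Hence `val`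
is the dual objective at `(ȳ, t)`, and the homogenized dual slack `p = f₀ - ∑ ȳᵢ fᵢ + t (∑ xⱼ)^d` is
nonnegative on the simplex. If `p` is dominated coefficientwise by `B (∑ xⱼ)^d`, then comparing
falling factorials with powers shows that `(p + ε (∑ xⱼ)^d) (∑ xⱼ)^(r - d)` has nonnegative
coefficients for `ε = B C / (r - C)` with `C = d.choose 2`. A feasible functional of the level-`r`
relaxation is therefore nonnegative on this product, whose value is `L p + ε L 1`, so that
`L p ≥ -ε` and `L f₀ ≥ val - ε`.
-/

lemma exists_nonneg_forall_add_nonneg {X : Type*} [TopologicalSpace X] {K : Set X} {g : X → ℝ}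
    (hK : IsCompact K) (hg : ContinuousOn g K) : ∃ s : ℝ, 0 ≤ s ∧ ∀ x ∈ K, 0 ≤ g x + s := by
  obtain ⟨l, hl⟩ := hK.bddBelow_image hg
  refine ⟨max 0 (-l), le_max_left _ _, fun x hx => ?_⟩
  linarith [hl ⟨x, hx, rfl⟩, le_max_right 0 (-l)]

section Duality

variable {X ι : Type*} [MeasurableSpace X] {K : Set X} {g₀ : X → ℝ} {g : ι → X → ℝ} {b : ι → ℝ}

/-- The feasible set of the generalized moment problem over `K`: measures carried by `K`, of mass at
most one, with prescribed moments `∫ gᵢ dν = bᵢ`. -/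
def gmpFeasible (K : Set X) (g : ι → X → ℝ) (b : ι → ℝ) : Set (Measure X) :=
  {ν | IsFiniteMeasure ν ∧ ν Kᶜ = 0 ∧ (∀ i, ∫ x, g i x ∂ν = b i) ∧ ν K ≤ 1}

/-- The optimal value `inf ∫ g₀ dν` of the generalized moment problem. As an infimum in `ℝ` it is
meaningful when the problem is feasible and bounded. -/
noncomputable def gmpValue (K : Set X) (g₀ : X → ℝ) (g : ι → X → ℝ) (b : ι → ℝ) : ℝ :=
  sInf ((fun ν => ∫ x, g₀ x ∂ν) '' gmpFeasible K g b)

/-- The optimal value of the dual problem: maximize `∑ yᵢ bᵢ - s` subject to `s ≥ 0` and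
`g₀ - ∑ yᵢ gᵢ + s ≥ 0` on `K`, where `s` is the multiplier of the mass constraint. -/
noncomputable def gmpDualValue [Fintype ι] (K : Set X) (g₀ : X → ℝ) (g : ι → X → ℝ)
    (b : ι → ℝ) : ℝ :=
  sSup {v | ∃ (y : ι → ℝ) (s : ℝ), 0 ≤ s ∧ (∀ x ∈ K, 0 ≤ g₀ x - ∑ i, y i * g i x + s) ∧
    v = ∑ i, y i * b i - s}

/-- All pairs (objective value, moment vector) realized by measures of mass at most one carried by
`K`. -/
def momentSet (K : Set X) (g₀ : X → ℝ) (g : ι → X → ℝ) : Set (ℝ × (ι → ℝ)) :=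
  {z | ∃ ν ∈ gmpFeasible K g z.2, ∫ x, g₀ x ∂ν = z.1}

lemma measure_univ_le_one_of_mem_gmpFeasible {ν : Measure X} (hν : ν ∈ gmpFeasible K g b) :
    ν Set.univ ≤ 1 := by
  obtain ⟨_, hK, _, hmass⟩ := hν
  calc ν Set.univ ≤ ν K + ν Kᶜ := by rw [← Set.union_compl_self K]; exact measure_union_le _ _
    _ ≤ 1 := by rwa [hK, add_zero]

lemma measureReal_univ_le_one_of_mem_gmpFeasible {ν : Measure X} (hν : ν ∈ gmpFeasible K g b) :
    ν.real Set.univ ≤ 1 :=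
  ENNReal.toReal_le_of_le_ofReal zero_le_one
    (by simpa using measure_univ_le_one_of_mem_gmpFeasible hν)

lemma zero_mem_momentSet : (0 : ℝ × (ι → ℝ)) ∈ momentSet K g₀ g :=
  ⟨0, ⟨inferInstance, by simp⟩, by simp⟩

lemma mk_mem_momentSet [MeasurableSingletonClass X] {x : X} (hx : x ∈ K) :
    (g₀ x, fun i => g i x) ∈ momentSet K g₀ g :=
  ⟨Measure.dirac x, ⟨inferInstance, by simp [hx], fun i => integral_dirac _ _, by simp [hx]⟩,
    integral_dirac _ _⟩

variable [TopologicalSpace X]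

section Hausdorff

variable [OpensMeasurableSpace X] [T2Space X]

lemma integrable_of_measure_compl_eq_zero {ν : Measure X} [IsFiniteMeasure ν] {h : X → ℝ}
    (hK : IsCompact K) (hνK : ν Kᶜ = 0) (hh : ContinuousOn h K) : Integrable h ν := by
  have hrestrict : ν.restrict K = ν := Measure.restrict_eq_self_of_ae_mem hνK
  simpa only [IntegrableOn, hrestrict] using hh.integrableOn_compact (μ := ν) hK

lemma convex_momentSet (hK : IsCompact K) (hg₀ : ContinuousOn g₀ K)
    (hg : ∀ i, ContinuousOn (g i) K) : Convex ℝ (momentSet K g₀ g) := by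
  rintro ⟨z₀, z⟩ ⟨μ, ⟨hμ, hμK, hμz, hμ1⟩, rfl⟩ ⟨w₀, w⟩ ⟨ν, ⟨hν, hνK, hνw, hν1⟩, rfl⟩
    a a' ha ha' haa'
  lift a to NNReal using ha
  lift a' to NNReal using ha'
  have integral_comb {h : X → ℝ} (hh : ContinuousOn h K) :
      ∫ x, h x ∂(a • μ + a' • ν) = a * ∫ x, h x ∂μ + a' * ∫ x, h x ∂ν := by
    have hhμ : Integrable h μ := integrable_of_measure_compl_eq_zero hK hμK hh
    have hhν : Integrable h ν := integrable_of_measure_compl_eq_zero hK hνK hh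
    rw [integral_add_measure (hhμ.smul_measure_nnreal) (hhν.smul_measure_nnreal),
      integral_smul_nnreal_measure, integral_smul_nnreal_measure]
    rfl
  refine ⟨a • μ + a' • ν, ⟨inferInstance, by simp [hμK, hνK], fun i => ?_, ?_⟩,
    integral_comb hg₀⟩
  · rw [integral_comb (hg i), hμz i, hνw i]
    rfl
  · calc (a • μ + a' • ν) K = a * μ K + a' * ν K := rfl
      _ ≤ a * 1 + a' * 1 := by gcongr
      _ = 1 := by rw [mul_one, mul_one]; exact_mod_cast haa'

theorem gmp_weak_duality [Fintype ι] (hK : IsCompact K) (hg₀ : ContinuousOn g₀ K)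
    (hg : ∀ i, ContinuousOn (g i) K) {ν : Measure X} (hν : ν ∈ gmpFeasible K g b)
    {y : ι → ℝ} {s : ℝ} (hs : 0 ≤ s) (hpos : ∀ x ∈ K, 0 ≤ g₀ x - ∑ i, y i * g i x + s) :
    ∑ i, y i * b i - s ≤ ∫ x, g₀ x ∂ν := by
  have hmass := measureReal_univ_le_one_of_mem_gmpFeasible hν
  obtain ⟨_, hνK, hνb, _⟩ := hν
  have hint₀ : Integrable g₀ ν := integrable_of_measure_compl_eq_zero hK hνK hg₀
  have hint (i : ι) : Integrable (fun x => y i * g i x) ν :=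
    (integrable_of_measure_compl_eq_zero hK hνK (hg i)).const_mul _
  have hsum : Integrable (fun x => ∑ i, y i * g i x) ν := integrable_finsetSum _ fun i _ => hint i
  have hnonneg : 0 ≤ ∫ x, (g₀ x - ∑ i, y i * g i x + s) ∂ν := by
    apply integral_nonneg_of_ae
    filter_upwards [show ∀ᵐ x ∂ν, x ∈ K from hνK] with x hx using hpos x hx
  have hintegral : ∫ x, (g₀ x - ∑ i, y i * g i x + s) ∂ν =
      ∫ x, g₀ x ∂ν - ∑ i, y i * b i + ν.real Set.univ * s := by
    rw [integral_add (by exact hint₀.sub hsum) (integrable_const _), integral_sub hint₀ hsum,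
      integral_finsetSum _ fun i _ => hint i]
    simp only [integral_const_mul, hνb, integral_const, smul_eq_mul]
  have hmass_mul : ν.real Set.univ * s ≤ s := mul_le_of_le_one_left hs hmass
  linarith

lemma gmpValue_le (hK : IsCompact K) (hg₀ : ContinuousOn g₀ K) {ν : Measure X}
    (hν : ν ∈ gmpFeasible K g b) : gmpValue K g₀ g b ≤ ∫ x, g₀ x ∂ν := by
  obtain ⟨s, hs, hpos⟩ := exists_nonneg_forall_add_nonneg hK hg₀
  refine csInf_le ⟨-s, ?_⟩ ⟨ν, hν, rfl⟩
  rintro _ ⟨μ, ⟨hμ, hμK, -, hμ1⟩, rfl⟩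
  simpa using gmp_weak_duality (g := fun i : Empty => i.elim) (b := 0) hK hg₀ (fun i => i.elim)
    ⟨hμ, hμK, fun i => i.elim, hμ1⟩ (y := 0) hs (by simpa using hpos)

end Hausdorff

variable [T4Space X]

-- By Tietze's theorem `h` may be replaced by a bounded continuous function on all of `X`.
lemma continuousOn_integral_setOf_compl_eq_zero [OpensMeasurableSpace X] {h : X → ℝ}
    (hK : IsCompact K) (hh : ContinuousOn h K) :
    ContinuousOn (fun μ : FiniteMeasure X => ∫ x, h x ∂(μ : Measure X)) {μ | μ Kᶜ = 0} := by
  have : CompactSpace K := isCompact_iff_compactSpace.mp hK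
  obtain ⟨h', -, hh'⟩ := BoundedContinuousFunction.exists_norm_eq_domRestrict_eq_of_closed
    (BoundedContinuousFunction.mkOfCompact ⟨K.domRestrict h, hh.domRestrict⟩) hK.isClosed
  refine (FiniteMeasure.continuous_integral_boundedContinuousFunction h').continuousOn.congr ?_
  intro μ hμ
  have hμK : ∀ᵐ x ∂(μ : Measure X), x ∈ K :=
    (FiniteMeasure.null_iff_toMeasure_null μ Kᶜ).1 hμ
  refine integral_congr_ae ?_
  filter_upwards [hμK] with x hx
  exact (DFunLike.congr_fun hh' ⟨x, hx⟩).symm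

variable [BorelSpace X]

lemma isCompact_momentSet (hK : IsCompact K) (hg₀ : ContinuousOn g₀ K)
    (hg : ∀ i, ContinuousOn (g i) K) : IsCompact (momentSet K g₀ g) := by
  let moments (μ : FiniteMeasure X) : ℝ × (ι → ℝ) :=
    (∫ x, g₀ x ∂(μ : Measure X), fun i => ∫ x, g i x ∂(μ : Measure X))
  have hcont : ContinuousOn moments {μ | μ.mass ≤ 1 ∧ μ Kᶜ = 0} :=
    ContinuousOn.mono ((continuousOn_integral_setOf_compl_eq_zero hK hg₀).prodMk <|
      continuousOn_pi.2 fun i => continuousOn_integral_setOf_compl_eq_zero hK (hg i))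
      fun μ hμ => hμ.2
  convert (isCompact_setOfPred_finiteMeasure_le_of_isCompact 1 hK).image_of_continuousOn hcont
  ext z
  constructor
  · rintro ⟨ν, hν, hz⟩
    have hmass := measure_univ_le_one_of_mem_gmpFeasible hν
    obtain ⟨hfin, hνK, hνz, -⟩ := hν
    exact ⟨⟨ν, hfin⟩, ⟨ENNReal.toNNReal_mono ENNReal.one_ne_top hmass,
      (FiniteMeasure.null_iff_toMeasure_null _ _).2 hνK⟩, Prod.ext hz (funext hνz)⟩
  · rintro ⟨μ, ⟨hμ1, hμK⟩, rfl⟩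
    refine ⟨μ, ⟨inferInstance, (FiniteMeasure.null_iff_toMeasure_null μ Kᶜ).1 hμK,
      fun i => rfl, ?_⟩, rfl⟩
    calc (μ : Measure X) K ≤ (μ : Measure X) Set.univ := measure_mono K.subset_univ
      _ = μ.mass := μ.ennreal_mass.symm
      _ ≤ 1 := mod_cast hμ1

lemma exists_separation_of_lt_gmpValue [Fintype ι] (hK : IsCompact K) (hg₀ : ContinuousOn g₀ K)
    (hg : ∀ i, ContinuousOn (g i) K) {c : ℝ} (hc : c < gmpValue K g₀ g b) :
    ∃ (a : ℝ) (l : ι → ℝ) (u : ℝ), (∀ z ∈ momentSet K g₀ g, a * z.1 + ∑ i, l i * z.2 i < u) ∧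
      u < a * c + ∑ i, l i * b i := by
  classical
  have hcb : (c, b) ∉ momentSet K g₀ g := by
    rintro ⟨ν, hν, rfl⟩
    exact hc.not_ge (gmpValue_le hK hg₀ hν)
  obtain ⟨φ, u, hφu, hu⟩ := geometric_hahn_banach_closed_point (convex_momentSet hK hg₀ hg)
    (isCompact_momentSet hK hg₀ hg).isClosed hcb
  have hφ (z : ℝ × (ι → ℝ)) :
      φ z = φ (1, 0) * z.1 + ∑ i, φ (0, Pi.single i 1) * z.2 i := by
    have hz : z = z.1 • ((1 : ℝ), (0 : ι → ℝ)) +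
        ∑ i, z.2 i • ((0 : ℝ), (Pi.single i 1 : ι → ℝ)) := by
      ext j
      · simp [Prod.fst_sum]
      · simp [Prod.snd_sum, Finset.sum_apply, Pi.single_apply]
    conv_lhs => rw [hz]
    simp only [map_add, map_sum, map_smul, smul_eq_mul, mul_comm]
  exact ⟨φ (1, 0), fun i => φ (0, Pi.single i 1), u, fun z hz => hφ z ▸ hφu z hz,
    hφ (c, b) ▸ hu⟩

lemma exists_dual_of_lt_gmpValue [Fintype ι] (hK : IsCompact K) (hg₀ : ContinuousOn g₀ K)
    (hg : ∀ i, ContinuousOn (g i) K) (hfeas : (gmpFeasible K g b).Nonempty) {c : ℝ}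
    (hc : c < gmpValue K g₀ g b) :
    ∃ (y : ι → ℝ) (s : ℝ), 0 ≤ s ∧ (∀ x ∈ K, 0 ≤ g₀ x - ∑ i, y i * g i x + s) ∧
      c ≤ ∑ i, y i * b i - s := by
  obtain ⟨a, l, u, hlt, hu⟩ := exists_separation_of_lt_gmpValue hK hg₀ hg hc
  have hu_pos : 0 < u := by simpa using hlt 0 zero_mem_momentSet
  -- Feasibility makes the separating hyperplane non-vertical.
  have ha : a < 0 := by
    obtain ⟨ν, hν⟩ := hfeas
    have hν_lt := hlt (∫ x, g₀ x ∂ν, b) ⟨ν, hν, rfl⟩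
    have hc_lt : c < ∫ x, g₀ x ∂ν := hc.trans_le (gmpValue_le hK hg₀ hν)
    by_contra! ha
    linarith [mul_le_mul_of_nonneg_left hc_lt.le ha]
  have hsum (z : ι → ℝ) : ∑ i, l i / -a * z i = (∑ i, l i * z i) / -a := by
    simp only [Finset.sum_div, div_mul_eq_mul_div]
  have ha' : 0 < -a := neg_pos.2 ha
  refine ⟨fun i => l i / -a, u / -a, by positivity, fun x hx => ?_, ?_⟩
  · have hx_lt := hlt _ (mk_mem_momentSet hx)
    have hx_eq : g₀ x - (∑ i, l i * g i x) / -a + u / -a =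
        (u - (a * g₀ x + ∑ i, l i * g i x)) / -a := by
      field_simp [ha.ne]
      ring
    rw [hsum, hx_eq]
    exact div_nonneg (sub_nonneg.2 hx_lt.le) ha'.le
  · rw [hsum, ← sub_div, le_div_iff₀ ha']
    linarith

theorem gmpValue_eq_gmpDualValue [Fintype ι] (hK : IsCompact K) (hg₀ : ContinuousOn g₀ K)
    (hg : ∀ i, ContinuousOn (g i) K) (hfeas : (gmpFeasible K g b).Nonempty) :
    gmpValue K g₀ g b = gmpDualValue K g₀ g b := by
  apply le_antisymm
  · refine le_of_forall_lt_imp_le_of_dense fun c hc => ?_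
    obtain ⟨y, s, hs, hpos, hcy⟩ := exists_dual_of_lt_gmpValue hK hg₀ hg hfeas hc
    obtain ⟨ν, hν⟩ := hfeas
    refine hcy.trans (le_csSup ⟨∫ x, g₀ x ∂ν, ?_⟩ ⟨y, s, hs, hpos, rfl⟩)
    rintro _ ⟨y, s, hs, hpos, rfl⟩
    exact gmp_weak_duality hK hg₀ hg hν hs hpos
  · obtain ⟨s₀, hs₀, hpos₀⟩ := exists_nonneg_forall_add_nonneg hK hg₀
    refine csSup_le ⟨_, 0, s₀, hs₀, by simpa using hpos₀, rfl⟩ ?_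
    rintro _ ⟨y, s, hs, hpos, rfl⟩
    refine le_csInf (hfeas.image _) ?_
    rintro _ ⟨ν, hν, rfl⟩
    exact gmp_weak_duality hK hg₀ hg hν hs hpos

end Duality

lemma eval_smul_of_isHomogeneous {σ R : Type*} [CommSemiring R] {p : MvPolynomial σ R} {d : ℕ}
    (hp : p.IsHomogeneous d) (s : R) (x : σ → R) : eval (s • x) p = s ^ d * eval x p := by
  rw [eval_eq, eval_eq, Finset.mul_sum]
  refine Finset.sum_congr rfl fun α hα => ?_
  have hαd : d = ∑ i ∈ α.support, α i := hp.degree_eq_sum_deg_support hα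
  simp only [Pi.smul_apply, smul_eq_mul, mul_pow, Finset.prod_mul_distrib,
    Finset.prod_pow_eq_pow_sum, ← hαd]
  ring

lemma eval_nonneg_of_forall_coeff_nonneg {σ R : Type*} [CommSemiring R] [PartialOrder R]
    [IsOrderedRing R] {p : MvPolynomial σ R} (hp : ∀ α, 0 ≤ coeff α p) {x : σ → R} (hx : 0 ≤ x) :
    0 ≤ eval x p := by
  rw [eval_eq]
  exact Finset.sum_nonneg fun α _ =>
    mul_nonneg (hp α) (Finset.prod_nonneg fun i _ => pow_nonneg (hx i) _)

section SumPow

variable {σ R : Type*} [Fintype σ] [CommSemiring R]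

lemma isHomogeneous_sum_X_pow (k : ℕ) : ((∑ i, X i : MvPolynomial σ R) ^ k).IsHomogeneous k := by
  simpa using (IsHomogeneous.sum Finset.univ (X : σ → MvPolynomial σ R) 1
    fun i _ => isHomogeneous_X R i).pow k

lemma coeff_sum_X_pow_degree (β : σ →₀ ℕ) :
    coeff β ((∑ i, X i : MvPolynomial σ R) ^ β.degree) = β.multinomial := by
  rw [coeff_sum_X_pow_of_fintype, Finsupp.sum, ← Finsupp.degree_apply, if_pos rfl]

lemma prod_factorial_mul_multinomial (β : σ →₀ ℕ) :
    (∏ i, (β i).factorial) * β.multinomial = β.degree.factorial := by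
  rw [Finsupp.multinomial_eq_of_support_subset (Finset.subset_univ _), Finsupp.degree_eq_sum]
  exact Nat.multinomial_spec _ _

lemma descFactorial_mul_multinomial_tsub {α β : σ →₀ ℕ} (hαβ : α ≤ β) :
    β.degree.descFactorial α.degree * (β - α).multinomial =
      β.multinomial * ∏ i, (β i).descFactorial (α i) := by
  have hdegree : (β - α).degree = β.degree - α.degree := by
    rw [eq_tsub_iff_add_eq_of_le (Finsupp.degree_mono hαβ), ← map_add, tsub_add_cancel_of_le hαβ]
  have hprod : (∏ i, ((β - α) i).factorial) * ∏ i, (β i).descFactorial (α i) =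
      ∏ i, (β i).factorial := by
    rw [← Finset.prod_mul_distrib]
    exact Finset.prod_congr rfl fun i _ => Nat.factorial_mul_descFactorial (hαβ i)
  have hpos : 0 < ∏ i, ((β - α) i).factorial := Finset.prod_pos fun i _ => Nat.factorial_pos _
  apply Nat.eq_of_mul_eq_mul_left hpos
  calc (∏ i, ((β - α) i).factorial) * (β.degree.descFactorial α.degree * (β - α).multinomial)
      = (β.degree - α.degree).factorial * β.degree.descFactorial α.degree := by
        rw [mul_left_comm, prod_factorial_mul_multinomial, hdegree, mul_comm]
    _ = (∏ i, (β i).factorial) * β.multinomial := by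
        rw [Nat.factorial_mul_descFactorial (Finsupp.degree_mono hαβ),
          prod_factorial_mul_multinomial]
    _ = (∏ i, ((β - α) i).factorial) * (β.multinomial * ∏ i, (β i).descFactorial (α i)) := by
        rw [← hprod]
        ring

lemma descFactorial_mul_coeff_monomial_mul_sum_X_pow {α β : σ →₀ ℕ} {k : ℕ}
    (hβ : β.degree = α.degree + k) :
    β.degree.descFactorial α.degree * coeff β (monomial α 1 * (∑ i, X i : MvPolynomial σ R) ^ k) =
      β.multinomial * ∏ i, ((β i).descFactorial (α i) : R) := by
  rw [coeff_monomial_mul', one_mul]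
  split_ifs with hαβ
  · have hk : k = (β - α).degree := by
      have := congrArg Finsupp.degree (tsub_add_cancel_of_le hαβ)
      rw [map_add] at this
      lia
    rw [hk, coeff_sum_X_pow_degree]
    exact_mod_cast congrArg (Nat.cast (R := R)) (descFactorial_mul_multinomial_tsub hαβ)
  · obtain ⟨i, hi⟩ : ∃ i, β i < α i := by simpa [Finsupp.le_def] using hαβ
    rw [Finset.prod_eq_zero (Finset.mem_univ i) (by rw [Nat.descFactorial_of_lt hi, Nat.cast_zero]),
      mul_zero, mul_zero]

end SumPow

section Polya

variable {σ R : Type*} [Fintype σ] [Field R] [LinearOrder R] [IsStrictOrderedRing R]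
  {p : MvPolynomial σ R} {d : ℕ}

lemma eval_nonneg_of_forall_mem_stdSimplex [Nonempty σ] (hp : p.IsHomogeneous d)
    (hpos : ∀ x ∈ stdSimplex R σ, 0 ≤ eval x p) {x : σ → R} (hx : 0 ≤ x) : 0 ≤ eval x p := by
  classical
  have hsum : 0 ≤ ∑ i, x i := Finset.sum_nonneg fun i _ => hx i
  obtain ⟨u, hu, hxu⟩ : ∃ u ∈ stdSimplex R σ, x = (∑ i, x i) • u := by
    rcases hsum.eq_or_lt' with hzero | hpos
    · obtain ⟨i⟩ := ‹Nonempty σ›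
      refine ⟨Pi.single i 1, single_mem_stdSimplex R i, ?_⟩
      rw [hzero, zero_smul]
      exact funext fun j => (Finset.sum_eq_zero_iff_of_nonneg fun i _ => hx i).1 hzero j
        (Finset.mem_univ j)
    · refine ⟨(∑ i, x i)⁻¹ • x, ⟨fun i => mul_nonneg (inv_nonneg.2 hsum) (hx i), ?_⟩,
        (smul_inv_smul₀ hpos.ne' x).symm⟩
      simp only [Pi.smul_apply, smul_eq_mul, ← Finset.mul_sum, inv_mul_cancel₀ hpos.ne']
  rw [hxu, eval_smul_of_isHomogeneous hp]
  exact mul_nonneg (pow_nonneg hsum d) (hpos u hu)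

lemma descFactorial_mul_coeff_mul_sum_X_pow_le (hp : p.IsHomogeneous d)
    (hcoeff : ∀ α, 0 ≤ coeff α p) {β : σ →₀ ℕ} {k : ℕ} (hβ : β.degree = d + k) :
    β.degree.descFactorial d * coeff β (p * (∑ i, X i) ^ k) ≤
      β.multinomial * eval (fun i => (β i : R)) p := by
  have hexpand : p * (∑ i, X i) ^ k =
      ∑ α ∈ p.support, coeff α p • (monomial α 1 * (∑ i, X i : MvPolynomial σ R) ^ k) := by
    simp only [← smul_mul_assoc, smul_monomial, smul_eq_mul, mul_one, ← Finset.sum_mul,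
      support_sum_monomial_coeff]
  rw [hexpand, eval_eq', coeff_sum, Finset.mul_sum, Finset.mul_sum]
  refine Finset.sum_le_sum fun α hα => ?_
  obtain rfl : d = α.degree := hp.degree_eq_sum_deg_support hα
  have hprod : ∏ i, ((β i).descFactorial (α i) : R) ≤ ∏ i, (β i : R) ^ α i :=
    Finset.prod_le_prod (fun i _ => Nat.cast_nonneg _) fun i _ =>
      mod_cast Nat.descFactorial_le_pow (β i) (α i)
  calc (β.degree.descFactorial α.degree : R) *
        coeff β (coeff α p • (monomial α 1 * (∑ i, X i) ^ k))
      = coeff α p * (β.multinomial * ∏ i, ((β i).descFactorial (α i) : R)) := by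
        rw [coeff_smul, smul_eq_mul, mul_left_comm,
          descFactorial_mul_coeff_monomial_mul_sum_X_pow hβ]
    _ ≤ coeff α p * (β.multinomial * ∏ i, (β i : R) ^ α i) := by
        gcongr
        exact hcoeff α
    _ = β.multinomial * (coeff α p * ∏ i, (β i : R) ^ α i) := mul_left_comm _ _ _

lemma nonneg_of_forall_coeff_le_smul_sum_X_pow [Nonempty σ] {B : R}
    (hpos : ∀ x ∈ stdSimplex R σ, 0 ≤ eval x p)
    (hB : ∀ α, coeff α p ≤ coeff α (B • (∑ i, X i : MvPolynomial σ R) ^ d)) : 0 ≤ B := by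
  classical
  obtain ⟨i⟩ := ‹Nonempty σ›
  have hu := single_mem_stdSimplex R i
  have hdiff : 0 ≤ eval (Pi.single i 1) (B • (∑ i, X i : MvPolynomial σ R) ^ d - p) :=
    eval_nonneg_of_forall_coeff_nonneg (fun α => by simpa using hB α) hu.1
  have heval : eval (Pi.single i 1) (B • (∑ i, X i : MvPolynomial σ R) ^ d - p) =
      B - eval (Pi.single i 1) p := by simp [smul_eval]
  linarith [hpos _ hu]

lemma le_choose_two_add_one (d : ℕ) : d ≤ d.choose 2 + 1 := by
  induction d with
  | zero => exact Nat.zero_le _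
  | succ d ih =>
    rw [Nat.choose_succ_succ', Nat.choose_one_right]
    rcases d with _ | d
    · exact le_rfl
    · lia

lemma pow_mul_sub_choose_two_le_mul_descFactorial {r d : ℕ} (hdr : d ≤ r) :
    (r : R) ^ d * (r - d.choose 2) ≤ r * r.descFactorial d := by
  induction d with
  | zero => simp
  | succ d ih =>
    have hrd : (0 : R) ≤ r - d := sub_nonneg.2 (mod_cast (Nat.le_succ d).trans hdr)
    have hstep : (0 : R) ≤ r ^ d * (d * d.choose 2) := by positivity
    calc (r : R) ^ (d + 1) * (r - (d + 1).choose 2)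
        = (r - d) * (r ^ d * (r - d.choose 2)) - r ^ d * (d * d.choose 2) := by
          rw [Nat.choose_succ_succ', Nat.choose_one_right]
          push_cast
          ring
      _ ≤ (r - d) * (r * r.descFactorial d) := by
          linarith [mul_le_mul_of_nonneg_left (ih (by lia)) hrd]
      _ = r * r.descFactorial (d + 1) := by
          rw [Nat.descFactorial_succ]
          push_cast [Nat.cast_sub (show d ≤ r by lia)]
          ring

lemma pow_le_one_add_div_mul_descFactorial {r d : ℕ} (hr : d.choose 2 < r) :
    (r : R) ^ d ≤ (1 + d.choose 2 / (r - d.choose 2)) * r.descFactorial d := by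
  have hgap : (0 : R) < r - d.choose 2 := sub_pos.2 (mod_cast hr)
  have hdr : d ≤ r := (le_choose_two_add_one d).trans hr
  rw [one_add_div hgap.ne', sub_add_cancel, div_mul_eq_mul_div, le_div_iff₀ hgap]
  exact pow_mul_sub_choose_two_le_mul_descFactorial hdr

-- A quantitative Pólya theorem: the upper bound for polynomials with nonnegative coefficients is
-- applied to `B • (∑ i, X i) ^ d - p`, where it bounds the coefficients of `p * (∑ i, X i) ^ k`
-- from below.
theorem coeff_add_smul_mul_sum_X_pow_nonneg [Nonempty σ] {B : R} (hp : p.IsHomogeneous d)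
    (hpos : ∀ x ∈ stdSimplex R σ, 0 ≤ eval x p)
    (hB : ∀ α, coeff α p ≤ coeff α (B • (∑ i, X i : MvPolynomial σ R) ^ d))
    {β : σ →₀ ℕ} {k : ℕ} (hβ : β.degree = d + k) (hd : d.choose 2 < d + k) :
    0 ≤ coeff β ((p + (B * (d.choose 2 / ((d + k : ℕ) - d.choose 2))) • (∑ i, X i) ^ d) *
      (∑ i, X i) ^ k) := by
  set S : MvPolynomial σ R := ∑ i, X i
  set ε : R := d.choose 2 / ((d + k : ℕ) - d.choose 2)
  have hB0 : 0 ≤ B := nonneg_of_forall_coeff_le_smul_sum_X_pow hpos hB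
  have hSβ : coeff β (S ^ d * S ^ k) = β.multinomial := by
    rw [← pow_add, ← hβ, coeff_sum_X_pow_degree]
  have hevalS : eval (fun i => (β i : R)) S = (d + k : ℕ) := by
    rw [← hβ, Finsupp.degree_eq_sum]
    simp [S]
  have hdesc : (0 : R) < (d + k).descFactorial d :=
    Nat.cast_pos.2 (Nat.descFactorial_pos.2 (Nat.le_add_right d k))
  have hupper := descFactorial_mul_coeff_mul_sum_X_pow_le (p := B • S ^ d - p)
    ((smul_eq_C_mul (S ^ d) B ▸ (isHomogeneous_sum_X_pow d).C_mul B).sub hp)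
    (fun α => by simpa using hB α) hβ
  rw [sub_mul, smul_mul_assoc, coeff_sub, coeff_smul, hSβ, map_sub, smul_eval, map_pow, hevalS,
    hβ, smul_eq_mul] at hupper
  have hpβ : 0 ≤ eval (fun i => (β i : R)) p :=
    eval_nonneg_of_forall_mem_stdSimplex hp hpos fun i => Nat.cast_nonneg _
  have hpow : β.multinomial * (B * (d + k : ℕ) ^ d) ≤
      β.multinomial * (B * ((1 + ε) * (d + k).descFactorial d)) := by
    gcongr
    exact pow_le_one_add_div_mul_descFactorial hd
  rw [add_mul, smul_mul_assoc, coeff_add, coeff_smul, hSβ, smul_eq_mul]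
  refine nonneg_of_mul_nonneg_right ?_ hdesc
  linarith [mul_nonneg (Nat.cast_nonneg (α := R) β.multinomial) hpβ]

end Polya

section PseudoIntegral

variable {σ R : Type*} [Fintype σ]

/-- The level-`r` linear relaxation of integration over the standard simplex: functionals that are
nonnegative on monomials and do not see multiplication by `∑ xᵢ`, both tested only up to degree
`r`. They are defined on all polynomials, but only their values in degree at most `r` are
constrained. -/
structure IsSimplexPseudoIntegral [CommSemiring R] [PartialOrder R] (r : ℕ)
    (L : MvPolynomial σ R →ₗ[R] R) : Prop where
  monomial_nonneg : ∀ α : σ →₀ ℕ, α.degree ≤ r → 0 ≤ L (monomial α 1)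
  monomial_mul_sum_X : ∀ α : σ →₀ ℕ, α.degree + 1 ≤ r →
    L (monomial α 1) = L (monomial α 1 * ∑ i, X i)

namespace IsSimplexPseudoIntegral

section CommSemiring

variable [CommSemiring R] [PartialOrder R] {r d : ℕ} {L : MvPolynomial σ R →ₗ[R] R}
  {p : MvPolynomial σ R}

lemma map_nonneg [IsOrderedRing R] (hL : IsSimplexPseudoIntegral r L) (hp : p.IsHomogeneous d)
    (hdr : d ≤ r) (hcoeff : ∀ α, 0 ≤ coeff α p) : 0 ≤ L p := by
  rw [p.as_sum, map_sum]
  refine Finset.sum_nonneg fun α hα => ?_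
  have hα : α.degree = d := (hp.degree_eq_sum_deg_support hα).symm
  have hmonomial : monomial α (coeff α p) = coeff α p • monomial α 1 := by
    rw [smul_monomial, smul_eq_mul, mul_one]
  rw [hmonomial, map_smul]
  exact mul_nonneg (hcoeff α) (hL.monomial_nonneg α (hα.trans_le hdr))

lemma map_mul_sum_X (hL : IsSimplexPseudoIntegral r L) (hp : p.IsHomogeneous d)
    (hdr : d + 1 ≤ r) : L (p * ∑ i, X i) = L p := by
  conv_rhs => rw [p.as_sum]
  conv_lhs => rw [p.as_sum]
  rw [Finset.sum_mul, map_sum, map_sum]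
  refine Finset.sum_congr rfl fun α hα => ?_
  have hα : α.degree = d := (hp.degree_eq_sum_deg_support hα).symm
  have hmonomial : monomial α (coeff α p) = coeff α p • monomial α 1 := by
    rw [smul_monomial, smul_eq_mul, mul_one]
  rw [hmonomial, smul_mul_assoc, map_smul, map_smul, hL.monomial_mul_sum_X α (by rwa [hα])]

lemma map_mul_sum_X_pow (hL : IsSimplexPseudoIntegral r L) (hp : p.IsHomogeneous d) {k : ℕ}
    (hdr : d + k ≤ r) : L (p * (∑ i, X i) ^ k) = L p := by
  induction k with
  | zero => rw [pow_zero, mul_one]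
  | succ k ih =>
    rw [pow_succ, ← mul_assoc, hL.map_mul_sum_X (hp.mul (isHomogeneous_sum_X_pow k)) hdr,
      ih (by lia)]

lemma map_sum_X_pow (hL : IsSimplexPseudoIntegral r L) (hdr : d ≤ r) :
    L ((∑ i, X i) ^ d) = L 1 := by
  simpa using hL.map_mul_sum_X_pow (isHomogeneous_one σ R) (k := d) (by lia)

end CommSemiring

theorem neg_mul_map_one_le_map [Nonempty σ] [Field R] [LinearOrder R] [IsStrictOrderedRing R]
    {r d : ℕ} {L : MvPolynomial σ R →ₗ[R] R} {p : MvPolynomial σ R} {B : R}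
    (hL : IsSimplexPseudoIntegral r L) (hp : p.IsHomogeneous d)
    (hpos : ∀ x ∈ stdSimplex R σ, 0 ≤ eval x p)
    (hB : ∀ α, coeff α p ≤ coeff α (B • (∑ i, X i : MvPolynomial σ R) ^ d))
    (hr : d.choose 2 < r) : -(B * (d.choose 2 / (r - d.choose 2)) * L 1) ≤ L p := by
  obtain ⟨k, rfl⟩ := Nat.exists_eq_add_of_le ((le_choose_two_add_one d).trans hr)
  have hS (k : ℕ) := isHomogeneous_sum_X_pow (σ := σ) (R := R) k
  have hq : (p + (B * (d.choose 2 / ((d + k : ℕ) - d.choose 2))) •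
      (∑ i, X i) ^ d).IsHomogeneous d := by
    rw [smul_eq_C_mul]
    exact hp.add ((hS d).C_mul _)
  have hnonneg := hL.map_nonneg (hq.mul (hS k)) le_rfl fun β => by
    by_cases hβ : β.degree = d + k
    · exact coeff_add_smul_mul_sum_X_pow_nonneg hp hpos hB hβ hr
    · exact ((hq.mul (hS k)).coeff_eq_zero hβ).ge
  rw [hL.map_mul_sum_X_pow hq le_rfl, map_add, map_smul, hL.map_sum_X_pow (Nat.le_add_right d k),
    smul_eq_mul] at hnonneg
  linarith

end IsSimplexPseudoIntegral

end PseudoIntegral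

section LPHierarchy

variable {σ ι : Type*} [Fintype σ] {f₀ : MvPolynomial σ ℝ} {f : ι → MvPolynomial σ ℝ}
  {b : ι → ℝ} {d r : ℕ}

/-- The feasible set of the level-`r` LP relaxation of the moment problem over the simplex. -/
def lpFeasible (f : ι → MvPolynomial σ ℝ) (b : ι → ℝ) (r : ℕ) :
    Set (MvPolynomial σ ℝ →ₗ[ℝ] ℝ) :=
  {L | (∀ i, L (f i) = b i) ∧ L 1 ≤ 1 ∧ IsSimplexPseudoIntegral r L}

/-- The optimal value of the level-`r` LP relaxation. As an infimum in `ℝ` it is meaningful when the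
relaxation is feasible and bounded. -/
noncomputable def lpValue (f₀ : MvPolynomial σ ℝ) (f : ι → MvPolynomial σ ℝ) (b : ι → ℝ)
    (r : ℕ) : ℝ :=
  sInf ((fun L => L f₀) '' lpFeasible f b r)

/-- The homogenized slack `f₀ - ∑ yᵢ fᵢ + t (∑ xⱼ)^d` of the dual point `(y, t)`. On the simplex it
agrees with `f₀ - ∑ yᵢ fᵢ + t`. -/
noncomputable def dualSlack [Fintype ι] (d : ℕ) (f₀ : MvPolynomial σ ℝ)
    (f : ι → MvPolynomial σ ℝ) (y : ι → ℝ) (t : ℝ) : MvPolynomial σ ℝ :=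
  f₀ - ∑ i, y i • f i + t • (∑ j, X j) ^ d

lemma lpValue_eq_sInf_setOf_functions :
    lpValue f₀ f b r = sInf ((fun L => L f₀) '' {L : MvPolynomial σ ℝ → ℝ |
      (∀ p q, L (p + q) = L p + L q) ∧ (∀ (c : ℝ) p, L (c • p) = c * L p) ∧
      (∀ i, L (f i) = b i) ∧ L 1 ≤ 1 ∧
      (∀ α : σ →₀ ℕ, (∑ i, α i) ≤ r → 0 ≤ L (monomial α 1)) ∧
      (∀ α : σ →₀ ℕ, (∑ i, α i) + 1 ≤ r →
        L (monomial α 1) = L (monomial α 1 * ∑ i, X i))}) := by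
  rw [lpValue]
  congr 1
  ext v
  simp only [← Finsupp.degree_eq_sum]
  constructor
  · rintro ⟨L, ⟨hLb, hL1, hL⟩, rfl⟩
    exact ⟨L, ⟨map_add L, map_smul L, hLb, hL1, hL.monomial_nonneg, hL.monomial_mul_sum_X⟩, rfl⟩
  · rintro ⟨L, ⟨hadd, hsmul, hLb, hL1, hnonneg, hmul⟩, rfl⟩
    exact ⟨{ toFun := L, map_add' := hadd, map_smul' := hsmul },
      ⟨hLb, hL1, ⟨hnonneg, hmul⟩⟩, rfl⟩

lemma exists_mem_lpFeasible_apply_eq_integral {ν : Measure (σ → ℝ)}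
    (hν : ν ∈ gmpFeasible (stdSimplex ℝ σ) (fun i x => eval x (f i)) b) (r : ℕ) :
    ∃ L ∈ lpFeasible f b r, ∀ p, L p = ∫ x, eval x p ∂ν := by
  have hmass := measureReal_univ_le_one_of_mem_gmpFeasible hν
  obtain ⟨_, hνΔ, hνb, -⟩ := hν
  have hmem : ∀ᵐ x ∂ν, x ∈ stdSimplex ℝ σ := hνΔ
  have hint (p : MvPolynomial σ ℝ) : Integrable (fun x => eval x p) ν :=
    integrable_of_measure_compl_eq_zero (isCompact_stdSimplex ℝ σ) hνΔ
      (continuous_eval p).continuousOn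
  let L : MvPolynomial σ ℝ →ₗ[ℝ] ℝ :=
    { toFun := fun p => ∫ x, eval x p ∂ν
      map_add' := fun p q => by simp only [map_add, integral_add (hint p) (hint q)]
      map_smul' := fun c p => by
        simp only [smul_eval, integral_const_mul, RingHom.id_apply, smul_eq_mul] }
  refine ⟨L, ⟨hνb, ?_, ⟨fun α _ => integral_nonneg_of_ae ?_, fun α _ => integral_congr_ae ?_⟩⟩,
    fun p => rfl⟩
  · simpa [L] using hmass
  · filter_upwards [hmem] with x hx
    rw [eval_monomial, one_mul]
    exact Finset.prod_nonneg fun i _ => pow_nonneg (hx.1 i) _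
  · filter_upwards [hmem] with x hx
    simp [hx.2]

variable [Fintype ι] {y : ι → ℝ} {t B : ℝ}

lemma isHomogeneous_dualSlack (hf₀ : f₀.IsHomogeneous d) (hf : ∀ i, (f i).IsHomogeneous d) :
    (dualSlack d f₀ f y t).IsHomogeneous d := by
  simp only [dualSlack, smul_eq_C_mul]
  exact (hf₀.sub (IsHomogeneous.sum _ _ _ fun i _ => (hf i).C_mul _)).add
    ((isHomogeneous_sum_X_pow d).C_mul t)

lemma eval_dualSlack {x : σ → ℝ} (hx : x ∈ stdSimplex ℝ σ) :
    eval x (dualSlack d f₀ f y t) = eval x f₀ - ∑ i, y i * eval x (f i) + t := by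
  simp [dualSlack, smul_eval, hx.2]

lemma dual_objective_sub_le_of_mem_lpFeasible [Nonempty σ] (hf₀ : f₀.IsHomogeneous d)
    (hf : ∀ i, (f i).IsHomogeneous d) (ht : 0 ≤ t)
    (hpos : ∀ x ∈ stdSimplex ℝ σ, 0 ≤ eval x f₀ - ∑ i, y i * eval x (f i) + t)
    (hB : ∀ α, coeff α (dualSlack d f₀ f y t) ≤
      coeff α (B • (∑ j, X j : MvPolynomial σ ℝ) ^ d))
    (hr : d.choose 2 < r) {L : MvPolynomial σ ℝ →ₗ[ℝ] ℝ} (hL : L ∈ lpFeasible f b r) :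
    ∑ i, y i * b i - t - B * (d.choose 2 / (r - d.choose 2)) ≤ L f₀ := by
  obtain ⟨hLb, hL1, hL⟩ := hL
  have hslack_pos : ∀ x ∈ stdSimplex ℝ σ, 0 ≤ eval x (dualSlack d f₀ f y t) := fun x hx => by
    rw [eval_dualSlack hx]
    exact hpos x hx
  have hε : 0 ≤ B * (d.choose 2 / (r - d.choose 2) : ℝ) :=
    mul_nonneg (nonneg_of_forall_coeff_le_smul_sum_X_pow hslack_pos hB)
      (div_nonneg (Nat.cast_nonneg _) (sub_nonneg.2 (mod_cast hr.le)))
  have hdr : d ≤ r := (le_choose_two_add_one d).trans hr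
  have hLslack : L (dualSlack d f₀ f y t) = L f₀ - ∑ i, y i * b i + t * L 1 := by
    simp only [dualSlack, map_add, map_sub, map_sum, map_smul, smul_eq_mul, hLb,
      hL.map_sum_X_pow hdr]
  have hlower := hL.neg_mul_map_one_le_map (isHomogeneous_dualSlack hf₀ hf) hslack_pos hB hr
  linarith [mul_le_of_le_one_right ht hL1, mul_le_of_le_one_right hε hL1]

end LPHierarchy

theorem lp_hierarchy_rate_simplex_general {σ ι : Type*} [Fintype σ] [Nonempty σ] [Fintype ι]
    {f₀ : MvPolynomial σ ℝ} {f : ι → MvPolynomial σ ℝ} {b : ι → ℝ} {d r : ℕ} {y : ι → ℝ} {t B : ℝ}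
    (hf₀ : f₀.IsHomogeneous d) (hf : ∀ i, (f i).IsHomogeneous d)
    (hfeas : (gmpFeasible (stdSimplex ℝ σ) (fun i x => eval x (f i)) b).Nonempty) (ht : 0 ≤ t)
    (hpos : ∀ x ∈ stdSimplex ℝ σ, 0 ≤ eval x f₀ - ∑ i, y i * eval x (f i) + t)
    (hopt : ∑ i, y i * b i - t =
      gmpDualValue (stdSimplex ℝ σ) (fun x => eval x f₀) (fun i x => eval x (f i)) b)
    (hB : ∀ α, coeff α (dualSlack d f₀ f y t) ≤ coeff α (B • (∑ j, X j : MvPolynomial σ ℝ) ^ d))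
    (hr : d.choose 2 < r) :
    0 ≤ gmpValue (stdSimplex ℝ σ) (fun x => eval x f₀) (fun i x => eval x (f i)) b -
        lpValue f₀ f b r ∧
      gmpValue (stdSimplex ℝ σ) (fun x => eval x f₀) (fun i x => eval x (f i)) b -
        lpValue f₀ f b r ≤ B * (d.choose 2 / (r - d.choose 2)) := by
  have hcont (p : MvPolynomial σ ℝ) : ContinuousOn (fun x => eval x p) (stdSimplex ℝ σ) :=
    (continuous_eval p).continuousOn
  have hval := hopt.trans (gmpValue_eq_gmpDualValue (isCompact_stdSimplex ℝ σ) (hcont f₀)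
    (fun i => hcont (f i)) hfeas).symm
  have hlower : ∀ v ∈ (fun L => L f₀) '' lpFeasible f b r,
      ∑ i, y i * b i - t - B * (d.choose 2 / (r - d.choose 2)) ≤ v := by
    rintro _ ⟨L, hL, rfl⟩
    exact dual_objective_sub_le_of_mem_lpFeasible hf₀ hf ht hpos hB hr hL
  have hfeas_lp : (lpFeasible f b r).Nonempty := by
    obtain ⟨ν, hν⟩ := hfeas
    obtain ⟨L, hL, -⟩ := exists_mem_lpFeasible_apply_eq_integral hν r
    exact ⟨L, hL⟩
  rw [sub_nonneg, sub_le_comm, ← hval]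
  refine ⟨hval ▸ le_csInf (hfeas.image _) ?_, le_csInf (hfeas_lp.image _) hlower⟩
  rintro _ ⟨ν, hν, rfl⟩
  obtain ⟨L, hL, hLν⟩ := exists_mem_lpFeasible_apply_eq_integral hν r
  exact csInf_le ⟨_, hlower⟩ ⟨L, hL, hLν f₀⟩

section Bcoef

variable {n d : ℕ}

lemma coeff_le_coeff_Bcoef_smul_sum_X_pow {f : MvPolynomial (Fin n) ℝ} (hf : f.IsHomogeneous d)
    (α : Fin n →₀ ℕ) :
    coeff α f ≤ coeff α (Bcoef d f • (∑ j, X j : MvPolynomial (Fin n) ℝ) ^ d) := by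
  rw [coeff_smul, smul_eq_mul]
  by_cases hα : α.degree = d
  · subst hα
    have hfin : ((fun β : Fin n →₀ ℕ => ((∏ i, (β i).factorial : ℕ) : ℝ) /
        (α.degree.factorial : ℝ) * coeff β f) '' {β | β.degree = α.degree}).Finite :=
      (Finsupp.finite_of_degree_eq _).image _
    have hle : ((∏ i, (α i).factorial : ℕ) : ℝ) / (α.degree.factorial : ℝ) * coeff α f ≤
        Bcoef α.degree f := by
      refine le_csSup (hfin.bddAbove.mono ?_) ⟨α, (Finsupp.degree_eq_sum α).symm, rfl⟩
      rintro _ ⟨β, hβ, rfl⟩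
      exact ⟨β, (Finsupp.degree_eq_sum β).trans hβ, rfl⟩
    have hprod : (0 : ℝ) < (∏ i, (α i).factorial : ℕ) :=
      Nat.cast_pos.2 (Finset.prod_pos fun i _ => Nat.factorial_pos _)
    rw [div_mul_eq_mul_div, div_le_iff₀ (Nat.cast_pos.2 (Nat.factorial_pos _)),
      ← prod_factorial_mul_multinomial, Nat.cast_mul, mul_left_comm] at hle
    rw [coeff_sum_X_pow_degree]
    exact le_of_mul_le_mul_left hle hprod
  · rw [hf.coeff_eq_zero hα, (isHomogeneous_sum_X_pow d).coeff_eq_zero hα, mul_zero]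

lemma coeff_dualSlack_le {m : ℕ} {f₀ : MvPolynomial (Fin n) ℝ} {f : Fin m → MvPolynomial (Fin n) ℝ}
    (hf₀ : f₀.IsHomogeneous d) (hf : ∀ i, (f i).IsHomogeneous d) (y : Fin m → ℝ) (t : ℝ)
    (α : Fin n →₀ ℕ) :
    coeff α (dualSlack d f₀ f y t) ≤ coeff α ((Bcoef d f₀ + (∑ i, Bcoef d ((-y i) • f i)) +
      Bcoef d (t • (∑ j : Fin n, X j) ^ d)) • (∑ j, X j : MvPolynomial (Fin n) ℝ) ^ d) := by
  have hsmul {p : MvPolynomial (Fin n) ℝ} (hp : p.IsHomogeneous d) (c : ℝ) :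
      (c • p).IsHomogeneous d := smul_eq_C_mul p c ▸ hp.C_mul c
  have hslack : dualSlack d f₀ f y t =
      f₀ + ∑ i, (-y i) • f i + t • (∑ j, X j) ^ d := by
    simp only [dualSlack, neg_smul, Finset.sum_neg_distrib, sub_eq_add_neg]
  simp only [hslack, add_smul, Finset.sum_smul, coeff_add, coeff_sum]
  gcongr with i
  · exact coeff_le_coeff_Bcoef_smul_sum_X_pow hf₀ α
  · exact coeff_le_coeff_Bcoef_smul_sum_X_pow (hsmul (hf i) _) α
  · exact coeff_le_coeff_Bcoef_smul_sum_X_pow (hsmul (isHomogeneous_sum_X_pow d) t) α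

end Bcoef

lemma mul_div_sub_choose_two_le {B t ρ : ℝ} {d : ℕ} (hB : 0 ≤ B) (ht : 0 ≤ t)
    (hρ : (d : ℝ) * (d - 1) / 2 + 1 < ρ) :
    B * (d.choose 2 / (ρ - d.choose 2)) ≤
      (B + t) * (d * (d - 1)) / (2 * (ρ - 1) - d * (d - 1)) := by
  have hchoose : (d.choose 2 : ℝ) = d * (d - 1) / 2 := Nat.cast_choose_two ℝ d
  have hnonneg : (0 : ℝ) ≤ d * (d - 1) := by
    linarith [(Nat.cast_nonneg (d.choose 2) : (0 : ℝ) ≤ d.choose 2)]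
  calc B * (d.choose 2 / (ρ - d.choose 2))
      = B * (d * (d - 1)) / (2 * ρ - d * (d - 1)) := by
        rw [hchoose, ← mul_div_mul_left _ (ρ - _) (two_ne_zero' ℝ), mul_div_assoc]
        ring_nf
    _ ≤ (B + t) * (d * (d - 1)) / (2 * (ρ - 1) - d * (d - 1)) := by
        gcongr <;> linarith

/-- **Theorem (O(1/r) convergence rate of the RLT/LP hierarchy over the simplex).**
If the GMP over the simplex (with homogeneous data of degree `d`) is feasible and admits
a dual optimal solution `(ȳ, t)`, then, putting `f_{m+1} = (x₁+⋯+xₙ)^d`, `ȳ_{m+1} = -t`,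
`y₀ = 1`, `yᵢ = -ȳᵢ`, for every level `r > d(d-1)/2 + 1` of the LP hierarchy,
`0 ≤ val - f_LP^(r) ≤ (∑_{i=0}^{m+1} B(yᵢ fᵢ) + t)·d(d-1) / (2(r-1) - d(d-1))`. -/
theorem lp_hierarchy_rate_simplex
    {n m d : ℕ} (hn : 0 < n)
    (f0 : MvPolynomial (Fin n) ℝ) (f : Fin m → MvPolynomial (Fin n) ℝ) (b : Fin m → ℝ)
    (hf0 : f0.IsHomogeneous d) (hf : ∀ i, (f i).IsHomogeneous d)
    (Δ : Set (Fin n → ℝ)) (hΔ : Δ = {x : Fin n → ℝ | (∀ i, 0 ≤ x i) ∧ ∑ i, x i = 1})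
    (Feas : Set (Measure (Fin n → ℝ)))
    (hFeas : Feas = {ν : Measure (Fin n → ℝ) | IsFiniteMeasure ν ∧ ν Δᶜ = 0 ∧
      (∀ i, ∫ x, eval x (f i) ∂ν = b i) ∧ ν Δ ≤ 1})
    (hfeas : Feas.Nonempty)
    (val : ℝ) (hval : val = sInf ((fun ν => ∫ x, eval x f0 ∂ν) '' Feas))
    (val' : ℝ)
    (hval' : val' = sSup {v : ℝ | ∃ (y : Fin m → ℝ) (s : ℝ), 0 ≤ s ∧
      (∀ x ∈ Δ, 0 ≤ eval x f0 - ∑ i, y i * eval x (f i) + s) ∧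
      v = ∑ i, y i * b i - s})
    (ybar : Fin m → ℝ) (t : ℝ) (ht : 0 ≤ t)
    (hdualfeas : ∀ x ∈ Δ, 0 ≤ eval x f0 - ∑ i, ybar i * eval x (f i) + t)
    (hdualopt : ∑ i, ybar i * b i - t = val')
    (fLP : ℕ → ℝ)
    (hfLP : ∀ r : ℕ, fLP r = sInf ((fun L => L f0) ''
      {L : MvPolynomial (Fin n) ℝ → ℝ |
        (∀ p q, L (p + q) = L p + L q) ∧ (∀ (c : ℝ) p, L (c • p) = c * L p) ∧
        (∀ i, L (f i) = b i) ∧ L 1 ≤ 1 ∧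
        (∀ α : Fin n →₀ ℕ, (∑ i, α i) ≤ r → 0 ≤ L (monomial α 1)) ∧
        (∀ α : Fin n →₀ ℕ, (∑ i, α i) + 1 ≤ r →
          L (monomial α 1) = L (monomial α 1 * ∑ i, X i))}))
    (r : ℕ) (hr : (r : ℝ) > (d : ℝ) * ((d : ℝ) - 1) / 2 + 1) :
    0 ≤ val - fLP r ∧
    val - fLP r ≤
      (Bcoef d f0 + (∑ i, Bcoef d ((-ybar i) • f i)) + Bcoef d (t • (∑ i : Fin n, X i) ^ d) + t) *
        ((d : ℝ) * ((d : ℝ) - 1)) / (2 * ((r : ℝ) - 1) - (d : ℝ) * ((d : ℝ) - 1)) := by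
  subst hΔ hFeas hval hval'
  have : Nonempty (Fin n) := ⟨⟨0, hn⟩⟩
  have hr' : d.choose 2 < r := by
    rw [← Nat.cast_lt (α := ℝ), Nat.cast_choose_two]
    linarith
  have hB := coeff_dualSlack_le hf0 hf ybar t
  have hB0 := nonneg_of_forall_coeff_le_smul_sum_X_pow
    (fun x hx => (hdualfeas x hx).trans_eq (eval_dualSlack hx).symm) hB
  have hrate := lp_hierarchy_rate_simplex_general hf0 hf hfeas ht hdualfeas hdualopt hB hr'
  rw [hfLP, ← lpValue_eq_sInf_setOf_functions]
  exact ⟨hrate.1, hrate.2.trans (mul_div_sub_choose_two_le hB0 ht hr)⟩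
end

section
/- Let K = { x ∈ ℝⁿ : g_1(x) ≥ 0, ..., g_m(x) ≥ 0 } be a compact basic closed semialgebraic set defined by polynomials g_1,...,g_m, let y = (y_α)_{α ∈ ℕⁿ} be a real sequence, and let L be the linear functional on the polynomial ring with L(x^α) = y_α. Then y has a representing positive finite Borel measure with support contained in K (i.e. y_α = ∫_K x^α dμ for all α) if and only if L(f²·g_J) ≥ 0 for every subset J ⊆ {1,...,m} and every polynomial f, where g_J = Π_{j ∈ J} g_j (with g_∅ = 1). -/
open MeasureTheory MvPolynomial

/-!
If `L` is nonnegative on the preordering `T` generated by the `g j`, then it is nonnegative on every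
polynomial that is nonnegative on `K`: by Schmüdgen's Positivstellensatz `T` contains every
polynomial that is positive on the compact set `K`, and `f + ε` is positive on `K` for all `ε > 0`.
Hence `L` extends to a positive functional on `C(K, ℝ)` (M. Riesz), which is integration against a
measure (Riesz–Markov–Kakutani).

Schmüdgen's theorem follows from the Krivine–Stengle Positivstellensatz by Wörmann's argument: a
certificate for the positivity of `r - ∑ xᵢ²` on `K` makes `T` archimedean, and then the certificate
`f * t = 1 + s` for the positivity of `f` can be cleared of its denominator.

If there is no Krivine–Stengle certificate, then some ordering of the polynomial ring contains `T`
and `-f`. The variables are then a point, over an ordered field, that satisfies the inequalities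
`g j ≥ 0` and `f ≤ 0`. After passing to an ordered extension in which polynomials have the
intermediate value property, the coordinates of this point can be replaced one at a time by real
numbers without changing the signs of any of a given finite set of polynomials. For a single
coordinate this is proved by induction on the degree, since the signs of a polynomial are governed
by its roots and the signs at a root of `f` depend only on remainders modulo `f`.
-/

universe u

open scoped Polynomial
open Set (Ioo)
open Polynomial (eval₂RingHom coe_eval₂RingHom)

/-! ### The intermediate value property for polynomials -/

/-- The intermediate value property for polynomials over an ordered field. It characterises the real
closed fields, and it is the only form in which real closedness enters. -/
def PolyIVP (K : Type*) [Field K] [LinearOrder K] : Prop :=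
  ∀ (f : K[X]) (a b : K), a < b → f.eval a * f.eval b < 0 → ∃ c ∈ Ioo a b, f.eval c = 0

theorem polyIVP_real : PolyIVP ℝ := by
  intro f a b hab hsign
  have hf : ContinuousOn (fun x => f.eval x) (Set.Icc a b) := f.continuous.continuousOn
  rcases mul_neg_iff.mp hsign with ⟨ha, hb⟩ | ⟨ha, hb⟩
  · exact intermediate_value_Ioo' hab.le hf ⟨hb, ha⟩
  · exact intermediate_value_Ioo hab.le hf ⟨ha, hb⟩

namespace PolyIVP

variable {K : Type*} [Field K] [LinearOrder K] [IsStrictOrderedRing K] {f : K[X]} {a b : K}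

theorem mul_eval_pos_of_forall_ne_zero (hK : PolyIVP K) (hf : ∀ c ∈ Ioo a b, f.eval c ≠ 0) {x y : K}
    (hx : x ∈ Ioo a b) (hy : y ∈ Ioo a b) : 0 < f.eval x * f.eval y := by
  wlog hxy : x ≤ y generalizing x y
  · rw [mul_comm]
    exact this hy hx (le_of_not_ge hxy)
  obtain rfl | hlt := hxy.eq_or_lt
  · exact mul_self_pos.mpr (hf x hx)
  refine lt_of_not_ge fun hle => ?_
  obtain ⟨c, hc, hroot⟩ := hK f x y hlt (hle.lt_of_ne (mul_ne_zero (hf x hx) (hf y hy)))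
  exact hf c ⟨hx.1.trans hc.1, hc.2.trans hy.2⟩ hroot

theorem eval_nonneg_left_of_forall_pos (hK : PolyIVP K) (hab : a < b)
    (hf : ∀ c ∈ Ioo a b, 0 < f.eval c) : 0 ≤ f.eval a := by
  obtain ⟨m, ham, hmb⟩ := exists_between hab
  refine le_of_not_gt fun hneg => ?_
  obtain ⟨c, hc, hroot⟩ := hK f a m ham (mul_neg_of_neg_of_pos hneg (hf m ⟨ham, hmb⟩))
  exact (hf c ⟨hc.1, hc.2.trans hmb⟩).ne' hroot

theorem eval_nonneg_right_of_forall_pos (hK : PolyIVP K) (hab : a < b)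
    (hf : ∀ c ∈ Ioo a b, 0 < f.eval c) : 0 ≤ f.eval b := by
  obtain ⟨m, ham, hmb⟩ := exists_between hab
  refine le_of_not_gt fun hneg => ?_
  obtain ⟨c, hc, hroot⟩ := hK f m b hmb (mul_neg_of_pos_of_neg (hf m ⟨ham, hmb⟩) hneg)
  exact (hf c ⟨ham.trans hc.1, hc.2⟩).ne' hroot

-- With `f = (X - a) ^ (m + 1) * (X - b) ^ (n + 1) * g`, the derivative is
-- `(X - a) ^ m * (X - b) ^ n * k`, where `k a` and `k b` have opposite signs.
theorem exists_derivative_eval_eq_zero_of_pow_mul (hK : PolyIVP K) (hab : a < b) {m n : ℕ}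
    {g : K[X]} (hg : 0 < g.eval a * g.eval b)
    (hf : f = (.X - .C a) ^ (m + 1) * ((.X - .C b) ^ (n + 1) * g)) :
    ∃ c ∈ Ioo a b, f.derivative.eval c = 0 := by
  let k : K[X] := .C (m + 1 : K) * (.X - .C b) * g + .C (n + 1 : K) * (.X - .C a) * g
    + (.X - .C a) * (.X - .C b) * g.derivative
  have hderiv : f.derivative = (.X - .C a) ^ m * (.X - .C b) ^ n * k := by
    simp only [hf, k, Polynomial.derivative_mul, Polynomial.derivative_X_sub_C_pow,
      Nat.add_sub_cancel, Nat.cast_add, Nat.cast_one, map_add, map_natCast, map_one]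
    ring
  have hk : k.eval a * k.eval b =
      -((m + 1) * (n + 1) * (b - a) ^ 2 * (g.eval a * g.eval b)) := by
    simp only [k, Polynomial.eval_add, Polynomial.eval_mul, Polynomial.eval_sub, Polynomial.eval_C,
      Polynomial.eval_X]
    ring
  have hneg : k.eval a * k.eval b < 0 := by
    have : 0 < b - a := sub_pos.mpr hab
    rw [hk, neg_lt_zero]
    positivity
  obtain ⟨c, hc, hroot⟩ := hK k a b hab hneg
  exact ⟨c, hc, by rw [hderiv, Polynomial.eval_mul, hroot, mul_zero]⟩

theorem exists_derivative_eval_eq_zero_of_forall_ne_zero (hK : PolyIVP K) (hab : a < b)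
    (ha : f.eval a = 0) (hb : f.eval b = 0) (hne : ∀ c ∈ Ioo a b, f.eval c ≠ 0) :
    ∃ c ∈ Ioo a b, f.derivative.eval c = 0 := by
  have hf0 : f ≠ 0 := by
    rintro rfl
    obtain ⟨c, hc⟩ := exists_between hab
    exact hne c hc Polynomial.eval_zero
  obtain ⟨g₁, hg₁, hg₁a⟩ := f.exists_eq_pow_rootMultiplicity_mul_and_not_dvd hf0 a
  rw [Polynomial.dvd_iff_isRoot] at hg₁a
  have hg₁0 : g₁ ≠ 0 := fun h => hg₁a (h ▸ Polynomial.eval_zero)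
  have hg₁b : g₁.IsRoot b := by
    rw [hg₁, Polynomial.eval_mul] at hb
    exact (mul_eq_zero.mp hb).resolve_left (by simp [sub_ne_zero.mpr hab.ne'])
  obtain ⟨g, hg, hgb⟩ := g₁.exists_eq_pow_rootMultiplicity_mul_and_not_dvd hg₁0 b
  rw [Polynomial.dvd_iff_isRoot] at hgb
  obtain ⟨m, hm⟩ := Nat.exists_eq_add_one.mpr ((Polynomial.rootMultiplicity_pos hf0).mpr ha)
  obtain ⟨n, hn⟩ := Nat.exists_eq_add_one.mpr ((Polynomial.rootMultiplicity_pos hg₁0).mpr hg₁b)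
  have hf : f = (.X - .C a) ^ (m + 1) * ((.X - .C b) ^ (n + 1) * g) := by
    rw [← hm, ← hn, ← hg, ← hg₁]
  have hga : g.eval a ≠ 0 := fun h => hg₁a (by rw [Polynomial.IsRoot, hg, Polynomial.eval_mul, h,
    mul_zero])
  refine hK.exists_derivative_eval_eq_zero_of_pow_mul hab (lt_of_not_ge fun hle => ?_) hf
  obtain ⟨c, hc, hroot⟩ := hK g a b hab (hle.lt_of_ne (mul_ne_zero hga hgb))
  exact hne c hc (by rw [hf, Polynomial.eval_mul, Polynomial.eval_mul, hroot, mul_zero, mul_zero])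

theorem exists_derivative_eval_eq_zero (hK : PolyIVP K) (hab : a < b) (ha : f.eval a = 0)
    (hb : f.eval b = 0) : ∃ c ∈ Ioo a b, f.derivative.eval c = 0 := by
  by_cases hf0 : f = 0
  · obtain ⟨c, hc⟩ := exists_between hab
    exact ⟨c, hc, by simp [hf0]⟩
  have hfin : {x | a < x ∧ f.eval x = 0}.Finite :=
    (f.finite_setOfPred_isRoot hf0).subset fun x hx => hx.2
  obtain ⟨r, ⟨har, hr⟩, hmin⟩ := hfin.exists_minimal ⟨b, hab, hb⟩
  have hfirst : ∀ c ∈ Ioo a r, f.eval c ≠ 0 := fun c hc hroot =>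
    (hmin ⟨hc.1, hroot⟩ hc.2.le).not_gt hc.2
  have hrb : r ≤ b := le_of_not_gt fun hbr => hfirst b ⟨hab, hbr⟩ hb
  obtain ⟨c, hc, hroot⟩ := hK.exists_derivative_eval_eq_zero_of_forall_ne_zero har ha hr hfirst
  exact ⟨c, ⟨hc.1, hc.2.trans_le hrb⟩, hroot⟩

theorem exists_eval_sub_eval_eq (hK : PolyIVP K) (f : K[X]) (hab : a < b) :
    ∃ c ∈ Ioo a b, f.eval b - f.eval a = f.derivative.eval c * (b - a) := by
  obtain ⟨c, hc, hroot⟩ := hK.exists_derivative_eval_eq_zero hab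
    (f := .C (b - a) * (f - .C (f.eval a)) - .C (f.eval b - f.eval a) * (.X - .C a))
    (by simp) (by simp; ring)
  refine ⟨c, hc, ?_⟩
  simp only [Polynomial.derivative_sub, Polynomial.derivative_C_mul, Polynomial.derivative_C,
    Polynomial.derivative_X, Polynomial.eval_sub, Polynomial.eval_mul, Polynomial.eval_C,
    Polynomial.eval_zero, Polynomial.eval_one] at hroot
  linear_combination -hroot

theorem eval_lt_eval_of_derivative_pos (hK : PolyIVP K) (hab : a < b)
    (hf : ∀ c ∈ Ioo a b, 0 < f.derivative.eval c) : f.eval a < f.eval b := by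
  obtain ⟨c, hc, heq⟩ := hK.exists_eval_sub_eval_eq f hab
  exact sub_pos.mp (heq ▸ mul_pos (hf c hc) (sub_pos.mpr hab))

theorem mul_eval_neg_of_derivative_ne_zero (hK : PolyIVP K) {x : K} (hx : x ∈ Ioo a b)
    (hroot : f.eval x = 0) (hf : ∀ c ∈ Ioo a b, f.derivative.eval c ≠ 0) :
    f.eval a * f.eval b < 0 := by
  obtain ⟨c, hc, hleft⟩ := hK.exists_eval_sub_eval_eq f hx.1
  obtain ⟨d, hd, hright⟩ := hK.exists_eval_sub_eval_eq f hx.2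
  have hcd := hK.mul_eval_pos_of_forall_ne_zero hf ⟨hc.1, hc.2.trans hx.2⟩ ⟨hx.1.trans hd.1, hd.2⟩
  have hxa := sub_pos.mpr hx.1
  have hbx := sub_pos.mpr hx.2
  have heq : f.eval a * f.eval b =
      -(f.derivative.eval c * f.derivative.eval d * ((x - a) * (b - x))) := by
    rw [hroot, zero_sub] at hleft
    rw [hroot, sub_zero] at hright
    linear_combination -f.eval b * hleft - f.derivative.eval c * (x - a) * hright
  rw [heq, neg_lt_zero]
  positivity

end PolyIVP

/-! ### Sign transfer -/

section Signs

variable {K L : Type*} [Ring K] [LinearOrder K] [Ring L] [LinearOrder L] {a : K} {b : L}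

theorem pos_iff_pos_of_sign_eq (h : SignType.sign a = SignType.sign b) : 0 < a ↔ 0 < b := by
  rw [← sign_eq_one_iff, h, sign_eq_one_iff]

theorem neg_iff_neg_of_sign_eq (h : SignType.sign a = SignType.sign b) : a < 0 ↔ b < 0 := by
  rw [← sign_eq_neg_one_iff, h, sign_eq_neg_one_iff]

theorem eq_zero_iff_eq_zero_of_sign_eq (h : SignType.sign a = SignType.sign b) :
    a = 0 ↔ b = 0 := by
  rw [← sign_eq_zero_iff, h, sign_eq_zero_iff]

end Signs

/-- Two homomorphisms from a ring to ordered rings give every element of `C` the same sign.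
Agreement of polynomials at a pair of points is the case of the two evaluation homomorphisms. -/
def SignsAgree {R N U : Type*} [CommRing R] [CommRing N] [LinearOrder N] [CommRing U]
    [LinearOrder U] (π₁ : R →+* N) (π₂ : R →+* U) (C : Set R) : Prop :=
  ∀ c ∈ C, SignType.sign (π₁ c) = SignType.sign (π₂ c)

theorem SignsAgree.mono {R N U : Type*} [CommRing R] [CommRing N] [LinearOrder N] [CommRing U]
    [LinearOrder U] {π₁ : R →+* N} {π₂ : R →+* U} {C D : Set R} (h : SignsAgree π₁ π₂ D)
    (hCD : C ⊆ D) : SignsAgree π₁ π₂ C :=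
  fun c hc => h c (hCD hc)

section FarPoints

open Filter

variable {K : Type*} [Field K] [LinearOrder K] [IsStrictOrderedRing K]

theorem tendsto_eval_atTop_of_leadingCoeff_pos {f : K[X]} (hdeg : 0 < f.degree)
    (hf : 0 < f.leadingCoeff) : Tendsto (fun x => f.eval x) atTop atTop := by
  revert hf
  refine Polynomial.degree_pos_induction_on f hdeg (fun _ hf => ?_) (fun _ ih hf => ?_)
    fun hp ih hf => ?_
  · rw [Polynomial.leadingCoeff_C_mul_X] at hf
    simpa using tendsto_id.const_mul_atTop hf
  · rw [Polynomial.leadingCoeff_mul_X] at hf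
    simpa using (ih hf).atTop_mul_atTop₀ tendsto_id
  · rw [Polynomial.leadingCoeff_add_of_degree_lt' (Polynomial.degree_C_le.trans_lt hp)] at hf
    simpa using tendsto_atTop_add_const_right _ _ (ih hf)

theorem eventually_eval_pos_of_leadingCoeff_pos {f : K[X]} (hf : 0 < f.leadingCoeff) :
    ∀ᶠ x in atTop, 0 < f.eval x := by
  obtain hdeg | hdeg := le_or_gt f.degree 0
  · rw [Polynomial.eq_C_of_degree_le_zero hdeg, Polynomial.leadingCoeff_C] at hf
    rw [Polynomial.eq_C_of_degree_le_zero hdeg]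
    exact .of_forall fun x => by rwa [Polynomial.eval_C]
  · exact (tendsto_eval_atTop_of_leadingCoeff_pos hdeg hf).eventually_gt_atTop 0

theorem eventually_sign_eval_eq_sign_leadingCoeff (f : K[X]) :
    ∀ᶠ x in atTop, SignType.sign (f.eval x) = SignType.sign f.leadingCoeff := by
  obtain hneg | hzero | hpos := lt_trichotomy f.leadingCoeff 0
  · have hf : 0 < (-f).leadingCoeff := by rwa [Polynomial.leadingCoeff_neg, neg_pos]
    filter_upwards [eventually_eval_pos_of_leadingCoeff_pos hf] with x hx
    rw [Polynomial.eval_neg, neg_pos] at hx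
    rw [sign_neg hx, sign_neg hneg]
  · rw [Polynomial.leadingCoeff_eq_zero] at hzero
    exact .of_forall fun x => by simp [hzero]
  · filter_upwards [eventually_eval_pos_of_leadingCoeff_pos hpos] with x hx
    rw [sign_pos hx, sign_pos hpos]

end FarPoints

section Intervals

variable {R N U : Type*} [CommRing R]
  [Field N] [LinearOrder N] [IsStrictOrderedRing N]
  [Field U] [LinearOrder U] [IsStrictOrderedRing U] {π₁ : R →+* N} {π₂ : R →+* U}

theorem SignsAgree.exists_gt_signsAgree_eval {H : Set R[X]} (hH : H.Finite)
    (h : SignsAgree π₁ π₂ (⋃ f ∈ H, f.coeffs)) (x : N) : ∃ q > x, ∃ q',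
      SignsAgree (eval₂RingHom π₁ q) (eval₂RingHom π₂ q') H := by
  have hcoeff : ∀ f ∈ H, ∀ i, SignType.sign (π₁ (f.coeff i)) = SignType.sign (π₂ (f.coeff i)) := by
    intro f hf i
    by_cases hi : f.coeff i = 0
    · simp [hi]
    · exact h _ (Set.mem_biUnion hf (Polynomial.coeff_mem_coeffs hi))
  have hlead : ∀ f ∈ H, SignType.sign (f.map π₁).leadingCoeff =
      SignType.sign (f.map π₂).leadingCoeff := by
    intro f hf
    have hsupp : (f.map π₁).support = (f.map π₂).support := by
      ext i
      simpa using (eq_zero_iff_eq_zero_of_sign_eq (hcoeff f hf i)).not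
    have hdeg : (f.map π₁).natDegree = (f.map π₂).natDegree := by
      rw [Polynomial.natDegree, Polynomial.degree, hsupp]
      rfl
    simp only [Polynomial.leadingCoeff, hdeg, Polynomial.coeff_map]
    exact hcoeff f hf _
  have hfar₁ := (Filter.eventually_all_finite hH).mpr fun f _ =>
    eventually_sign_eval_eq_sign_leadingCoeff (f.map π₁)
  have hfar₂ := (Filter.eventually_all_finite hH).mpr fun f _ =>
    eventually_sign_eval_eq_sign_leadingCoeff (f.map π₂)
  obtain ⟨q, hxq, hq⟩ := ((Filter.eventually_gt_atTop x).and hfar₁).exists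
  obtain ⟨q', hq'⟩ := hfar₂.exists
  refine ⟨q, hxq, q', fun f hf => ?_⟩
  rw [coe_eval₂RingHom, coe_eval₂RingHom, ← Polynomial.eval_map,
    ← Polynomial.eval_map, hq f hf, hq' f hf, hlead f hf]

theorem sign_eval_eq_of_derivative_pos (hN : PolyIVP N) (hU : PolyIVP U) {f : N[X]} {f' : U[X]}
    {p q x : N} {p' q' x' : U} (hx : x ∈ Ioo p q) (hx' : x' ∈ Ioo p' q')
    (hp : SignType.sign (f.eval p) = SignType.sign (f'.eval p'))
    (hq : SignType.sign (f.eval q) = SignType.sign (f'.eval q'))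
    (hf : ∀ c ∈ Ioo p q, f.eval c ≠ 0) (hf' : ∀ c ∈ Ioo p' q', 0 < f'.derivative.eval c) :
    SignType.sign (f.eval x) = SignType.sign (f'.eval x') := by
  have hpq := hx.1.trans hx.2
  obtain hneg | hzero | hpos := lt_trichotomy (f.eval x) 0
  · have hfq : f.eval q ≤ 0 := by
      have := hN.eval_nonneg_right_of_forall_pos (f := -f) hpq fun c hc => by
        simpa using neg_of_mul_pos_right (hN.mul_eval_pos_of_forall_ne_zero hf hx hc) hneg.le
      simpa using this
    have hf'q : f'.eval q' ≤ 0 := by rwa [← not_lt, ← pos_iff_pos_of_sign_eq hq, not_lt]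
    have hlt : f'.eval x' < f'.eval q' :=
      hU.eval_lt_eval_of_derivative_pos hx'.2 fun c hc => hf' c ⟨hx'.1.trans hc.1, hc.2⟩
    rw [sign_neg hneg, sign_neg (hlt.trans_le hf'q)]
  · exact absurd hzero (hf x hx)
  · have hfp : 0 ≤ f.eval p := hN.eval_nonneg_left_of_forall_pos hpq fun c hc =>
      (pos_iff_pos_of_mul_pos (hN.mul_eval_pos_of_forall_ne_zero hf hx hc)).mp hpos
    have hf'p : 0 ≤ f'.eval p' := by rwa [← not_lt, ← neg_iff_neg_of_sign_eq hp, not_lt]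
    have hlt : f'.eval p' < f'.eval x' :=
      hU.eval_lt_eval_of_derivative_pos hx'.1 fun c hc => hf' c ⟨hc.1, hc.2.trans hx'.2⟩
    rw [sign_pos hpos, sign_pos (hf'p.trans_lt hlt)]

theorem sign_eval_eq_of_sign_derivative_eq (hN : PolyIVP N) (hU : PolyIVP U) {f : N[X]} {f' : U[X]}
    {p q x : N} {p' q' x' : U} (hx : x ∈ Ioo p q) (hx' : x' ∈ Ioo p' q')
    (hp : SignType.sign (f.eval p) = SignType.sign (f'.eval p'))
    (hq : SignType.sign (f.eval q) = SignType.sign (f'.eval q'))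
    (hf : f ≠ 0 → ∀ c ∈ Ioo p q, f.eval c ≠ 0)
    (hderiv : ∀ c ∈ Ioo p q, ∀ c' ∈ Ioo p' q',
      SignType.sign (f.derivative.eval c) = SignType.sign (f'.derivative.eval c')) :
    SignType.sign (f.eval x) = SignType.sign (f'.eval x') := by
  have hne : f.derivative.eval x ≠ 0 → ∀ c ∈ Ioo p q, f.eval c ≠ 0 := fun h =>
    hf (by rintro rfl; simp at h)
  have hconst : ∀ c ∈ Ioo p q, SignType.sign (f.derivative.eval c) =
      SignType.sign (f.derivative.eval x) := fun c hc =>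
    (hderiv c hc x' hx').trans (hderiv x hx x' hx').symm
  obtain hneg | hzero | hpos := lt_trichotomy (f.derivative.eval x) 0
  · have := sign_eval_eq_of_derivative_pos hN hU (f := -f) (f' := -f') hx hx'
      (by simpa [Left.sign_neg] using hp) (by simpa [Left.sign_neg] using hq)
      (by simpa using hne hneg.ne)
      fun c hc => by simpa using (neg_iff_neg_of_sign_eq (hderiv x hx c hc)).mp hneg
    simpa [Left.sign_neg] using this
  · obtain ⟨c, hc, heq⟩ := hN.exists_eval_sub_eval_eq f hx.1
    obtain ⟨c', hc', heq'⟩ := hU.exists_eval_sub_eval_eq f' hx'.1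
    rw [(eq_zero_iff_eq_zero_of_sign_eq (hconst c ⟨hc.1, hc.2.trans hx.2⟩)).mpr hzero, zero_mul,
      sub_eq_zero] at heq
    rw [(eq_zero_iff_eq_zero_of_sign_eq (hderiv x hx c' ⟨hc'.1, hc'.2.trans hx'.2⟩)).mp hzero,
      zero_mul, sub_eq_zero] at heq'
    rw [heq, heq', hp]
  · exact sign_eval_eq_of_derivative_pos hN hU hx hx' hp hq (hne hpos.ne')
      fun c hc => (pos_iff_pos_of_sign_eq (hderiv x hx c hc)).mp hpos

-- Thom's lemma for two fields at once.
theorem SignsAgree.eval_of_mem_Ioo (hN : PolyIVP N) (hU : PolyIVP U) {G : Set R[X]}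
    (hG : ∀ g ∈ G, g.derivative ∈ G) {p q : N} {p' q' : U}
    (hp : SignsAgree (eval₂RingHom π₁ p) (eval₂RingHom π₂ p') G)
    (hq : SignsAgree (eval₂RingHom π₁ q) (eval₂RingHom π₂ q') G)
    (hroot : ∀ g ∈ G, g.map π₁ ≠ 0 → ∀ c ∈ Ioo p q, (g.map π₁).eval c ≠ 0)
    {x : N} {x' : U} (hx : x ∈ Ioo p q) (hx' : x' ∈ Ioo p' q') :
    SignsAgree (eval₂RingHom π₁ x) (eval₂RingHom π₂ x') G := by
  intro g hg
  simp only [SignsAgree, coe_eval₂RingHom, ← Polynomial.eval_map] at hp hq ⊢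
  induction hn : g.natDegree using Nat.strong_induction_on generalizing g x x' with
  | _ n ih =>
  obtain rfl | hpos := n.eq_zero_or_pos
  · rw [Polynomial.eq_C_of_natDegree_eq_zero hn] at hg ⊢
    simpa using hp _ hg
  · refine sign_eval_eq_of_sign_derivative_eq hN hU hx hx' (hp g hg) (hq g hg) (hroot g hg)
      fun c hc c' hc' => ?_
    rw [Polynomial.derivative_map, Polynomial.derivative_map]
    exact ih _ (hn ▸ Polynomial.natDegree_derivative_lt (hn ▸ hpos.ne')) hc hc' _ (hG g hg) rfl

end Intervals

section RootTransfer

/-- The statement that, for a polynomial `f` of degree at most `n` over any ring and a finite set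
`H` of polynomials, agreement of finitely many coefficient signs suffices to find, for each root of
`f` over `N`, a point of `U` at which all members of `H` have the same signs. -/
def RootTransfer (N U : Type*) [Field N] [LinearOrder N] [Field U] [LinearOrder U] (n : ℕ) : Prop :=
  ∀ (R : Type u) [CommRing R] (f : R[X]), f.natDegree ≤ n → ∀ H : Set R[X], H.Finite →
    ∃ C : Set R, C.Finite ∧ ∀ (π₁ : R →+* N) (π₂ : R →+* U), SignsAgree π₁ π₂ C →
      f.map π₁ ≠ 0 → ∀ θ, (f.map π₁).eval θ = 0 → ∃ θ',
        SignsAgree (eval₂RingHom π₁ θ) (eval₂RingHom π₂ θ') H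

theorem rootTransfer_zero {N U : Type*} [Field N] [LinearOrder N] [Field U] [LinearOrder U] :
    RootTransfer.{u} N U 0 := by
  intro R _ f hf H _
  refine ⟨∅, Set.finite_empty, fun π₁ π₂ _ hf0 θ hθ => absurd hθ ?_⟩
  rw [Polynomial.eq_C_of_natDegree_le_zero hf, Polynomial.map_C, ne_eq, Polynomial.C_eq_zero] at hf0
  rwa [Polynomial.eq_C_of_natDegree_le_zero hf, Polynomial.map_C, Polynomial.eval_C]

theorem map_map_C_eval₂RingHom {R S : Type*} [CommRing R] [CommRing S] (π : R →+* S) (s : S)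
    (f : R[X]) : (f.map Polynomial.C).map (eval₂RingHom π s) = f.map π := by
  rw [Polynomial.map_map]
  congr 1
  ext r
  simp

namespace RootTransfer

variable {R : Type u} [CommRing R] {n : ℕ}
  {N U : Type*} [Field N] [LinearOrder N] [IsStrictOrderedRing N]
  [Field U] [LinearOrder U] [IsStrictOrderedRing U]

-- The endpoint is the nearest root of `G`, or a point beyond which the leading coefficients decide.
theorem exists_right_endpoint (hT : RootTransfer.{u} N U n) {G H : Set R[X]} (hG : G.Finite)
    (hGn : ∀ g ∈ G, g.natDegree ≤ n) (hH : H.Finite) :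
    ∃ C : Set R, C.Finite ∧ ∀ (π₁ : R →+* N) (π₂ : R →+* U), SignsAgree π₁ π₂ C →
      ∀ x, ∃ q > x, ∃ q',
        SignsAgree (eval₂RingHom π₁ q) (eval₂RingHom π₂ q') H ∧
        ∀ g ∈ G, g.map π₁ ≠ 0 → ∀ c ∈ Ioo x q, (g.map π₁).eval c ≠ 0 := by
  choose! C hC htransfer using fun g (hg : g ∈ G) => hT R g (hGn g hg) H hH
  refine ⟨(⋃ f ∈ H, f.coeffs) ∪ ⋃ g ∈ G, C g, .union (hH.biUnion fun f _ => f.coeffs.finite_toSet)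
    (hG.biUnion hC), fun π₁ π₂ hagree x => ?_⟩
  have hfin : {c | x < c ∧ ∃ g ∈ G, g.map π₁ ≠ 0 ∧ (g.map π₁).eval c = 0}.Finite := by
    refine (hG.biUnion fun g _ => (g.map π₁).roots.toFinset.finite_toSet).subset ?_
    rintro c ⟨-, g, hg, hg0, hroot⟩
    exact Set.mem_biUnion hg (by simpa using ⟨hg0, hroot⟩)
  obtain hempty | hne := Set.eq_empty_or_nonempty
    {c | x < c ∧ ∃ g ∈ G, g.map π₁ ≠ 0 ∧ (g.map π₁).eval c = 0}
  · obtain ⟨q, hxq, q', hq⟩ :=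
      (hagree.mono Set.subset_union_left).exists_gt_signsAgree_eval hH x
    exact ⟨q, hxq, q', hq, fun g hg hg0 c hc hroot =>
      hempty.subset ⟨hc.1, g, hg, hg0, hroot⟩⟩
  · obtain ⟨q, ⟨hxq, g, hg, hg0, hroot⟩, hmin⟩ := hfin.exists_minimal hne
    obtain ⟨q', hq⟩ := htransfer g hg π₁ π₂
      (hagree.mono ((Set.subset_biUnion_of_mem hg).trans Set.subset_union_right)) hg0 q hroot
    exact ⟨q, hxq, q', hq, fun f hf hf0 c hc hc0 =>
      (hmin ⟨hc.1, f, hf, hf0, hc0⟩ hc.2.le).not_gt hc.2⟩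

theorem exists_left_endpoint (hT : RootTransfer.{u} N U n) {G H : Set R[X]} (hG : G.Finite)
    (hGn : ∀ g ∈ G, g.natDegree ≤ n) (hH : H.Finite) :
    ∃ C : Set R, C.Finite ∧ ∀ (π₁ : R →+* N) (π₂ : R →+* U), SignsAgree π₁ π₂ C →
      ∀ x, ∃ p < x, ∃ p',
        SignsAgree (eval₂RingHom π₁ p) (eval₂RingHom π₂ p') H ∧
        ∀ g ∈ G, g.map π₁ ≠ 0 → ∀ c ∈ Ioo p x, (g.map π₁).eval c ≠ 0 := by
  have hdeg : ∀ g ∈ (Polynomial.comp · (-.X)) '' G, g.natDegree ≤ n := by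
    rintro _ ⟨g, hg, rfl⟩
    refine Polynomial.natDegree_comp_le.trans (le_trans ?_ (hGn g hg))
    rw [Polynomial.natDegree_neg]
    exact mul_le_of_le_one_right' Polynomial.natDegree_X_le
  obtain ⟨C, hC, hright⟩ := hT.exists_right_endpoint (hG.image _) hdeg
    (hH.image (Polynomial.comp · (-.X)))
  refine ⟨C, hC, fun π₁ π₂ hagree x => ?_⟩
  obtain ⟨q, hxq, q', hq, hroot⟩ := hright π₁ π₂ hagree (-x)
  refine ⟨-q, neg_lt.mpr hxq, -q', fun h hh => ?_, fun g hg hg0 c hc => ?_⟩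
  · simpa [Polynomial.eval₂_comp] using hq _ ⟨h, hh, rfl⟩
  · have := hroot _ ⟨g, hg, rfl⟩ ?_ (-c) ⟨neg_lt_neg hc.2, neg_lt.mpr hc.1⟩
    · simpa [Polynomial.map_comp] using this
    · intro h0
      refine hg0 ?_
      simpa [Polynomial.map_comp, Polynomial.comp_assoc] using congrArg (Polynomial.comp · (-.X)) h0

-- The right endpoint is found with the left one adjoined to the coefficients, so that the order of
-- the endpoints is transferred as the sign of `X - C X`.
theorem exists_endpoints (hT : RootTransfer.{u} N U n) {G H : Set R[X]} (hG : G.Finite)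
    (hGn : ∀ g ∈ G, g.natDegree ≤ n) (hH : H.Finite) :
    ∃ C : Set R, C.Finite ∧ ∀ (π₁ : R →+* N) (π₂ : R →+* U), SignsAgree π₁ π₂ C →
      ∀ x, ∃ p q p' q', x ∈ Ioo p q ∧ p' < q' ∧
        SignsAgree (eval₂RingHom π₁ p) (eval₂RingHom π₂ p') H ∧
        SignsAgree (eval₂RingHom π₁ q) (eval₂RingHom π₂ q') H ∧
        ∀ g ∈ G, g.map π₁ ≠ 0 → ∀ c ∈ Ioo p q, c ≠ x → (g.map π₁).eval c ≠ 0 := by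
  have hdeg : ∀ g ∈ Polynomial.map Polynomial.C '' G, g.natDegree ≤ n := by
    rintro _ ⟨g, hg, rfl⟩
    exact Polynomial.natDegree_map_le.trans (hGn g hg)
  obtain ⟨D, hD, hright⟩ := hT.exists_right_endpoint (hG.image (Polynomial.map Polynomial.C)) hdeg
    ((hH.image (Polynomial.map Polynomial.C)).insert (.X - .C .X))
  obtain ⟨C, hC, hleft⟩ := hT.exists_left_endpoint hG hGn (hD.union hH)
  refine ⟨C, hC, fun π₁ π₂ hagree x => ?_⟩
  obtain ⟨p, hpx, p', hp, hp_root⟩ := hleft π₁ π₂ hagree x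
  obtain ⟨q, hxq, q', hq, hq_root⟩ := hright _ _ (hp.mono Set.subset_union_left) x
  refine ⟨p, q, p', q', ⟨hpx, hxq⟩, ?_, hp.mono Set.subset_union_right, fun h hh => ?_,
    fun g hg hg0 c hc hcx => ?_⟩
  · have hsign := hq _ (Set.mem_insert _ _)
    simp only [coe_eval₂RingHom, Polynomial.eval₂_sub, Polynomial.eval₂_X,
      Polynomial.eval₂_C] at hsign
    exact sub_pos.mp ((pos_iff_pos_of_sign_eq hsign).mp (sub_pos.mpr (hpx.trans hxq)))
  · have hsign := hq _ (Set.mem_insert_of_mem _ ⟨h, hh, rfl⟩)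
    simpa only [coe_eval₂RingHom, ← Polynomial.eval_map, map_map_C_eval₂RingHom] using hsign
  · obtain hlt | hgt := hcx.lt_or_gt
    · exact hp_root g hg hg0 c ⟨hc.1, hlt⟩
    · have := hq_root _ ⟨g, hg, rfl⟩
      rw [map_map_C_eval₂RingHom] at this
      exact this hg0 c ⟨hgt, hc.2⟩

end RootTransfer

end RootTransfer

section

variable {R : Type u} [CommRing R] {n : ℕ}
  {N U : Type*} [Field N] [LinearOrder N] [IsStrictOrderedRing N]
  [Field U] [LinearOrder U] [IsStrictOrderedRing U]

/-- The set of all iterated derivatives of the members of `H`. -/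
def iteratedDerivatives (H : Set R[X]) : Set R[X] :=
  ⋃ h ∈ H, Set.range fun k => Polynomial.derivative^[k] h

theorem subset_iteratedDerivatives (H : Set R[X]) : H ⊆ iteratedDerivatives H :=
  fun _ hh => Set.mem_biUnion hh ⟨0, rfl⟩

theorem derivative_mem_iteratedDerivatives {H : Set R[X]} {g : R[X]}
    (hg : g ∈ iteratedDerivatives H) : g.derivative ∈ iteratedDerivatives H := by
  obtain ⟨h, hh, k, rfl⟩ := Set.mem_iUnion₂.mp hg
  exact Set.mem_biUnion hh ⟨k + 1, Function.iterate_succ_apply' _ _ _⟩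

theorem natDegree_le_of_mem_iteratedDerivatives {H : Set R[X]} (hH : ∀ h ∈ H, h.natDegree ≤ n)
    {g : R[X]} (hg : g ∈ iteratedDerivatives H) : g.natDegree ≤ n := by
  obtain ⟨h, hh, k, rfl⟩ := Set.mem_iUnion₂.mp hg
  exact (Polynomial.natDegree_iterate_derivative h k).trans (Nat.sub_le_of_le_add (by grind))

theorem finite_iteratedDerivatives {H : Set R[X]} (hH : H.Finite) :
    (iteratedDerivatives H).Finite := by
  refine hH.biUnion fun h _ => ((Set.finite_Iic h.natDegree).image
    fun k => Polynomial.derivative^[k] h).insert 0 |>.subset ?_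
  rintro _ ⟨k, rfl⟩
  obtain hk | hk := le_or_gt k h.natDegree
  · exact .inr ⟨k, hk, rfl⟩
  · exact .inl (Polynomial.iterate_derivative_eq_zero hk)

theorem RootTransfer.exists_agreeing_point_or_interval (hN : PolyIVP N) (hU : PolyIVP U)
    (hT : RootTransfer.{u} N U n) {H : Set R[X]} (hH : H.Finite) (hHn : ∀ h ∈ H, h.natDegree ≤ n)
    (f : R[X]) : ∃ C : Set R, C.Finite ∧ ∀ (π₁ : R →+* N) (π₂ : R →+* U), SignsAgree π₁ π₂ C → ∀ x,
      (∃ x', SignsAgree (eval₂RingHom π₁ x) (eval₂RingHom π₂ x') (insert f H)) ∨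
      ∃ p q p' q', x ∈ Ioo p q ∧ p' < q' ∧
        SignsAgree (eval₂RingHom π₁ p) (eval₂RingHom π₂ p') {f} ∧
        SignsAgree (eval₂RingHom π₁ q) (eval₂RingHom π₂ q') {f} ∧
        (∀ h ∈ H, h.map π₁ ≠ 0 → ∀ c ∈ Ioo p q, (h.map π₁).eval c ≠ 0) ∧
        ∀ x' ∈ Ioo p' q', SignsAgree (eval₂RingHom π₁ x) (eval₂RingHom π₂ x') H := by
  have hG := finite_iteratedDerivatives hH
  have hGn : ∀ g ∈ iteratedDerivatives H, g.natDegree ≤ n := fun g =>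
    natDegree_le_of_mem_iteratedDerivatives hHn
  choose! C hC htransfer using fun g (hg : g ∈ iteratedDerivatives H) =>
    hT R g (hGn g hg) (insert f H) (hH.insert f)
  obtain ⟨D, hD, hendpoints⟩ := hT.exists_endpoints hG hGn (hG.insert f)
  refine ⟨D ∪ ⋃ g ∈ iteratedDerivatives H, C g, hD.union (hG.biUnion hC),
    fun π₁ π₂ hagree x => ?_⟩
  by_cases hx : ∃ g ∈ iteratedDerivatives H, g.map π₁ ≠ 0 ∧ (g.map π₁).eval x = 0
  · obtain ⟨g, hg, hg0, hroot⟩ := hx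
    exact .inl (htransfer g hg π₁ π₂
      (hagree.mono ((Set.subset_biUnion_of_mem hg).trans Set.subset_union_right)) hg0 x hroot)
  · obtain ⟨p, q, p', q', hxpq, hpq', hp, hq, hroot⟩ :=
      hendpoints π₁ π₂ (hagree.mono Set.subset_union_left) x
    have hnoroot : ∀ g ∈ iteratedDerivatives H, g.map π₁ ≠ 0 → ∀ c ∈ Ioo p q,
        (g.map π₁).eval c ≠ 0 := by
      intro g hg hg0 c hc
      obtain rfl | hcx := eq_or_ne c x
      · exact fun h => hx ⟨g, hg, hg0, h⟩
      · exact hroot g hg hg0 c hc hcx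
    refine .inr ⟨p, q, p', q', hxpq, hpq', hp.mono (by simp), hq.mono (by simp),
      fun h hh => hnoroot h (subset_iteratedDerivatives H hh), fun x' hx' => ?_⟩
    exact (SignsAgree.eval_of_mem_Ioo hN hU (fun g => derivative_mem_iteratedDerivatives)
      (hp.mono (Set.subset_insert _ _)) (hq.mono (Set.subset_insert _ _)) hnoroot hxpq hx').mono
      (subset_iteratedDerivatives H)

theorem exists_dvd_sq_coeff_pow_mul_sub {f : R[X]} (hf : f.natDegree ≤ n + 1) (h : R[X]) :
    ∃ (k : ℕ) (r : R[X]), r.natDegree ≤ n ∧ f ∣ .C ((f.coeff (n + 1) ^ 2) ^ k) * h - r := by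
  induction hm : h.natDegree using Nat.strong_induction_on generalizing h with
  | _ m ih =>
  obtain hmn | hnm := le_or_gt m n
  · exact ⟨0, h, hm.trans_le hmn, by simp⟩
  obtain ⟨d, rfl⟩ := Nat.exists_eq_add_of_lt hnm
  set a := f.coeff (n + 1)
  let h₁ : R[X] := .C (a ^ 2) * h - .C (a * h.coeff (n + d + 1)) * .X ^ d * f
  have hcoeff : h₁.coeff (n + d + 1) = 0 := by
    rw [Polynomial.coeff_sub, Polynomial.coeff_C_mul, mul_assoc, Polynomial.coeff_C_mul,
      Polynomial.coeff_X_pow_mul', if_pos (by lia), show n + d + 1 - d = n + 1 by lia]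
    ring
  have hdeg : h₁.natDegree ≤ n + d + 1 := by
    refine (Polynomial.natDegree_sub_le _ _).trans (max_le ?_ ?_)
    · exact (Polynomial.natDegree_C_mul_le _ _).trans hm.le
    · rw [mul_assoc]
      refine (Polynomial.natDegree_C_mul_le _ _).trans (Polynomial.natDegree_mul_le.trans ?_)
      have := Polynomial.natDegree_X_pow_le (R := R) d
      lia
  have hlt : h₁.natDegree < n + d + 1 :=
    Nat.lt_succ_of_le (Polynomial.natDegree_le_pred hdeg hcoeff)
  obtain ⟨k, r, hr, hdvd⟩ := ih _ hlt h₁ rfl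
  refine ⟨k + 1, r, hr, ?_⟩
  have : Polynomial.C ((a ^ 2) ^ (k + 1)) * h - r = (.C ((a ^ 2) ^ k) * h₁ - r) +
      .C ((a ^ 2) ^ k) * (.C (a * h.coeff (n + d + 1)) * .X ^ d) * f := by
    simp only [h₁, pow_succ, map_mul]
    ring
  exact this ▸ dvd_add hdvd (dvd_mul_left _ _)

theorem sign_eval₂_eq_of_dvd {S : Type*} [Field S] [LinearOrder S] [IsStrictOrderedRing S]
    {π : R →+* S} {θ : S} {f h r : R[X]} {a : R} {k : ℕ} (hθ : f.eval₂ π θ = 0) (ha : π a ≠ 0)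
    (hdvd : f ∣ .C ((a ^ 2) ^ k) * h - r) :
    SignType.sign (h.eval₂ π θ) = SignType.sign (r.eval₂ π θ) := by
  obtain ⟨q, hq⟩ := hdvd
  have heq : r.eval₂ π θ = (π a ^ 2) ^ k * h.eval₂ π θ := by
    have := congrArg (Polynomial.eval₂ π θ) hq
    rw [Polynomial.eval₂_sub, Polynomial.eval₂_mul, Polynomial.eval₂_mul, Polynomial.eval₂_C, hθ,
      zero_mul, sub_eq_zero, map_pow, map_pow] at this
    exact this.symm
  have hpos : 0 < (π a ^ 2) ^ k := by positivity
  rw [heq, sign_mul, sign_pos hpos, one_mul]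

-- On an interval around `θ` where `f'` has no zero, `f` changes sign, so the intermediate value
-- property of `U` yields a root of `f` there.
theorem RootTransfer.exists_agreeing_root (hN : PolyIVP N) (hU : PolyIVP U)
    (hT : RootTransfer.{u} N U n) {f : R[X]} (hf : f.natDegree ≤ n + 1) {H : Set R[X]}
    (hH : H.Finite) (hHn : ∀ h ∈ H, h.natDegree ≤ n) :
    ∃ C : Set R, C.Finite ∧ ∀ (π₁ : R →+* N) (π₂ : R →+* U), SignsAgree π₁ π₂ C →
      π₁ (f.coeff (n + 1)) ≠ 0 → ∀ θ, f.eval₂ π₁ θ = 0 → ∃ θ', f.eval₂ π₂ θ' = 0 ∧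
        SignsAgree (eval₂RingHom π₁ θ) (eval₂RingHom π₂ θ') H := by
  have hdeg : ∀ h ∈ insert f.derivative H, h.natDegree ≤ n := by
    rintro h (rfl | hh)
    · exact f.natDegree_derivative_le.trans (Nat.sub_le_of_le_add hf)
    · exact hHn h hh
  obtain ⟨C, hC, hcell⟩ :=
    hT.exists_agreeing_point_or_interval hN hU (hH.insert f.derivative) hdeg f
  refine ⟨C, hC, fun π₁ π₂ hagree ha θ hθ => ?_⟩
  obtain ⟨θ', hθ'⟩ | ⟨p, q, p', q', hθpq, hpq', hp, hq, hroot, hinterval⟩ := hcell π₁ π₂ hagree θ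
  · exact ⟨θ', (eq_zero_iff_eq_zero_of_sign_eq (hθ' f (by simp))).mp hθ,
      hθ'.mono fun h hh => .inr (.inr hh)⟩
  have hderiv : f.derivative.map π₁ ≠ 0 := by
    intro h0
    have hcoeff := congrArg (Polynomial.coeff · n) h0
    simp only [Polynomial.coeff_map, Polynomial.coeff_derivative, map_mul, map_add, map_natCast,
      map_one, Polynomial.coeff_zero, mul_eq_zero, ha, false_or] at hcoeff
    exact Nat.cast_add_one_ne_zero n hcoeff
  have hnoroot := hroot f.derivative (by simp) hderiv
  rw [← Polynomial.derivative_map] at hnoroot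
  rw [← Polynomial.eval_map] at hθ
  have hsign := hN.mul_eval_neg_of_derivative_ne_zero hθpq hθ hnoroot
  have hsign' : (f.map π₂).eval p' * (f.map π₂).eval q' < 0 := by
    have hp := hp f rfl
    have hq := hq f rfl
    rw [coe_eval₂RingHom, coe_eval₂RingHom, ← Polynomial.eval_map, ← Polynomial.eval_map] at hp hq
    refine (neg_iff_neg_of_sign_eq ?_).mp hsign
    rw [sign_mul, sign_mul, hp, hq]
  obtain ⟨θ', hθ', hroot'⟩ := hU (f.map π₂) p' q' hpq' hsign'
  exact ⟨θ', by rwa [← Polynomial.eval_map],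
    (hinterval θ' hθ').mono (Set.subset_insert _ _)⟩

theorem RootTransfer.succ (hN : PolyIVP N) (hU : PolyIVP U) (hT : RootTransfer.{u} N U n) :
    RootTransfer.{u} N U (n + 1) := by
  intro R _ f hf H hH
  choose k r hr hdvd using exists_dvd_sq_coeff_pow_mul_sub hf
  have hdeg : (f.erase (n + 1)).natDegree ≤ n := by
    refine Polynomial.natDegree_le_iff_coeff_eq_zero.mpr fun i hi => ?_
    rw [Polynomial.coeff_erase]
    split_ifs with hin
    · rfl
    · exact Polynomial.coeff_eq_zero_of_natDegree_lt (by lia)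
  obtain ⟨C, hC, hsmall⟩ := hT R (f.erase (n + 1)) hdeg H hH
  obtain ⟨D, hD, hlarge⟩ := hT.exists_agreeing_root hN hU hf (hH.image r)
    (by rintro _ ⟨h, -, rfl⟩; exact hr h)
  refine ⟨insert (f.coeff (n + 1)) (C ∪ D), (hC.union hD).insert _,
    fun π₁ π₂ hagree hf0 θ hθ => ?_⟩
  by_cases ha : π₁ (f.coeff (n + 1)) = 0
  · have herase : (f.erase (n + 1)).map π₁ = f.map π₁ := by
      conv_rhs => rw [← Polynomial.monomial_add_erase f (n + 1)]
      simp [ha]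
    exact hsmall π₁ π₂ (hagree.mono (by grind)) (herase ▸ hf0) θ (herase ▸ hθ)
  · have ha' : π₂ (f.coeff (n + 1)) ≠ 0 :=
      (eq_zero_iff_eq_zero_of_sign_eq (hagree _ (Set.mem_insert _ _))).not.mp ha
    rw [Polynomial.eval_map] at hθ
    obtain ⟨θ', hθ', hrem⟩ := hlarge π₁ π₂ (hagree.mono (by grind)) ha θ hθ
    refine ⟨θ', fun h hh => ?_⟩
    rw [coe_eval₂RingHom, coe_eval₂RingHom, sign_eval₂_eq_of_dvd hθ ha (hdvd h),
      sign_eval₂_eq_of_dvd hθ' ha' (hdvd h)]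
    exact hrem _ ⟨h, hh, rfl⟩

theorem rootTransfer (hN : PolyIVP N) (hU : PolyIVP U) (n : ℕ) : RootTransfer.{u} N U n := by
  induction n with
  | zero => exact rootTransfer_zero
  | succ n ih => exact ih.succ hN hU

theorem exists_finite_signsAgree_eval (hN : PolyIVP N) (hU : PolyIVP U) {H : Set R[X]}
    (hH : H.Finite) : ∃ C : Set R, C.Finite ∧ ∀ (π₁ : R →+* N) (π₂ : R →+* U),
      SignsAgree π₁ π₂ C → ∀ x, ∃ x', SignsAgree (eval₂RingHom π₁ x) (eval₂RingHom π₂ x') H := by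
  obtain ⟨n, hn⟩ := (hH.image Polynomial.natDegree).bddAbove
  obtain ⟨C, hC, hcell⟩ := (rootTransfer hN hU n).exists_agreeing_point_or_interval hN hU hH
    (fun h hh => hn ⟨h, hh, rfl⟩) 0
  refine ⟨C, hC, fun π₁ π₂ hagree x => ?_⟩
  obtain ⟨x', hx'⟩ | ⟨-, -, p', q', -, hpq', -, -, -, hinterval⟩ := hcell π₁ π₂ hagree x
  · exact ⟨x', hx'.mono (Set.subset_insert _ _)⟩
  · obtain ⟨x', hx'⟩ := exists_between hpq'
    exact ⟨x', hinterval x' hx'⟩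

theorem eval₂_finSuccEquiv {S : Type*} [CommRing S] (π : R →+* S) {d : ℕ} (b : Fin (d + 1) → S)
    (h : MvPolynomial (Fin (d + 1)) R) :
    (finSuccEquiv R d h).eval₂ (eval₂Hom π (Fin.tail b)) (b 0) = eval₂ π b h := by
  induction h using MvPolynomial.induction_on with
  | C r => simp [finSuccEquiv_apply]
  | add p q hp hq => simp [Polynomial.eval₂_add, hp, hq]
  | mul_X p i hp =>
    cases i using Fin.cases <;>
      simp [Polynomial.eval₂_mul, hp, finSuccEquiv_X_zero, finSuccEquiv_X_succ, Fin.tail]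

theorem exists_finite_signsAgree_eval₂Hom (hN : PolyIVP N) (hU : PolyIVP U) {d : ℕ}
    {H : Set (MvPolynomial (Fin d) R)} (hH : H.Finite) :
    ∃ C : Set R, C.Finite ∧ ∀ (π₁ : R →+* N) (π₂ : R →+* U), SignsAgree π₁ π₂ C →
      ∀ b : Fin d → N, ∃ b' : Fin d → U, SignsAgree (eval₂Hom π₁ b) (eval₂Hom π₂ b') H := by
  induction d with
  | zero =>
    refine ⟨C ⁻¹' H, hH.preimage (C_injective _ _).injOn, fun π₁ π₂ hagree b =>
      ⟨Fin.elim0, fun h hh => ?_⟩⟩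
    obtain ⟨r, rfl⟩ := C_surjective (Fin 0) h
    simpa using hagree r hh
  | succ d ih =>
    obtain ⟨D, hD, hlast⟩ := exists_finite_signsAgree_eval hN hU (hH.image (finSuccEquiv R d))
    obtain ⟨C, hC, hinit⟩ := ih hD
    refine ⟨C, hC, fun π₁ π₂ hagree b => ?_⟩
    obtain ⟨b', hb'⟩ := hinit π₁ π₂ hagree (Fin.tail b)
    obtain ⟨x', hx'⟩ := hlast _ _ hb' (b 0)
    refine ⟨Fin.cons x' b', fun h hh => ?_⟩
    rw [coe_eval₂Hom, coe_eval₂Hom, ← eval₂_finSuccEquiv, ← eval₂_finSuccEquiv, Fin.tail_cons,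
      Fin.cons_zero]
    exact hx' _ ⟨h, hh, rfl⟩

end

theorem exists_real_sign_eval_eq {N : Type*} [Field N] [LinearOrder N] [IsStrictOrderedRing N]
    (hN : PolyIVP N) (ι : ℝ →+* N) {d : ℕ} {H : Set (MvPolynomial (Fin d) ℝ)} (hH : H.Finite)
    (b : Fin d → N) :
    ∃ x : Fin d → ℝ, ∀ h ∈ H, SignType.sign (eval₂ ι b h) = SignType.sign (eval x h) := by
  obtain ⟨C, -, htransfer⟩ := exists_finite_signsAgree_eval₂Hom hN polyIVP_real hH
  have hι : StrictMono ι := (ringHom_monotone (fun r hr => ⟨√r, (Real.mul_self_sqrt hr).symm⟩)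
    ι).strictMono_of_injective ι.injective
  exact htransfer ι (.id ℝ) (fun c _ => hι.sign_comp c) b

/-! ### Orderings of rings -/

section

variable {A : Type*} [CommRing A]

/-- The preordering `T + aT` obtained by adjoining `a` to a preordering `T`. Properness, that is
`-1 ∉ T`, is not part of the data, so the type is `Subsemiring` and not `RingPreordering`. -/
def adjoinToPreordering (T : Subsemiring A) (hsq : ∀ x, x ^ 2 ∈ T) (a : A) : Subsemiring A where
  carrier := {x | ∃ s ∈ T, ∃ t ∈ T, x = s + a * t}
  zero_mem' := ⟨0, T.zero_mem, 0, T.zero_mem, by ring⟩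
  one_mem' := ⟨1, T.one_mem, 0, T.zero_mem, by ring⟩
  add_mem' := by
    rintro _ _ ⟨s, hs, t, ht, rfl⟩ ⟨s', hs', t', ht', rfl⟩
    exact ⟨s + s', add_mem hs hs', t + t', add_mem ht ht', by ring⟩
  mul_mem' := by
    rintro _ _ ⟨s, hs, t, ht, rfl⟩ ⟨s', hs', t', ht', rfl⟩
    exact ⟨s * s' + a ^ 2 * (t * t'), add_mem (mul_mem hs hs') (mul_mem (hsq a) (mul_mem ht ht')),
      s * t' + t * s', add_mem (mul_mem hs ht') (mul_mem ht hs'), by ring⟩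

theorem le_adjoinToPreordering (T : Subsemiring A) (hsq : ∀ x, x ^ 2 ∈ T) (a : A) :
    T ≤ adjoinToPreordering T hsq a :=
  fun s hs => ⟨s, hs, 0, T.zero_mem, by ring⟩

theorem self_mem_adjoinToPreordering (T : Subsemiring A) (hsq : ∀ x, x ^ 2 ∈ T) (a : A) :
    a ∈ adjoinToPreordering T hsq a :=
  ⟨0, T.zero_mem, 1, T.one_mem, by ring⟩

theorem mem_or_mem_of_maximal_neg_one_notMem {P : Subsemiring A} (hsq : ∀ x, x ^ 2 ∈ P)
    (hP : Maximal (fun T : Subsemiring A => -1 ∉ T) P) {a b : A} (hab : -(a * b) ∈ P) :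
    a ∈ P ∨ b ∈ P := by
  have neg_one_eq_of_notMem {c : A} (hc : c ∉ P) : ∃ s ∈ P, ∃ t ∈ P, -1 = s + c * t := by
    by_contra hproper
    exact hc (hP.le_of_ge (y := adjoinToPreordering P hsq c) hproper
      (le_adjoinToPreordering P hsq c) (self_mem_adjoinToPreordering P hsq c))
  by_contra! hnot
  obtain ⟨s, hs, t, ht, hst⟩ := neg_one_eq_of_notMem hnot.1
  obtain ⟨s', hs', t', ht', hst'⟩ := neg_one_eq_of_notMem hnot.2
  -- Multiply `-a * t = 1 + s` by `-b * t' = 1 + s'`.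
  have hcert : -1 = s + s' + s * s' + -(a * b) * (t * t') := by
    linear_combination hst * (-b * t') + (1 + s) * hst'
  refine hP.prop ?_
  rw [hcert]
  exact add_mem (add_mem (add_mem hs hs') (mul_mem hs hs')) (mul_mem hab (mul_mem ht ht'))

theorem exists_isOrdering_ge {T : Subsemiring A} (hsq : ∀ x, x ^ 2 ∈ T) (hT : -1 ∉ T) :
    ∃ P : RingPreordering A, P.IsOrdering ∧ T ≤ P.toSubsemiring := by
  obtain ⟨P, hTP, hP⟩ := zorn_le_nonempty₀ {P : Subsemiring A | -1 ∉ P} (by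
    intro c hc hchain Q hQ
    refine ⟨sSup c, ?_, fun R hR => le_sSup hR⟩
    rw [Set.mem_ofPred_eq, Subsemiring.mem_sSup_of_directedOn ⟨Q, hQ⟩ hchain.directedOn]
    rintro ⟨R, hR, hmem⟩
    exact hc hR hmem) T hT
  have hsqP : ∀ x, x ^ 2 ∈ P := fun x => hTP (hsq x)
  refine ⟨RingPreordering.mk' (P : Set A) add_mem mul_mem (fun x => sq x ▸ hsqP x) hP.prop, ?_, hTP⟩
  exact RingPreordering.isOrdering_iff.mpr fun a b =>
    mem_or_mem_of_maximal_neg_one_notMem hsqP hP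

theorem exists_linearOrder_nonneg_iff {K : Type*} [Field K] (P : RingPreordering K)
    [HasMemOrNegMem P] :
    ∃ _ : LinearOrder K, IsStrictOrderedRing K ∧ ∀ x : K, 0 ≤ x ↔ x ∈ P := by
  classical
  let cone : RingCone K :=
    { P.toSubsemiring with eq_zero_of_mem_of_neg_mem' := P.eq_zero_of_mem_of_neg_mem }
  have : HasMemOrNegMem cone := ⟨fun x => mem_or_neg_mem P x⟩
  let order : LinearOrder K := .mkOfAddGroupCone cone
  have : IsOrderedRing K := .mkOfCone cone
  refine ⟨order, IsOrderedRing.toIsStrictOrderedRing K, fun x => ?_⟩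
  change x - 0 ∈ P ↔ x ∈ P
  rw [sub_zero]

/-- The preordering of fractions with numerator in `P` and square denominator, on a field that
consists of the fractions of the quotient of the ring by the support of `P`. -/
def fractionPreordering {K : Type*} [Field K] (P : RingPreordering A) [P.HasIdealSupport]
    (φ : A →+* K) (hker : RingHom.ker φ = P.support)
    (hfrac : ∀ x, ∃ a b, φ b ≠ 0 ∧ x * φ b = φ a) : RingPreordering K :=
  RingPreordering.mk' {x | ∃ a ∈ P, ∃ b, φ b ≠ 0 ∧ x * φ b ^ 2 = φ a}
    (by
      rintro x y ⟨a, ha, b, hb, hx⟩ ⟨c, hc, d, hd, hy⟩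
      refine ⟨a * d ^ 2 + c * b ^ 2, add_mem (mul_mem ha (P.pow_two_mem d))
        (mul_mem hc (P.pow_two_mem b)), b * d, by simp [hb, hd], ?_⟩
      simp only [map_mul, map_add, map_pow, ← hx, ← hy]
      ring)
    (by
      rintro x y ⟨a, ha, b, hb, hx⟩ ⟨c, hc, d, hd, hy⟩
      refine ⟨a * c, mul_mem ha hc, b * d, by simp [hb, hd], ?_⟩
      simp only [map_mul, ← hx, ← hy]
      ring)
    (by
      intro x
      obtain ⟨a, b, hb, hx⟩ := hfrac x
      refine ⟨a ^ 2, P.pow_two_mem a, b, hb, ?_⟩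
      rw [map_pow, ← hx]
      ring)
    (by
      rintro ⟨a, ha, b, hb, hab⟩
      have hsum : a + b ^ 2 ∈ P.support := by
        rw [← hker, RingHom.mem_ker, map_add, map_pow, ← hab]
        ring
      have hneg : -b ^ 2 ∈ P := by simpa using add_mem hsum.2 ha
      have hb2 : b ^ 2 ∈ RingHom.ker φ := hker ▸ ⟨P.pow_two_mem b, hneg⟩
      exact hb (by simpa using hb2))

theorem mem_or_neg_mem_fractionPreordering {K : Type*} [Field K] (P : RingPreordering A)
    [HasMemOrNegMem P] (φ : A →+* K) (hker : RingHom.ker φ = P.support)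
    (hfrac : ∀ x, ∃ a b, φ b ≠ 0 ∧ x * φ b = φ a) (x : K) :
    x ∈ fractionPreordering P φ hker hfrac ∨ -x ∈ fractionPreordering P φ hker hfrac := by
  obtain ⟨a, b, hb, hx⟩ := hfrac x
  have hab : φ (a * b) = x * φ b ^ 2 := by
    rw [map_mul, ← hx]
    ring
  rcases mem_or_neg_mem P (a * b) with h | h
  · exact Or.inl ⟨a * b, h, b, hb, hab.symm⟩
  · exact Or.inr ⟨-(a * b), h, b, hb, by rw [map_neg, hab, neg_mul]⟩

theorem exists_div_eq_fractionRing_quotient (I : Ideal A) [I.IsPrime] (x : FractionRing (A ⧸ I)) :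
    ∃ a b, algebraMap A (FractionRing (A ⧸ I)) b ≠ 0 ∧
      x * algebraMap A (FractionRing (A ⧸ I)) b = algebraMap A (FractionRing (A ⧸ I)) a := by
  obtain ⟨a, b, hb, rfl⟩ := IsFractionRing.div_surjective (A ⧸ I) x
  obtain ⟨a, rfl⟩ := Ideal.Quotient.mk_surjective a
  obtain ⟨b, rfl⟩ := Ideal.Quotient.mk_surjective b
  have hb0 := IsFractionRing.to_map_ne_zero_of_mem_nonZeroDivisors (K := FractionRing (A ⧸ I)) hb
  exact ⟨a, b, hb0, div_mul_cancel₀ _ hb0⟩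

end

theorem exists_orderedField_hom_nonneg {A : Type u} [CommRing A] {T : Subsemiring A}
    (hsq : ∀ x, x ^ 2 ∈ T) (hT : -1 ∉ T) :
    ∃ (F : Type u) (_ : Field F) (_ : LinearOrder F) (_ : IsStrictOrderedRing F) (φ : A →+* F),
      ∀ t ∈ T, 0 ≤ φ t := by
  obtain ⟨P, hP, hTP⟩ := exists_isOrdering_ge hsq hT
  let K := FractionRing (A ⧸ P.support)
  have hker : RingHom.ker (algebraMap A K) = P.support := by
    rw [IsScalarTower.algebraMap_eq A (A ⧸ P.support) K, RingHom.ker_comp_of_injective _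
      (IsFractionRing.injective _ K)]
    exact Ideal.mk_ker
  let Q := fractionPreordering P (algebraMap A K) hker (exists_div_eq_fractionRing_quotient _)
  have : HasMemOrNegMem Q := ⟨mem_or_neg_mem_fractionPreordering P _ _ _⟩
  obtain ⟨order, hord, hnonneg⟩ := exists_linearOrder_nonneg_iff Q
  refine ⟨K, inferInstance, order, hord, algebraMap A K, fun t ht => (hnonneg _).mpr ?_⟩
  exact ⟨t, hTP ht, 1, by simp, by simp⟩

/-! ### Ordered extensions -/

section

variable {A : Type*} [CommRing A] {M : Submonoid A}

/-- The sums of squares with weights in `M`, that is the sums of products `h ^ 2 * w` with `w ∈ M`.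
They form the smallest preordering containing `M`. -/
def weightedSumSq (M : Submonoid A) : Subsemiring A :=
  (Submonoid.square A ⊔ M).subsemiringClosure

theorem sq_mul_mem_weightedSumSq (h : A) {w : A} (hw : w ∈ M) : h ^ 2 * w ∈ weightedSumSq M :=
  AddSubmonoid.subset_closure (Submonoid.mul_mem_sup (.sq h) hw)

theorem sq_mem_weightedSumSq (h : A) : h ^ 2 ∈ weightedSumSq M := by
  simpa using sq_mul_mem_weightedSumSq h M.one_mem

theorem mem_weightedSumSq_of_mem {w : A} (hw : w ∈ M) : w ∈ weightedSumSq M := by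
  simpa using sq_mul_mem_weightedSumSq 1 hw

@[elab_as_elim]
theorem weightedSumSq_induction {motive : (x : A) → x ∈ weightedSumSq M → Prop}
    (sq_mul : ∀ (h w : A) (hw : w ∈ M), motive (h ^ 2 * w) (sq_mul_mem_weightedSumSq h hw))
    (zero : motive 0 (zero_mem _))
    (add : ∀ x y hx hy, motive x hx → motive y hy → motive (x + y) (add_mem hx hy))
    {x : A} (hx : x ∈ weightedSumSq M) : motive x hx := by
  refine AddSubmonoid.closure_induction (fun x hx => ?_) zero (fun x y hx hy => add x y hx hy) hx
  obtain ⟨_, ⟨h, rfl⟩, w, hw, rfl⟩ := Submonoid.mem_sup.mp hx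
  simpa only [sq] using sq_mul h w hw

end

section

variable {S : Type*} [Field S] [LinearOrder S] [IsStrictOrderedRing S] {f : S[X]} {a b : S}

/-- The nonnegative constant polynomials. -/
noncomputable def nonnegConstants (S : Type*) [Field S] [LinearOrder S] [IsStrictOrderedRing S] :
    Submonoid S[X] :=
  (Subsemiring.nonneg S).toSubmonoid.map Polynomial.C

theorem eval_nonneg_of_mem_weightedSumSq {s : S[X]} (hs : s ∈ weightedSumSq (nonnegConstants S))
    (x : S) : 0 ≤ s.eval x := by
  induction hs using weightedSumSq_induction with
  | sq_mul h w hw =>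
    obtain ⟨p, hp, rfl⟩ := hw
    rw [Polynomial.eval_mul, Polynomial.eval_pow, Polynomial.eval_C]
    exact mul_nonneg (sq_nonneg _) hp
  | zero => rw [Polynomial.eval_zero]
  | add s t _ _ ihs iht =>
    rw [Polynomial.eval_add]
    exact add_nonneg ihs iht

theorem exists_weightedSumSq_natDegree_le_dvd_sub (hf : f.natDegree ≠ 0) {s : S[X]}
    (hs : s ∈ weightedSumSq (nonnegConstants S)) :
    ∃ t ∈ weightedSumSq (nonnegConstants S), f ∣ s - t ∧ t.natDegree ≤ 2 * (f.natDegree - 1) := by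
  induction hs using weightedSumSq_induction with
  | sq_mul h w hw =>
    obtain ⟨p, hp, rfl⟩ := hw
    refine ⟨(h % f) ^ 2 * .C p, sq_mul_mem_weightedSumSq _ ⟨p, hp, rfl⟩, ?_, ?_⟩
    · have hmod : f ∣ h - h % f :=
        ⟨h / f, by rw [EuclideanDomain.mod_eq_sub_mul_div, sub_sub_cancel]⟩
      rw [← sub_mul, sq_sub_sq]
      exact (hmod.mul_left _).mul_right _
    · have hmod : (h % f).natDegree ≤ f.natDegree - 1 :=
        Nat.le_sub_one_of_lt (Polynomial.natDegree_mod_lt h hf)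
      exact (Polynomial.natDegree_mul_C_le _ _).trans (Polynomial.natDegree_pow_le_of_le 2 hmod)
  | zero => exact ⟨0, zero_mem _, by simp, by simp⟩
  | add s s' _ _ ihs ihs' =>
    obtain ⟨t, ht, hdvd, hdeg⟩ := ihs
    obtain ⟨t', ht', hdvd', hdeg'⟩ := ihs'
    refine ⟨t + t', add_mem ht ht', ?_, Polynomial.natDegree_add_le_of_degree_le hdeg hdeg'⟩
    rw [add_sub_add_comm]
    exact dvd_add hdvd hdvd'

theorem natDegree_ne_zero_of_mul_eval_neg (hsign : f.eval a * f.eval b < 0) : f.natDegree ≠ 0 := by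
  intro hdeg
  rw [Polynomial.eq_C_of_natDegree_eq_zero hdeg, Polynomial.eval_C, Polynomial.eval_C] at hsign
  exact hsign.not_ge (mul_self_nonneg _)

-- Reducing `s` modulo `f` gives `f * q = 1 + t`, with `q` of smaller degree than `f` and with the
-- same signs as `f`: an infinite descent.
theorem not_dvd_one_add_of_mul_eval_neg (hsign : f.eval a * f.eval b < 0) {s : S[X]}
    (hs : s ∈ weightedSumSq (nonnegConstants S)) : ¬f ∣ 1 + s := by
  induction hn : f.natDegree using Nat.strong_induction_on generalizing f s with | _ n ih
  subst hn
  intro hdvd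
  have hf := natDegree_ne_zero_of_mul_eval_neg hsign
  obtain ⟨t, ht, hst, hdeg⟩ := exists_weightedSumSq_natDegree_le_dvd_sub hf hs
  obtain ⟨q, hq⟩ : f ∣ 1 + t := by
    convert dvd_sub hdvd hst using 1
    ring
  have hpos (x : S) : 0 < f.eval x * q.eval x := by
    rw [← Polynomial.eval_mul, ← hq, Polynomial.eval_add, Polynomial.eval_one]
    linarith [eval_nonneg_of_mem_weightedSumSq ht x]
  have hq0 : q ≠ 0 := by
    rintro rfl
    simpa using hpos a
  have hlt : q.natDegree < f.natDegree := by
    have hmul := Polynomial.natDegree_mul (Polynomial.ne_zero_of_natDegree_gt hf.bot_lt) hq0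
    have hadd := Polynomial.natDegree_add_le_of_degree_le (Polynomial.natDegree_one.trans_le
      (Nat.zero_le _)) hdeg
    rw [hq, hmul] at hadd
    omega
  have hqsign : q.eval a * q.eval b < 0 := by
    refine neg_of_mul_pos_right (a := f.eval a * f.eval b) ?_ hsign.le
    rw [mul_mul_mul_comm]
    exact mul_pos (hpos a) (hpos b)
  exact ih _ hlt hqsign ht rfl ⟨f, by rw [hq, mul_comm]⟩

theorem neg_one_notMem_map_mk_weightedSumSq (hsign : f.eval a * f.eval b < 0) :
    -1 ∉ (weightedSumSq (nonnegConstants S)).map (AdjoinRoot.mk f) := by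
  rintro ⟨s, hs, hs1⟩
  refine not_dvd_one_add_of_mul_eval_neg hsign hs ?_
  rw [← AdjoinRoot.mk_eq_zero, map_add, hs1, map_one, add_neg_cancel]

end

theorem exists_orderedField_hom_eval₂_eq_zero {S : Type u} [Field S] [LinearOrder S]
    [IsStrictOrderedRing S] {f : S[X]} {a b : S} (hsign : f.eval a * f.eval b < 0) :
    ∃ (F : Type u) (_ : Field F) (_ : LinearOrder F) (_ : IsStrictOrderedRing F) (φ : S →+* F)
      (θ : F), (∀ s, 0 ≤ s → 0 ≤ φ s) ∧ f.eval₂ φ θ = 0 := by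
  let T := (weightedSumSq (nonnegConstants S)).map (AdjoinRoot.mk f)
  have hsq (x : AdjoinRoot f) : x ^ 2 ∈ T := by
    obtain ⟨h, rfl⟩ := AdjoinRoot.mk_surjective x
    exact ⟨h ^ 2, sq_mem_weightedSumSq h, map_pow _ _ _⟩
  obtain ⟨F, _, _, _, φ, hφ⟩ :=
    exists_orderedField_hom_nonneg hsq (neg_one_notMem_map_mk_weightedSumSq hsign)
  refine ⟨F, _, _, ‹_›, φ.comp (AdjoinRoot.of f), φ (AdjoinRoot.root f), fun s hs => ?_, ?_⟩
  · exact hφ _ ⟨.C s, mem_weightedSumSq_of_mem ⟨s, hs, rfl⟩, AdjoinRoot.mk_C s⟩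
  · rw [← Polynomial.hom_eval₂, AdjoinRoot.eval₂_root, map_zero]

theorem polyIVP_of_forall_exists_root {S : Type*} [Field S] [LinearOrder S] [IsStrictOrderedRing S]
    (hroot : ∀ (f : S[X]) (a b : S), f.eval a * f.eval b < 0 → ∃ c, f.eval c = 0) : PolyIVP S := by
  intro f a b hab hsign
  induction hn : f.natDegree using Nat.strong_induction_on generalizing f with | _ n ih
  subst hn
  obtain ⟨r, hr⟩ := hroot f a b hsign
  by_cases hmem : r ∈ Ioo a b
  · exact ⟨r, hmem, hr⟩
  obtain ⟨g, rfl⟩ := Polynomial.dvd_iff_isRoot.mpr hr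
  have hg : g ≠ 0 := by
    rintro rfl
    simp at hsign
  have hside : 0 ≤ (a - r) * (b - r) := by
    rcases le_or_gt r a with hra | har
    · exact mul_nonneg (sub_nonneg.mpr hra) (sub_nonneg.mpr (hra.trans hab.le))
    · have hbr : b ≤ r := le_of_not_gt fun hrb => hmem ⟨har, hrb⟩
      exact mul_nonneg_of_nonpos_of_nonpos (sub_nonpos.mpr har.le) (sub_nonpos.mpr hbr)
  have hgsign : g.eval a * g.eval b < 0 := by
    refine neg_of_mul_neg_right (a := (a - r) * (b - r)) ?_ hside
    simpa [mul_mul_mul_comm] using hsign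
  have hdeg : g.natDegree < ((.X - .C r) * g).natDegree := by
    rw [Polynomial.natDegree_mul (Polynomial.X_sub_C_ne_zero r) hg, Polynomial.natDegree_X_sub_C]
    omega
  obtain ⟨c, hc, hgc⟩ := ih _ hdeg g hgsign rfl
  exact ⟨c, hc, by rw [Polynomial.eval_mul, hgc, mul_zero]⟩

/-- The subsemirings of a field that are the nonnegative cone of an ordering of a subfield. The
subfield is not part of the data: it consists of the elements of the cone and their negatives. -/
structure IsSubfieldCone {C : Type*} [Field C] (Q : Subsemiring C) : Prop where
  inv_mem : ∀ {x}, x ∈ Q → x⁻¹ ∈ Q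
  neg_one_notMem : -1 ∉ Q
  sub_mem_or_sub_mem : ∀ {x y}, x ∈ Q → y ∈ Q → x - y ∈ Q ∨ y - x ∈ Q

theorem isSubfieldCone_map_nonneg {E C : Type*} [Field E] [LinearOrder E] [IsStrictOrderedRing E]
    [Field C] (φ : E →+* C) : IsSubfieldCone ((Subsemiring.nonneg E).map φ) where
  inv_mem := by
    rintro _ ⟨x, hx, rfl⟩
    exact ⟨x⁻¹, inv_nonneg.mpr hx, map_inv₀ φ x⟩
  neg_one_notMem := by
    rintro ⟨x, hx, hx1⟩
    obtain rfl : x = -1 := φ.injective (by rw [hx1, map_neg, map_one])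
    exact neg_one_lt_zero.not_ge hx
  sub_mem_or_sub_mem := by
    rintro _ _ ⟨x, -, rfl⟩ ⟨y, -, rfl⟩
    rcases le_total x y with hxy | hyx
    · exact Or.inr ⟨y - x, sub_nonneg.mpr hxy, map_sub φ y x⟩
    · exact Or.inl ⟨x - y, sub_nonneg.mpr hyx, map_sub φ x y⟩

theorem isSubfieldCone_sSup {C : Type*} [Field C] {c : Set (Subsemiring C)}
    (hc : ∀ Q ∈ c, IsSubfieldCone Q) (hchain : IsChain (· ≤ ·) c) (hne : c.Nonempty) :
    IsSubfieldCone (sSup c) := by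
  have mem_sSup {x : C} : x ∈ sSup c ↔ ∃ Q ∈ c, x ∈ Q :=
    Subsemiring.mem_sSup_of_directedOn hne hchain.directedOn
  refine ⟨fun hx => ?_, fun h1 => ?_, fun hx hy => ?_⟩
  · obtain ⟨Q, hQ, hxQ⟩ := mem_sSup.mp hx
    exact mem_sSup.mpr ⟨Q, hQ, (hc Q hQ).inv_mem hxQ⟩
  · obtain ⟨Q, hQ, h1Q⟩ := mem_sSup.mp h1
    exact (hc Q hQ).neg_one_notMem h1Q
  · obtain ⟨Q, hQ, hxQ⟩ := mem_sSup.mp hx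
    obtain ⟨Q', hQ', hyQ'⟩ := mem_sSup.mp hy
    obtain ⟨R, hR, hQR, hQR'⟩ := hchain.directedOn Q hQ Q' hQ'
    exact ((hc R hR).sub_mem_or_sub_mem (hQR hxQ) (hQR' hyQ')).imp (le_sSup hR ·) (le_sSup hR ·)

namespace IsSubfieldCone

variable {C : Type*} [Field C] {Q : Subsemiring C}

/-- The subfield that a cone orders. -/
def subfield (hQ : IsSubfieldCone Q) : Subfield C where
  carrier := {x | x ∈ Q ∨ -x ∈ Q}
  one_mem' := Or.inl Q.one_mem
  zero_mem' := Or.inl Q.zero_mem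
  add_mem' := by
    rintro x y (hx | hx) (hy | hy)
    · exact Or.inl (add_mem hx hy)
    · simpa [sub_eq_add_neg, add_comm] using hQ.sub_mem_or_sub_mem hx hy
    · simpa [sub_eq_add_neg, add_comm] using hQ.sub_mem_or_sub_mem hy hx
    · exact Or.inr (by simpa [add_comm] using add_mem hx hy)
  mul_mem' := by
    rintro x y (hx | hx) (hy | hy)
    · exact Or.inl (mul_mem hx hy)
    · exact Or.inr (by simpa using mul_mem hx hy)
    · exact Or.inr (by simpa using mul_mem hx hy)
    · exact Or.inl (by simpa using mul_mem hx hy)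
  neg_mem' := fun hx => by simpa [or_comm] using hx
  inv_mem' := fun x hx => hx.imp hQ.inv_mem fun h => by simpa [inv_neg] using hQ.inv_mem h

theorem exists_linearOrder_subfield (hQ : IsSubfieldCone Q) :
    ∃ _ : LinearOrder hQ.subfield, IsStrictOrderedRing hQ.subfield ∧
      ∀ x : hQ.subfield, 0 ≤ x ↔ (x : C) ∈ Q := by
  let P : RingPreordering hQ.subfield := RingPreordering.mk' {x | (x : C) ∈ Q}
    (fun hx hy => Q.add_mem hx hy) (fun hx hy => Q.mul_mem hx hy)
    (fun x => x.2.elim (fun h => Q.mul_mem h h) fun h => by simpa using Q.mul_mem h h)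
    hQ.neg_one_notMem
  have : HasMemOrNegMem P := ⟨fun x => x.2⟩
  exact exists_linearOrder_nonneg_iff P

theorem exists_eq_map_nonneg (hQ : IsSubfieldCone Q) :
    ∃ (S : Subfield C) (_ : LinearOrder S) (_ : IsStrictOrderedRing S),
      Q = (Subsemiring.nonneg S).map S.subtype := by
  obtain ⟨order, hord, hnonneg⟩ := hQ.exists_linearOrder_subfield
  refine ⟨hQ.subfield, order, hord, le_antisymm (fun x hx => ?_) ?_⟩
  · exact ⟨⟨x, Or.inl hx⟩, (hnonneg _).mpr hx, rfl⟩
  · rintro _ ⟨x, hx, rfl⟩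
    exact (hnonneg x).mp hx

end IsSubfieldCone

theorem map_mem_of_map_nonneg_le {E C : Type*} [Field E] [LinearOrder E] [IsStrictOrderedRing E]
    [Field C] {S : Subfield C} [LinearOrder S] [IsStrictOrderedRing S] {φ : E →+* C}
    (hφ : (Subsemiring.nonneg E).map φ ≤ (Subsemiring.nonneg S).map S.subtype) (x : E) :
    φ x ∈ S := by
  wlog hx : 0 ≤ x generalizing x
  · simpa using this (-x) (neg_nonneg.mpr (le_of_not_ge hx))
  obtain ⟨y, -, hy⟩ := hφ ⟨x, hx, rfl⟩
  exact hy ▸ y.2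

theorem nonempty_algHom_of_maximal_map_nonneg {C : Type*} [Field C] [IsAlgClosed C]
    {S : Subfield C} [LinearOrder S] [IsStrictOrderedRing S]
    (hS : Maximal IsSubfieldCone ((Subsemiring.nonneg S).map S.subtype))
    {E : Type*} [Field E] [LinearOrder E] [IsStrictOrderedRing E] [Algebra S E]
    [Algebra.IsAlgebraic S E] (hSE : ∀ s : S, 0 ≤ s → 0 ≤ algebraMap S E s) :
    Nonempty (E →ₐ[S] S) := by
  let ψ : E →ₐ[S] C := IsAlgClosed.lift
  have hle : (Subsemiring.nonneg S).map S.subtype ≤ (Subsemiring.nonneg E).map (ψ : E →+* C) := by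
    rintro _ ⟨s, hs, rfl⟩
    exact ⟨algebraMap S E s, hSE s hs, ψ.commutes s⟩
  have hmem : ∀ x, (ψ : E →+* C) x ∈ S :=
    map_mem_of_map_nonneg_le (hS.le_of_ge (isSubfieldCone_map_nonneg _) hle)
  exact ⟨{ (ψ : E →+* C).codRestrict S hmem with commutes' := fun s => Subtype.ext (ψ.commutes s) }⟩

theorem exists_root_of_maximal_map_nonneg {C : Type*} [Field C] [IsAlgClosed C]
    {S : Subfield C} [LinearOrder S] [IsStrictOrderedRing S]
    (hS : Maximal IsSubfieldCone ((Subsemiring.nonneg S).map S.subtype))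
    {f : S[X]} {a b : S} (hsign : f.eval a * f.eval b < 0) : ∃ c, f.eval c = 0 := by
  obtain ⟨M, _, _, _, φ, θ, hφ, hθ⟩ := exists_orderedField_hom_eval₂_eq_zero hsign
  let _ : Algebra S M := φ.toAlgebra
  have halg : IsAlgebraic S θ :=
    ⟨f, Polynomial.ne_zero_of_natDegree_gt (natDegree_ne_zero_of_mul_eval_neg hsign).bot_lt, hθ⟩
  have : Algebra.IsAlgebraic S (IntermediateField.adjoin S {θ}) :=
    IntermediateField.isAlgebraic_adjoin_simple halg.isIntegral
  obtain ⟨ψ⟩ := nonempty_algHom_of_maximal_map_nonneg hS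
    (E := IntermediateField.adjoin S {θ}) hφ
  let t := IntermediateField.AdjoinSimple.gen S θ
  have hft : Polynomial.aeval t f = 0 := by
    refine (algebraMap _ M).injective ?_
    rw [← Polynomial.aeval_algebraMap_apply, map_zero]
    exact hθ
  refine ⟨ψ t, ?_⟩
  rw [← Polynomial.coe_aeval_eq_eval, Polynomial.aeval_algHom_apply, hft, map_zero]

theorem exists_polyIVP_extension (F : Type u) [Field F] [LinearOrder F] [IsStrictOrderedRing F] :
    ∃ (N : Type u) (_ : Field N) (_ : LinearOrder N) (_ : IsStrictOrderedRing N) (φ : F →+* N),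
      (∀ x, 0 ≤ x → 0 ≤ φ x) ∧ PolyIVP N := by
  obtain ⟨Q, hFQ, hQ⟩ := zorn_le_nonempty₀ {Q | IsSubfieldCone Q}
    (fun c hc hchain Q hQ => ⟨sSup c, isSubfieldCone_sSup hc hchain ⟨Q, hQ⟩, fun _ => le_sSup⟩)
    _ (isSubfieldCone_map_nonneg (algebraMap F (AlgebraicClosure F)))
  obtain ⟨S, _, _, rfl⟩ := IsSubfieldCone.exists_eq_map_nonneg hQ.prop
  refine ⟨S, _, _, ‹_›, (algebraMap F _).codRestrict S (map_mem_of_map_nonneg_le hFQ),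
    fun x hx => ?_, polyIVP_of_forall_exists_root fun f a b =>
      exists_root_of_maximal_map_nonneg hQ⟩
  obtain ⟨s, hs, hsx⟩ := hFQ ⟨x, hx, rfl⟩
  exact hs.trans_eq (Subtype.ext hsx)

/-! ### Positivstellensätze -/

theorem exists_mul_eq_one_add_of_forall_eval_pos {d : ℕ} {ι : Type*} [Finite ι]
    {g : ι → MvPolynomial (Fin d) ℝ} {T : Subsemiring (MvPolynomial (Fin d) ℝ)}
    (hsq : ∀ x, x ^ 2 ∈ T) (hg : ∀ j, g j ∈ T) {f : MvPolynomial (Fin d) ℝ}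
    (hf : ∀ x : Fin d → ℝ, (∀ j, 0 ≤ eval x (g j)) → 0 < eval x f) :
    ∃ s ∈ T, ∃ t ∈ T, f * t = 1 + s := by
  by_contra! hcon
  have hproper : -1 ∉ adjoinToPreordering T hsq (-f) := by
    rintro ⟨s, hs, t, ht, hst⟩
    exact hcon s hs t ht (by linear_combination hst)
  obtain ⟨F, _, _, _, φ, hφ⟩ := exists_orderedField_hom_nonneg
    (fun x => le_adjoinToPreordering T hsq _ (hsq x)) hproper
  obtain ⟨N, _, _, _, ψ, hψ, hN⟩ := exists_polyIVP_extension F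
  let Φ : MvPolynomial (Fin d) ℝ →+* N := ψ.comp φ
  have hΦ (h : MvPolynomial (Fin d) ℝ) : eval₂ (Φ.comp C) (fun i => Φ (X i)) h = Φ h :=
    RingHom.congr_fun (ringHom_ext (by simp) (by simp) :
      eval₂Hom (Φ.comp C) (fun i => Φ (X i)) = Φ) h
  obtain ⟨x, hx⟩ := exists_real_sign_eval_eq hN (Φ.comp C)
    ((Set.finite_range g).insert (-f)) fun i => Φ (X i)
  have nonneg_of_mem {h : MvPolynomial (Fin d) ℝ} (hh : h ∈ insert (-f) (Set.range g))
      (hhT : h ∈ adjoinToPreordering T hsq (-f)) : 0 ≤ eval x h := by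
    rw [← sign_nonneg_iff, ← hx h hh, hΦ, sign_nonneg_iff]
    exact hψ _ (hφ _ hhT)
  have hfx : 0 ≤ eval x (-f) :=
    nonneg_of_mem (Set.mem_insert _ _) (self_mem_adjoinToPreordering T hsq _)
  have hgx (j : ι) : 0 ≤ eval x (g j) :=
    nonneg_of_mem (Set.mem_insert_of_mem _ ⟨j, rfl⟩) (le_adjoinToPreordering T hsq _ (hg j))
  rw [map_neg, neg_nonneg] at hfx
  exact hfx.not_gt (hf x hgx)

section

variable {A : Type*} [CommRing A] [Algebra ℝ A] {T : Subsemiring A}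

theorem algebraMap_mem_of_nonneg (hsq : ∀ x, x ^ 2 ∈ T) {r : ℝ} (hr : 0 ≤ r) :
    algebraMap ℝ A r ∈ T := by
  rw [← Real.sq_sqrt hr, map_pow]
  exact hsq _

theorem mem_of_algebraMap_mul_mem (hsq : ∀ x, x ^ 2 ∈ T) {r : ℝ} (hr : 0 < r) {x : A}
    (hx : algebraMap ℝ A r * x ∈ T) : x ∈ T := by
  have h := mul_mem (algebraMap_mem_of_nonneg hsq (inv_nonneg.mpr hr.le)) hx
  rwa [← mul_assoc, ← map_mul, inv_mul_cancel₀ hr.ne', map_one, one_mul] at h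

theorem mem_of_two_mul_mem (hsq : ∀ x, x ^ 2 ∈ T) {x : A} (hx : 2 * x ∈ T) : x ∈ T :=
  mem_of_algebraMap_mul_mem hsq two_pos (by rwa [map_ofNat])

/-- The subalgebra of elements bounded by a real number with respect to the preordering `T`. The
preordering is archimedean if this is the whole algebra. -/
def boundedElements (T : Subsemiring A) (hsq : ∀ x, x ^ 2 ∈ T) : Subalgebra ℝ A where
  carrier := {x | ∃ r : ℝ, algebraMap ℝ A r - x ∈ T ∧ algebraMap ℝ A r + x ∈ T}
  algebraMap_mem' r := by
    refine ⟨|r|, ?_, ?_⟩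
    · rw [← map_sub]
      exact algebraMap_mem_of_nonneg hsq (sub_nonneg.mpr (le_abs_self r))
    · rw [← map_add]
      exact algebraMap_mem_of_nonneg hsq (neg_le_iff_add_nonneg.mp (neg_le_abs r))
  add_mem' := by
    rintro x y ⟨r, hr, hr'⟩ ⟨q, hq, hq'⟩
    refine ⟨r + q, ?_, ?_⟩
    · convert add_mem hr hq using 1
      rw [map_add]
      ring
    · convert add_mem hr' hq' using 1
      rw [map_add]
      ring
  mul_mem' := by
    rintro x y ⟨r, hr, hr'⟩ ⟨q, hq, hq'⟩
    refine ⟨r * q, mem_of_two_mul_mem hsq ?_, mem_of_two_mul_mem hsq ?_⟩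
    · convert add_mem (mul_mem hr hq') (mul_mem hr' hq) using 1
      rw [map_mul]
      ring
    · convert add_mem (mul_mem hr hq) (mul_mem hr' hq') using 1
      rw [map_mul]
      ring

theorem mem_boundedElements_of_sub_sq_mem (hsq : ∀ x, x ^ 2 ∈ T) {c : ℝ} {x : A}
    (hx : algebraMap ℝ A c - x ^ 2 ∈ T) : x ∈ boundedElements T hsq := by
  have hc : 2 * algebraMap ℝ A ((c + 1) / 2) = algebraMap ℝ A c + 1 := by
    rw [← map_ofNat (algebraMap ℝ A) 2, ← map_mul, mul_div_cancel₀ _ two_ne_zero, map_add, map_one]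
  refine ⟨(c + 1) / 2, mem_of_two_mul_mem hsq ?_, mem_of_two_mul_mem hsq ?_⟩
  · convert add_mem hx (hsq (x - 1)) using 1
    linear_combination hc
  · convert add_mem hx (hsq (x + 1)) using 1
    linear_combination hc

variable {ι : Type*} [Fintype ι] {x : ι → A}

theorem boundedElements_eq_top_of_sub_sum_sq_mem (hx : Algebra.adjoin ℝ (Set.range x) = ⊤)
    (hsq : ∀ x, x ^ 2 ∈ T) {c : ℝ} (hc : algebraMap ℝ A c - ∑ i, x i ^ 2 ∈ T) :
    boundedElements T hsq = ⊤ := by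
  classical
  rw [eq_top_iff, ← hx, Algebra.adjoin_le_iff, Set.range_subset_iff]
  intro k
  refine mem_boundedElements_of_sub_sq_mem hsq (c := c) ?_
  convert add_mem hc (sum_mem fun i (_ : i ∈ Finset.univ.erase k) => hsq (x i)) using 1
  rw [← Finset.add_sum_erase _ _ (Finset.mem_univ k)]
  ring

-- Wörmann's argument: `s` is bounded with respect to `T + pT`, where `p * t = 1 + s`. Multiplying
-- by `1 + s` turns the factor `p` of that certificate into `p ^ 2 * t ∈ T`.
theorem exists_algebraMap_sub_mem_of_mul_eq_one_add (hsq : ∀ x, x ^ 2 ∈ T) {p s t : A}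
    (hs : s ∈ T) (ht : t ∈ T) (hpt : p * t = 1 + s)
    (hbdd : s ∈ boundedElements (adjoinToPreordering T hsq p)
      fun x => le_adjoinToPreordering T hsq p (hsq x)) :
    ∃ q : ℝ, algebraMap ℝ A q - s ∈ T := by
  obtain ⟨r, ⟨u, hu, v, hv, huv⟩, -⟩ := hbdd
  have hmul : (1 + s) * (algebraMap ℝ A r - s) ∈ T := by
    have hcert : (1 + s) * (algebraMap ℝ A r - s) = (1 + s) * u + t * v * p ^ 2 := by
      linear_combination (1 + s) * huv - p * v * hpt
    rw [hcert]
    exact add_mem (mul_mem (add_mem T.one_mem hs) hu) (mul_mem (mul_mem ht hv) (hsq p))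
  have hr : 2 * algebraMap ℝ A (r / 2) = algebraMap ℝ A r := by
    rw [← map_ofNat (algebraMap ℝ A) 2, ← map_mul, mul_div_cancel₀ _ two_ne_zero]
  refine ⟨r + (r / 2) ^ 2, ?_⟩
  convert add_mem hmul (hsq (s - algebraMap ℝ A (r / 2))) using 1
  rw [map_add, map_pow]
  linear_combination s * hr

theorem boundedElements_eq_top_of_mul_eq_one_add (hx : Algebra.adjoin ℝ (Set.range x) = ⊤)
    (hsq : ∀ x, x ^ 2 ∈ T) {c : ℝ} (hc : 0 ≤ c) {s t : A} (hs : s ∈ T) (ht : t ∈ T)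
    (hst : (algebraMap ℝ A c - ∑ i, x i ^ 2) * t = 1 + s) : boundedElements T hsq = ⊤ := by
  have hbdd := boundedElements_eq_top_of_sub_sum_sq_mem hx (c := c)
    (fun y => le_adjoinToPreordering T hsq (algebraMap ℝ A c - ∑ i, x i ^ 2) (hsq y))
    (self_mem_adjoinToPreordering T hsq _)
  obtain ⟨q, hq⟩ := exists_algebraMap_sub_mem_of_mul_eq_one_add hsq hs ht hst
    (hbdd ▸ Algebra.mem_top)
  refine boundedElements_eq_top_of_sub_sum_sq_mem hx hsq (c := c * (1 + q)) ?_
  have hsum : ∑ i, x i ^ 2 ∈ T := sum_mem fun i _ => hsq (x i)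
  convert add_mem (add_mem (mul_mem ht (hsq (algebraMap ℝ A c - ∑ i, x i ^ 2)))
    (mul_mem (algebraMap_mem_of_nonneg hsq hc) hq)) (mul_mem hsum hs) using 1
  rw [map_mul, map_add, map_one]
  linear_combination (∑ i, x i ^ 2 - algebraMap ℝ A c) * hst

theorem exists_pos_algebraMap_sub_mem (hsq : ∀ x, x ^ 2 ∈ T) {y : A}
    (hy : y ∈ boundedElements T hsq) : ∃ r : ℝ, 0 < r ∧ algebraMap ℝ A r - y ∈ T := by
  obtain ⟨r, hr, -⟩ := hy
  refine ⟨|r| + 1, by positivity, ?_⟩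
  convert add_mem hr (algebraMap_mem_of_nonneg hsq (r := |r| + 1 - r) ?_) using 1
  · rw [map_sub]
    ring
  · linarith [le_abs_self r]

-- If `f * t = 1 + s` and `t ≤ r`, then `f + k / r` can be lowered by steps of `1 / r` down to `f`.
theorem mem_of_mul_eq_one_add_of_boundedElements_eq_top (hsq : ∀ x, x ^ 2 ∈ T)
    (harch : boundedElements T hsq = ⊤) {f s t : A} (hs : s ∈ T) (ht : t ∈ T)
    (hst : f * t = 1 + s) : f ∈ T := by
  obtain ⟨r, hr, hrt⟩ := exists_pos_algebraMap_sub_mem hsq (harch ▸ Algebra.mem_top : t ∈ _)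
  obtain ⟨q, -, hqf⟩ := exists_pos_algebraMap_sub_mem hsq (harch ▸ Algebra.mem_top : -f ∈ _)
  have hrT : algebraMap ℝ A r ∈ T := algebraMap_mem_of_nonneg hsq hr.le
  have hstart : ∃ k : ℕ, algebraMap ℝ A r * f + k ∈ T := by
    obtain ⟨k, hk⟩ := exists_nat_ge (r * q)
    refine ⟨k, ?_⟩
    convert add_mem (mul_mem hrT hqf) (algebraMap_mem_of_nonneg hsq (sub_nonneg.mpr hk)) using 1
    rw [map_sub, map_mul, map_natCast]
    ring
  have hstep (k : ℕ) (hk : algebraMap ℝ A r * f + (k + 1 : ℕ) ∈ T) :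
      algebraMap ℝ A r * f + k ∈ T := by
    refine mem_of_algebraMap_mul_mem hsq hr ?_
    convert add_mem (add_mem (mul_mem hrt hk) (mul_mem hrT hs))
      (mul_mem (natCast_mem T (k + 1)) ht) using 1
    push_cast
    linear_combination algebraMap ℝ A r * hst
  obtain ⟨k, hk⟩ := hstart
  refine mem_of_algebraMap_mul_mem hsq hr ?_
  induction k with
  | zero => simpa using hk
  | succ k ih => exact ih (hstep k hk)

end

theorem mem_of_forall_eval_pos_of_isCompact {d : ℕ} {ι : Type*} [Finite ι]
    {g : ι → MvPolynomial (Fin d) ℝ} {T : Subsemiring (MvPolynomial (Fin d) ℝ)}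
    (hsq : ∀ x, x ^ 2 ∈ T) (hg : ∀ j, g j ∈ T)
    (hK : IsCompact {x : Fin d → ℝ | ∀ j, 0 ≤ eval x (g j)}) {f : MvPolynomial (Fin d) ℝ}
    (hf : ∀ x : Fin d → ℝ, (∀ j, 0 ≤ eval x (g j)) → 0 < eval x f) : f ∈ T := by
  obtain ⟨c, hc⟩ := (hK.image (MvPolynomial.continuous_eval
    (∑ i, X i ^ 2 : MvPolynomial (Fin d) ℝ))).bddAbove
  have hball (x : Fin d → ℝ) (hx : ∀ j, 0 ≤ eval x (g j)) :
      0 < eval x (algebraMap ℝ _ (|c| + 1) - ∑ i, X i ^ 2) := by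
    have hxc := hc (Set.mem_image_of_mem _ hx)
    rw [map_sub, algebraMap_eq, eval_C]
    linarith [le_abs_self c]
  obtain ⟨s, hs, t, ht, hst⟩ := exists_mul_eq_one_add_of_forall_eval_pos hsq hg hball
  have harch := boundedElements_eq_top_of_mul_eq_one_add adjoin_range_X hsq (by positivity)
    hs ht hst
  obtain ⟨s₁, hs₁, t₁, ht₁, hst₁⟩ := exists_mul_eq_one_add_of_forall_eval_pos hsq hg hf
  exact mem_of_mul_eq_one_add_of_boundedElements_eq_top hsq harch hs₁ ht₁ hst₁

/-! ### Representing measures -/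

theorem exists_eq_sq_mul_prod_of_mem_closure_range {M ι : Type*} [CommMonoid M] {g : ι → M} {w : M}
    (hw : w ∈ Submonoid.closure (Set.range g)) :
    ∃ (h : M) (J : Finset ι), w = h ^ 2 * ∏ j ∈ J, g j := by
  classical
  induction hw using Submonoid.closure_induction_right with
  | one => exact ⟨1, ∅, by simp⟩
  | mul_right w _ _ hgj ih =>
    obtain ⟨h, J, rfl⟩ := ih
    obtain ⟨j, rfl⟩ := hgj
    by_cases hj : j ∈ J
    · refine ⟨h * g j, J.erase j, ?_⟩
      rw [← Finset.prod_erase_mul J g hj, mul_pow, sq (g j)]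
      ac_rfl
    · exact ⟨h, insert j J, by rw [Finset.prod_insert hj, mul_assoc, mul_comm (g j)]⟩

theorem map_nonneg_of_mem_weightedSumSq_closure {A ι R F : Type*} [CommRing A] [AddCommMonoid R]
    [PartialOrder R] [IsOrderedAddMonoid R] [FunLike F A R] [AddMonoidHomClass F A R] {g : ι → A}
    {L : F} (hL : ∀ (J : Finset ι) (f : A), 0 ≤ L (f ^ 2 * ∏ j ∈ J, g j)) {f : A}
    (hf : f ∈ weightedSumSq (Submonoid.closure (Set.range g))) : 0 ≤ L f := by
  induction hf using weightedSumSq_induction with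
  | sq_mul h w hw =>
    obtain ⟨k, J, rfl⟩ := exists_eq_sq_mul_prod_of_mem_closure_range hw
    rw [← mul_assoc, ← mul_pow]
    exact hL J (h * k)
  | zero => rw [map_zero]
  | add s t _ _ ihs iht =>
    rw [map_add]
    exact add_nonneg ihs iht

theorem map_nonneg_of_forall_eval_nonneg {d : ℕ} {ι : Type*} [Finite ι]
    {g : ι → MvPolynomial (Fin d) ℝ} (hK : IsCompact {x : Fin d → ℝ | ∀ j, 0 ≤ eval x (g j)})
    {L : MvPolynomial (Fin d) ℝ →ₗ[ℝ] ℝ} (hL : ∀ J f, 0 ≤ L (f ^ 2 * ∏ j ∈ J, g j))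
    {f : MvPolynomial (Fin d) ℝ}
    (hf : ∀ x : Fin d → ℝ, (∀ j, 0 ≤ eval x (g j)) → 0 ≤ eval x f) : 0 ≤ L f := by
  have hpos (ε : ℝ) (hε : 0 < ε) : 0 ≤ L f + ε * L 1 := by
    have hmem : f + C ε ∈ weightedSumSq (Submonoid.closure (Set.range g)) :=
      mem_of_forall_eval_pos_of_isCompact sq_mem_weightedSumSq
        (fun j => mem_weightedSumSq_of_mem (Submonoid.subset_closure (Set.mem_range_self j))) hK
        fun x hx => by
          rw [map_add, eval_C]
          exact add_pos_of_nonneg_of_pos (hf x hx) hε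
    have h := map_nonneg_of_mem_weightedSumSq_closure hL hmem
    rwa [map_add, C_eq_smul_one, map_smul, smul_eq_mul] at h
  have hlim : Filter.Tendsto (fun ε : ℝ => L f + ε * L 1) (nhdsWithin 0 (Set.Ioi 0))
      (nhds (L f)) := by
    have hcont : Continuous fun ε : ℝ => L f + ε * L 1 := by fun_prop
    simpa using (hcont.tendsto 0).mono_left nhdsWithin_le_nhds
  exact ge_of_tendsto hlim (Filter.eventually_of_mem self_mem_nhdsWithin hpos)

theorem exists_positiveLinearMap_comp_eq {E V : Type*} [AddCommGroup E] [Module ℝ E]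
    [AddCommGroup V] [PartialOrder V] [IsOrderedAddMonoid V] [Module ℝ V] [PosSMulMono ℝ V]
    {p : E →ₗ[ℝ] V} (hp : ∀ v, ∃ u, v ≤ p u) {L : E →ₗ[ℝ] ℝ} (hL : ∀ u, 0 ≤ p u → 0 ≤ L u) :
    ∃ Λ : V →ₚ[ℝ] ℝ, ∀ u, Λ (p u) = L u := by
  have hker : p.ker ≤ L.ker := fun u hu => by
    rw [LinearMap.mem_ker] at hu ⊢
    have hneg := hL (-u) (by rw [map_neg, hu, neg_zero])
    rw [map_neg] at hneg
    exact le_antisymm (neg_nonneg.mp hneg) (hL u hu.ge)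
  let rangeMap : p.range →ₗ[ℝ] ℝ := p.ker.liftQ L hker ∘ₗ p.quotKerEquivRange.symm
  have hrange (u : E) : rangeMap ⟨p u, u, rfl⟩ = L u := by
    have hu : p.quotKerEquivRange.symm ⟨p u, u, rfl⟩ = p.ker.mkQ u :=
      p.quotKerEquivRange_symm_apply_image u ⟨u, rfl⟩
    rw [LinearMap.comp_apply, LinearEquiv.coe_coe, hu, ← LinearMap.comp_apply, p.ker.liftQ_mkQ]
  obtain ⟨Λ, hΛ, hΛpos⟩ := riesz_extension (PointedCone.positive ℝ V) ⟨p.range, rangeMap⟩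
    (by
      rintro ⟨_, u, rfl⟩ hu
      exact (hL u hu).trans_eq (hrange u).symm)
    (by
      intro v
      obtain ⟨u, hu⟩ := hp (-v)
      exact ⟨⟨p u, u, rfl⟩, neg_le_iff_add_nonneg.mp hu⟩)
  exact ⟨PositiveLinearMap.mk₀ Λ hΛpos, fun u => (hΛ ⟨p u, u, rfl⟩).trans (hrange u)⟩

open scoped CompactlySupported in
theorem exists_isFiniteMeasure_forall_eq_integral {X : Type*} [TopologicalSpace X] [CompactSpace X]
    [T2Space X] [MeasurableSpace X] [BorelSpace X] (Λ : C(X, ℝ) →ₚ[ℝ] ℝ) :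
    ∃ μ : Measure X, IsFiniteMeasure μ ∧ ∀ f : C(X, ℝ), Λ f = ∫ x, f x ∂μ := by
  let Λc : C_c(X, ℝ) →ₚ[ℝ] ℝ := PositiveLinearMap.mk₀
    { toFun f := Λ f.toContinuousMap
      map_add' f f' := map_add Λ f.toContinuousMap f'.toContinuousMap
      map_smul' r f := map_smul Λ r f.toContinuousMap }
    fun _ hf => map_nonneg Λ hf
  refine ⟨RealRMK.rieszMeasure Λc, ⟨isCompact_univ.measure_lt_top⟩, fun f => ?_⟩
  exact (RealRMK.integral_rieszMeasure Λc
    (CompactlySupportedContinuousMap.continuousMapEquiv f)).symm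

section

variable {σ : Type*} {K : Set (σ → ℝ)}

/-- The restriction of polynomial functions to `K`, as a homomorphism to the algebra of continuous
functions on `K`. -/
noncomputable def evalOn (K : Set (σ → ℝ)) : MvPolynomial σ ℝ →ₐ[ℝ] C(K, ℝ) :=
  aeval fun i => ⟨fun x => x.1 i, (continuous_apply i).comp continuous_subtype_val⟩

theorem evalOn_apply (f : MvPolynomial σ ℝ) (x : K) : evalOn K f x = eval x.1 f := by
  induction f using MvPolynomial.induction_on with
  | C a => simp [evalOn]
  | add p q hp hq => rw [map_add, map_add, ContinuousMap.add_apply, hp, hq]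
  | mul_X p i hp =>
    have hX : evalOn K (X i) x = x.1 i := by simp [evalOn]
    rw [map_mul, map_mul, ContinuousMap.mul_apply, hp, hX, eval_X]

variable [Countable σ]

theorem exists_representingMeasure (hK : IsCompact K) {L : MvPolynomial σ ℝ →ₗ[ℝ] ℝ}
    (hL : ∀ f, (∀ x ∈ K, 0 ≤ eval x f) → 0 ≤ L f) :
    ∃ μ : Measure (σ → ℝ), IsFiniteMeasure μ ∧ μ Kᶜ = 0 ∧ ∀ f, L f = ∫ x, eval x f ∂μ := by
  have : CompactSpace K := isCompact_iff_compactSpace.mp hK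
  have hcofinal (u : C(K, ℝ)) : ∃ f, u ≤ (evalOn K).toLinearMap f := by
    refine ⟨C ‖u‖, ContinuousMap.le_def.mpr fun x => ?_⟩
    rw [AlgHom.toLinearMap_apply, evalOn_apply, eval_C]
    exact (le_abs_self _).trans (u.norm_coe_le_norm x)
  obtain ⟨Λ, hΛ⟩ := exists_positiveLinearMap_comp_eq hcofinal (L := L) fun f hf =>
    hL f fun x hx => (hf ⟨x, hx⟩).trans_eq (evalOn_apply f ⟨x, hx⟩)
  obtain ⟨ν, _, hν⟩ := exists_isFiniteMeasure_forall_eq_integral Λ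
  refine ⟨ν.map Subtype.val, inferInstance, ?_, fun f => ?_⟩
  · rw [Measure.map_apply measurable_subtype_coe hK.measurableSet.compl, Set.preimage_compl,
      Subtype.coe_preimage_self, Set.compl_univ, measure_empty]
  · rw [← hΛ f, AlgHom.toLinearMap_apply, hν, integral_map measurable_subtype_coe.aemeasurable
      (MvPolynomial.continuous_eval f).aestronglyMeasurable]
    simp only [evalOn_apply]

variable {μ : Measure (σ → ℝ)} [IsFiniteMeasure μ]

theorem integrable_eval (hK : IsCompact K) (hμ : μ Kᶜ = 0) (f : MvPolynomial σ ℝ) :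
    Integrable (fun x => eval x f) μ := by
  obtain ⟨c, hc⟩ := hK.exists_bound_of_continuousOn (MvPolynomial.continuous_eval f).continuousOn
  have hae : ∀ᵐ x ∂μ, x ∈ K := hμ
  exact Integrable.of_bound (MvPolynomial.continuous_eval f).aestronglyMeasurable c (hae.mono hc)

theorem eq_integral_eval_of_forall_monomial (hK : IsCompact K) (hμ : μ Kᶜ = 0)
    {L : MvPolynomial σ ℝ →ₗ[ℝ] ℝ}
    (hL : ∀ α, L (monomial α 1) = ∫ x, eval x (monomial α (1 : ℝ)) ∂μ) (f : MvPolynomial σ ℝ) :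
    L f = ∫ x, eval x f ∂μ := by
  induction f using MvPolynomial.induction_on' with
  | monomial α a =>
    rw [← mul_one a, ← smul_eq_mul, ← smul_monomial, map_smul, hL, smul_eq_mul,
      ← integral_const_mul]
    simp only [smul_eval]
  | add p q hp hq =>
    rw [map_add, hp, hq, ← integral_add (integrable_eval hK hμ p) (integrable_eval hK hμ q)]
    simp only [map_add]

end

/-- **Theorem (moment condition for representing measures on compact semialgebraic
sets).** Let `K = {x : g₁(x) ≥ 0, …, g_m(x) ≥ 0}` be compact, let `y = (y_α)` be a real
sequence and `L` the associated linear functional with `L(x^α) = y_α`. Then `y` has a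
representing positive finite Borel measure supported in `K` if and only if
`L(f²·g_J) ≥ 0` for every `J ⊆ {1, …, m}` and every polynomial `f`,
where `g_J = ∏_{j ∈ J} g_j`. -/
theorem representing_measure_iff_moment_condition
    {n m : ℕ} (g : Fin m → MvPolynomial (Fin n) ℝ)
    (K : Set (Fin n → ℝ))
    (hKdef : K = {x : Fin n → ℝ | ∀ j, 0 ≤ eval x (g j)})
    (hKcomp : IsCompact K)
    (y : (Fin n →₀ ℕ) → ℝ)
    (L : MvPolynomial (Fin n) ℝ →ₗ[ℝ] ℝ)
    (hLy : ∀ α : Fin n →₀ ℕ, L (monomial α (1 : ℝ)) = y α) :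
    (∃ μ : Measure (Fin n → ℝ), IsFiniteMeasure μ ∧ μ Kᶜ = 0 ∧
        ∀ α : Fin n →₀ ℕ, y α = ∫ x, eval x (monomial α (1 : ℝ)) ∂μ) ↔
    (∀ (J : Finset (Fin m)) (f : MvPolynomial (Fin n) ℝ),
        0 ≤ L (f ^ 2 * ∏ j ∈ J, g j)) := by
  subst hKdef
  constructor
  · rintro ⟨μ, _, hμ, hy⟩ J f
    have hae : ∀ᵐ x ∂μ, ∀ j, 0 ≤ eval x (g j) := hμ
    rw [eq_integral_eval_of_forall_monomial hKcomp hμ fun α => (hLy α).trans (hy α)]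
    refine integral_nonneg_of_ae (hae.mono fun x hx => ?_)
    simp only [Pi.zero_apply, map_mul, map_pow, map_prod]
    exact mul_nonneg (sq_nonneg _) (Finset.prod_nonneg fun j _ => hx j)
  · intro hL
    obtain ⟨μ, hfin, hμ, hLμ⟩ := exists_representingMeasure hKcomp fun f hf =>
      map_nonneg_of_forall_eval_nonneg hKcomp hL hf
    exact ⟨μ, hfin, hμ, fun α => by rw [← hLy, hLμ]⟩
end

section
/- Let L be a linear functional on the real polynomial ring in n variables satisfying (1) L(1) ≤ 1, (2) for every t ∈ ℕ the matrix (L(x^β x^γ))_{|β|,|γ| ≤ t} is positive semidefinite, and (3) L(x^α) = L(x^α·(x_1² + ... + x_n²)) for all multi-indices α. Then there exists a positive finite Borel measure μ with support contained in the unit sphere S^{n−1} such that L(p) = ∫_{S^{n−1}} p(x) dμ(x) for every polynomial p. -/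
open MeasureTheory MvPolynomial

/-!
A subsemiring `T` of a commutative real algebra is Archimedean if every element is dominated,
modulo `T`, by a natural number. The functionals which are nonnegative on `T` and normalized at `1`
then form a compact convex set. For `t ∈ T` and `n` large, splitting `n` as `t + (n - t)` writes
such a functional `L` as a convex combination of normalizations of `a ↦ L (t * a)` and
`a ↦ L ((n - t) * a)`; hence an extreme `L` is multiplicative, i.e. a character. By Krein–Milman and
weak compactness of the space of probability measures, every `L` is an integral of characters.

On the polynomial ring, characters are point evaluations. The sums of squares modulo the ideal of
the sphere form an Archimedean subsemiring because `1 - Xᵢ²` is congruent to `∑ j ≠ i, Xⱼ²`.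
-/

namespace MomentProblem

section ArchimedeanSubsemiring

variable {A : Type*} [CommRing A]

/-- A subsemiring `T` is Archimedean if every element is bounded above by a natural number in the
preorder `a ≤ b ↔ b - a ∈ T`. -/
def IsArchimedean (T : Subsemiring A) : Prop :=
  ∀ a : A, ∃ n : ℕ, (n : A) - a ∈ T

/-- The subring of elements bounded above and below by natural numbers in the preorder
`a ≤ b ↔ b - a ∈ T`; it is everything exactly when `T` is Archimedean. -/
def boundedElements (T : Subsemiring A) : Subring A where
  carrier := {a | ∃ n : ℕ, (n : A) - a ∈ T ∧ (n : A) + a ∈ T}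
  zero_mem' := ⟨0, by simp⟩
  one_mem' := ⟨1, by simp, by simpa using add_mem T.one_mem T.one_mem⟩
  neg_mem' := by
    rintro a ⟨n, hsub, hadd⟩
    exact ⟨n, by simpa using hadd, by simpa [← sub_eq_add_neg] using hsub⟩
  add_mem' := by
    rintro a b ⟨n, han, han'⟩ ⟨m, hbm, hbm'⟩
    refine ⟨n + m, ?_, ?_⟩
    · convert add_mem han hbm using 1
      push_cast
      ring
    · convert add_mem han' hbm' using 1
      push_cast
      ring
  mul_mem' := by
    rintro a b ⟨n, han, han'⟩ ⟨m, hbm, hbm'⟩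
    refine ⟨3 * n * m, ?_, ?_⟩
    · convert add_mem (mul_mem han hbm') (add_mem (mul_mem (natCast_mem T n) hbm)
        (mul_mem (natCast_mem T m) han')) using 1
      push_cast
      ring
    · convert add_mem (mul_mem han' hbm') (add_mem (mul_mem (natCast_mem T n) hbm)
        (mul_mem (natCast_mem T m) han)) using 1
      push_cast
      ring

end ArchimedeanSubsemiring

section SquaresMem

variable {A : Type*} [CommRing A] [Algebra ℝ A] {T : Subsemiring A}

theorem algebraMap_mem_of_nonneg (hsq : ∀ a, a * a ∈ T) {r : ℝ} (hr : 0 ≤ r) :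
    algebraMap ℝ A r ∈ T := by
  simpa only [← map_mul, Real.mul_self_sqrt hr] using hsq (algebraMap ℝ A √r)

theorem algebraMap_mem_boundedElements (hsq : ∀ a, a * a ∈ T) (r : ℝ) :
    algebraMap ℝ A r ∈ boundedElements T := by
  obtain ⟨n, hn⟩ := exists_nat_ge |r|
  obtain ⟨hlower, hupper⟩ := abs_le.1 hn
  refine ⟨n, ?_, ?_⟩
  · simpa using algebraMap_mem_of_nonneg hsq (sub_nonneg.2 hupper)
  · simpa using algebraMap_mem_of_nonneg hsq (neg_le_iff_add_nonneg'.1 hlower)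

theorem mem_boundedElements_of_sub_sq_mem (hsq : ∀ a, a * a ∈ T) {r : ℝ} {a : A}
    (ha : algebraMap ℝ A r - a ^ 2 ∈ T) : a ∈ boundedElements T := by
  obtain ⟨n, hn⟩ := exists_nat_ge (r + 1 / 4)
  have hconst := algebraMap_mem_of_nonneg hsq (sub_nonneg.2 hn)
  -- Completing the square: `n ± a = (r - a²) + (a ± 1/2)² + (n - (r + 1/4))`.
  have hcomplete (c : ℝ) (hc : c * c = 1 / 4) : (n : A) + algebraMap ℝ A (2 * c) * a ∈ T := by
    convert add_mem (add_mem ha (hsq (a + algebraMap ℝ A c))) hconst using 1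
    simp only [map_sub, map_add, map_mul, ← hc, map_natCast, map_ofNat]
    ring
  refine ⟨n, ?_, ?_⟩
  · simpa [sub_eq_add_neg] using hcomplete (-(1 / 2)) (by norm_num)
  · simpa using hcomplete (1 / 2) (by norm_num)

end SquaresMem

section States

variable {A : Type*} [CommRing A] [Algebra ℝ A] {T : Subsemiring A}

/-- The states of `(A, T)`: linear functionals nonnegative on `T` with value `1` at `1`. They are
encoded as functions so that they carry the topology of pointwise convergence. -/
def stateSpace (T : Subsemiring A) : Set (A → ℝ) :=
  {f | f ∈ Set.range ((⇑) : (A →ₗ[ℝ] ℝ) → A → ℝ) ∧ (∀ t ∈ T, 0 ≤ f t) ∧ f 1 = 1}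

theorem convex_stateSpace (T : Subsemiring A) : Convex ℝ (stateSpace T) := by
  rintro _ ⟨⟨L, rfl⟩, hL, hL1⟩ _ ⟨⟨M, rfl⟩, hM, hM1⟩ a b ha hb hab
  refine ⟨⟨a • L + b • M, rfl⟩, fun t ht => ?_, ?_⟩
  · exact add_nonneg (mul_nonneg ha (hL t ht)) (mul_nonneg hb (hM t ht))
  · simp [hL1, hM1, hab]

theorem isClosed_stateSpace (T : Subsemiring A) : IsClosed (stateSpace T) := by
  have hnonneg : IsClosed {f : A → ℝ | ∀ t ∈ T, 0 ≤ f t} := by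
    simp only [Set.ofPred_forall]
    exact isClosed_biInter fun t _ => isClosed_le continuous_const (continuous_apply t)
  exact (LinearMap.isClosed_range_coe A ℝ (RingHom.id ℝ)).inter
    (hnonneg.inter (isClosed_eq (continuous_apply 1) continuous_const))

theorem inv_smul_mem_stateSpace {L : A →ₗ[ℝ] ℝ} (hL : ∀ t ∈ T, 0 ≤ L t) (h1 : 0 < L 1) :
    ⇑((L 1)⁻¹ • L) ∈ stateSpace T :=
  ⟨⟨_, rfl⟩, fun t ht => mul_nonneg (inv_nonneg.2 h1.le) (hL t ht), inv_mul_cancel₀ h1.ne'⟩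

theorem map_natCast_mul (L : A →ₗ[ℝ] ℝ) (n : ℕ) (a : A) : L (n * a) = n * L a := by
  rw [← nsmul_eq_mul, map_nsmul, nsmul_eq_mul]

theorem map_mul_le_of_sub_mem {L : A →ₗ[ℝ] ℝ} (hL : ∀ t ∈ T, 0 ≤ L t) {t a : A} (ht : t ∈ T)
    {n : ℕ} (ha : (n : A) - a ∈ T) : L (t * a) ≤ n * L t := by
  have h := hL _ (mul_mem ht ha)
  rw [mul_sub, map_sub, mul_comm t (n : A), map_natCast_mul] at h
  exact sub_nonneg.1 h

theorem map_mul_eq_zero_of_map_eq_zero (hT : IsArchimedean T) {L : A →ₗ[ℝ] ℝ}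
    (hL : ∀ t ∈ T, 0 ≤ L t) {t : A} (ht : t ∈ T) (hLt : L t = 0) (a : A) : L (t * a) = 0 := by
  have hnonpos (b : A) : L (t * b) ≤ 0 := by
    obtain ⟨n, hn⟩ := hT b
    simpa [hLt] using map_mul_le_of_sub_mem hL ht hn
  have hneg := hnonpos (-a)
  rw [mul_neg, map_neg, neg_nonpos] at hneg
  exact (hnonpos a).antisymm hneg

theorem isCompact_stateSpace (hT : IsArchimedean T) : IsCompact (stateSpace T) := by
  choose N hN using hT
  refine (isCompact_univ_pi fun a =>
    isCompact_Icc (a := -(N (-a) : ℝ)) (b := N a)).of_isClosed_subset (isClosed_stateSpace T) ?_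
  rintro _ ⟨⟨L, rfl⟩, hL, hL1⟩ a -
  have hle (b : A) : L b ≤ N b := by
    simpa [hL1] using map_mul_le_of_sub_mem hL T.one_mem (hN b)
  have hneg := hle (-a)
  rw [map_neg] at hneg
  exact ⟨neg_le.1 hneg, hle a⟩

/-- The functional `a ↦ L (t * a)`, normalized to have value `1` at `1`. It is the analogue of the
measure with density `t`, and has the junk value `0` if `L t = 0`. -/
noncomputable def normalizedMulLeft (L : A →ₗ[ℝ] ℝ) (t : A) : A →ₗ[ℝ] ℝ :=
  (L t)⁻¹ • L ∘ₗ LinearMap.mulLeft ℝ t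

theorem normalizedMulLeft_apply (L : A →ₗ[ℝ] ℝ) (t a : A) :
    normalizedMulLeft L t a = (L t)⁻¹ * L (t * a) :=
  rfl

theorem normalizedMulLeft_mem_stateSpace {L : A →ₗ[ℝ] ℝ} (hL : ∀ t ∈ T, 0 ≤ L t) {t : A}
    (ht : t ∈ T) (hLt : 0 < L t) : ⇑(normalizedMulLeft L t) ∈ stateSpace T := by
  have h := inv_smul_mem_stateSpace (L := L ∘ₗ LinearMap.mulLeft ℝ t)
    (fun s hs => hL _ (mul_mem ht hs)) (by simpa using hLt)
  rwa [LinearMap.comp_apply, LinearMap.mulLeft_apply, mul_one] at h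

theorem mem_openSegment_normalizedMulLeft {L : A →ₗ[ℝ] ℝ} (hL1 : L 1 = 1) {s t : A} {n : ℕ}
    (hst : s + t = n) (hLs : 0 < L s) (hLt : 0 < L t) :
    ⇑L ∈ openSegment ℝ ⇑(normalizedMulLeft L s) ⇑(normalizedMulLeft L t) := by
  have hsum (a : A) : L (s * a) + L (t * a) = n * L a := by
    rw [← map_add, ← add_mul, hst, map_natCast_mul]
  have hn : L s + L t = n := by simpa [hL1] using hsum 1
  have hnpos : 0 < (n : ℝ) := hn ▸ add_pos hLs hLt
  refine ⟨L s / n, L t / n, div_pos hLs hnpos, div_pos hLt hnpos, ?_, funext fun a => ?_⟩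
  · rw [← add_div, hn, div_self hnpos.ne']
  · simp only [Pi.add_apply, Pi.smul_apply, smul_eq_mul, normalizedMulLeft_apply]
    field_simp
    exact hsum a

theorem map_mul_of_mem_extremePoints_of_mem (hT : IsArchimedean T) {L : A →ₗ[ℝ] ℝ}
    (hext : ⇑L ∈ (stateSpace T).extremePoints ℝ) {t : A} (ht : t ∈ T) (a : A) :
    L (t * a) = L t * L a := by
  obtain ⟨⟨-, hL, hL1⟩, hext⟩ := mem_extremePoints_iff_left.1 hext
  rcases (hL t ht).eq_or_lt with hLt | hLt
  · rw [map_mul_eq_zero_of_map_eq_zero hT hL ht hLt.symm, ← hLt, zero_mul]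
  obtain ⟨n, hn⟩ := hT t
  -- The summand `1` makes `L` positive on the complement of `t` in `n + 1`.
  have hcompl : (n : A) - t + 1 ∈ T := add_mem hn T.one_mem
  have hLcompl : 0 < L (n - t + 1) := by
    rw [map_add, hL1]
    exact add_pos_of_nonneg_of_pos (hL _ hn) one_pos
  have hsplit : t + (n - t + 1) = ((n + 1 : ℕ) : A) := by
    push_cast
    ring
  have heq : ⇑(normalizedMulLeft L t) = L :=
    hext _ (normalizedMulLeft_mem_stateSpace hL ht hLt)
      _ (normalizedMulLeft_mem_stateSpace hL hcompl hLcompl)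
      (mem_openSegment_normalizedMulLeft hL1 hsplit hLt hLcompl)
  rw [← inv_mul_eq_iff_eq_mul₀ hLt.ne', ← normalizedMulLeft_apply, heq]

theorem exists_algHom_of_mem_extremePoints (hT : IsArchimedean T) {f : A → ℝ}
    (hf : f ∈ (stateSpace T).extremePoints ℝ) : ∃ φ : A →ₐ[ℝ] ℝ, ⇑φ = f := by
  obtain ⟨⟨L, rfl⟩, -, hL1⟩ := hf.1
  refine ⟨AlgHom.ofLinearMap L hL1 fun a b => ?_, rfl⟩
  obtain ⟨n, hn⟩ := hT (-a)
  have hmul := map_mul_of_mem_extremePoints_of_mem hT hf hn b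
  have hn_one : L (n : A) = n := by simpa [hL1] using map_natCast_mul L n 1
  rw [sub_neg_eq_add, add_mul, map_add, map_add, map_natCast_mul, hn_one] at hmul
  linarith

end States

section RepresentingMeasures

variable {X : Type*} [TopologicalSpace X] [CompactSpace X] [MeasurableSpace X]

/-- The generalized moments of `ν` with respect to a family `F` of continuous functions, as a
point of `ι → ℝ`. -/
noncomputable def moments {ι : Type*} (F : ι → C(X, ℝ)) (ν : ProbabilityMeasure X) (i : ι) : ℝ :=
  ∫ x, F i x ∂(ν : Measure X)

theorem continuous_moments [OpensMeasurableSpace X] {ι : Type*} (F : ι → C(X, ℝ)) :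
    Continuous (moments F) :=
  continuous_pi fun i => ProbabilityMeasure.continuous_integral_boundedContinuousFunction
    (BoundedContinuousFunction.mkOfCompact (F i))

theorem convex_range_moments [OpensMeasurableSpace X] {ι : Type*} (F : ι → C(X, ℝ)) :
    Convex ℝ (Set.range (moments F)) := by
  rintro _ ⟨ν, rfl⟩ _ ⟨ρ, rfl⟩ a b ha hb hab
  have hprob : IsProbabilityMeasure (ENNReal.ofReal a • (ν : Measure X)
      + ENNReal.ofReal b • (ρ : Measure X)) :=
    ⟨by simp [← ENNReal.ofReal_add ha hb, hab]⟩
  have hint (i : ι) (π : ProbabilityMeasure X) : Integrable (F i) (π : Measure X) :=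
    (BoundedContinuousFunction.mkOfCompact (F i)).integrable _
  refine ⟨⟨_, hprob⟩, funext fun i => ?_⟩
  simp only [moments, ProbabilityMeasure.coe_mk, Pi.add_apply, Pi.smul_apply]
  rw [integral_add_measure ((hint i ν).smul_measure ENNReal.ofReal_ne_top)
    ((hint i ρ).smul_measure ENNReal.ofReal_ne_top), integral_smul_measure,
    integral_smul_measure, ENNReal.toReal_ofReal ha, ENNReal.toReal_ofReal hb]

variable [T2Space X] [BorelSpace X]
  {A : Type*} [CommRing A] [Algebra ℝ A] {T : Subsemiring A}

theorem stateSpace_subset_range_moments (hT : IsArchimedean T) {F : A → C(X, ℝ)}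
    (hF : ∀ φ : A →ₐ[ℝ] ℝ, (∀ t ∈ T, 0 ≤ φ t) → ∃ x, ∀ a, F a x = φ a) :
    stateSpace T ⊆ Set.range (moments F) := by
  rw [← closure_convexHull_extremePoints (isCompact_stateSpace hT) (convex_stateSpace T)]
  refine closure_minimal (convexHull_min ?_ (convex_range_moments F))
    (isCompact_range (continuous_moments F)).isClosed
  intro f hf
  obtain ⟨φ, rfl⟩ := exists_algHom_of_mem_extremePoints hT hf
  obtain ⟨x, hx⟩ := hF φ hf.1.2.1
  refine ⟨⟨Measure.dirac x, inferInstance⟩, funext fun a => ?_⟩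
  rw [← hx a]
  exact integral_dirac' _ _ (F a).continuous.stronglyMeasurable

theorem exists_isFiniteMeasure_of_nonneg (hT : IsArchimedean T) {F : A → C(X, ℝ)}
    (hF : ∀ φ : A →ₐ[ℝ] ℝ, (∀ t ∈ T, 0 ≤ φ t) → ∃ x, ∀ a, F a x = φ a)
    {L : A →ₗ[ℝ] ℝ} (hL : ∀ t ∈ T, 0 ≤ L t) :
    ∃ μ : Measure X, IsFiniteMeasure μ ∧ ∀ a, L a = ∫ x, F a x ∂μ := by
  rcases (hL 1 T.one_mem).eq_or_lt with h1 | h1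
  · refine ⟨0, inferInstance, fun a => ?_⟩
    simpa using map_mul_eq_zero_of_map_eq_zero hT hL T.one_mem h1.symm a
  obtain ⟨ν, hν⟩ := stateSpace_subset_range_moments hT hF (inv_smul_mem_stateSpace hL h1)
  refine ⟨ENNReal.ofReal (L 1) • (ν : Measure X),
    Measure.smul_finite _ ENNReal.ofReal_ne_top, fun a => ?_⟩
  have hνa : ∫ x, F a x ∂(ν : Measure X) = (L 1)⁻¹ * L a := congrFun hν a
  rw [integral_smul_measure, ENNReal.toReal_ofReal h1.le, hνa, smul_eq_mul,
    mul_inv_cancel_left₀ h1.ne']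

end RepresentingMeasures

section Polynomials

variable {σ : Type*}

/-- The basic closed set attached to `T`: the points where all members of `T` are nonnegative. -/
def nonnegSet (T : Subsemiring (MvPolynomial σ ℝ)) : Set (σ → ℝ) :=
  {x | ∀ t ∈ T, 0 ≤ eval x t}

theorem isCompact_nonnegSet {T : Subsemiring (MvPolynomial σ ℝ)} (hT : IsArchimedean T) :
    IsCompact (nonnegSet T) := by
  have hclosed : IsClosed (nonnegSet T) := by
    simp only [nonnegSet, Set.ofPred_forall]
    exact isClosed_biInter fun t _ => isClosed_le continuous_const (continuous_eval t)
  choose N hN using hT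
  refine (isCompact_univ_pi fun i =>
    isCompact_Icc (a := -(N (-X i) : ℝ)) (b := N (X i))).of_isClosed_subset hclosed ?_
  intro x hx i _
  have hupper := hx _ (hN (X i))
  have hlower := hx _ (hN (-X i))
  simp only [map_sub, map_neg, map_natCast, eval_X] at hupper hlower
  exact ⟨by linarith, by linarith⟩

theorem exists_measure_of_nonneg_of_isArchimedean [Countable σ]
    {T : Subsemiring (MvPolynomial σ ℝ)} (hT : IsArchimedean T)
    {L : MvPolynomial σ ℝ →ₗ[ℝ] ℝ} (hL : ∀ t ∈ T, 0 ≤ L t) :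
    ∃ μ : Measure (σ → ℝ), IsFiniteMeasure μ ∧ μ (nonnegSet T)ᶜ = 0 ∧
      ∀ p, L p = ∫ x, eval x p ∂μ := by
  have hcompact := isCompact_nonnegSet hT
  have hmeas : MeasurableSet (nonnegSet T) := hcompact.isClosed.measurableSet
  have : CompactSpace (nonnegSet T) := isCompact_iff_compactSpace.1 hcompact
  let F (p : MvPolynomial σ ℝ) : C(nonnegSet T, ℝ) :=
    ⟨fun x => eval x.1 p, (continuous_eval p).comp continuous_subtype_val⟩
  have hF (φ : MvPolynomial σ ℝ →ₐ[ℝ] ℝ) (hφ : ∀ t ∈ T, 0 ≤ φ t) : ∃ x, ∀ p, F p x = φ p := by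
    have heval (p : MvPolynomial σ ℝ) : eval (fun i => φ (X i)) p = φ p :=
      (DFunLike.congr_fun (aeval_unique φ) p).symm
    exact ⟨⟨fun i => φ (X i), fun t ht => (heval t).symm ▸ hφ t ht⟩, heval⟩
  obtain ⟨μ, hμ, hLμ⟩ := exists_isFiniteMeasure_of_nonneg hT hF hL
  refine ⟨μ.map Subtype.val, inferInstance, ?_, fun p => ?_⟩
  · have hmem := ae_map_mem_range Subtype.val (by rwa [Subtype.range_coe]) μ
    rwa [Subtype.range_coe] at hmem
  · rw [hLμ p, (MeasurableEmbedding.subtype_coe hmeas).integral_map]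
    rfl

theorem isArchimedean_of_sub_sum_sq_mem [Fintype σ] {T : Subsemiring (MvPolynomial σ ℝ)}
    (hsq : ∀ p, p * p ∈ T) {r : ℝ} (hr : C r - ∑ i, X i ^ 2 ∈ T) : IsArchimedean T := by
  classical
  have hXsq (i : σ) : C r - X i ^ 2 ∈ T := by
    have hothers : ∑ j ∈ Finset.univ.erase i, (X j : MvPolynomial σ ℝ) ^ 2 ∈ T :=
      sum_mem fun j _ => sq (X j : MvPolynomial σ ℝ) ▸ hsq (X j)
    convert add_mem hr hothers using 1
    rw [← Finset.add_sum_erase _ _ (Finset.mem_univ i)]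
    ring
  have hbounded (p : MvPolynomial σ ℝ) : p ∈ boundedElements T := by
    induction p using MvPolynomial.induction_on with
    | C a => exact algebraMap_mem_boundedElements hsq a
    | add p q hp hq => exact add_mem hp hq
    | mul_X p i hp => exact mul_mem hp (mem_boundedElements_of_sub_sq_mem hsq (hXsq i))
  exact fun p => (hbounded p).imp fun _ => And.left

end Polynomials

section SumsOfSquaresModIdeal

variable {A : Type*} [CommRing A]

/-- The sums of squares modulo the ideal `I`, i.e. the sum of the cone of sums of squares and `I`.
Defined as a preimage in the quotient ring, which makes it a subsemiring. -/
def sumSqMod (I : Ideal A) : Subsemiring A :=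
  ((Subsemiring.sumSq A).map (Ideal.Quotient.mk I)).comap (Ideal.Quotient.mk I)

theorem mem_sumSqMod {I : Ideal A} {a : A} : a ∈ sumSqMod I ↔ ∃ s, IsSumSq s ∧ s - a ∈ I := by
  simp [sumSqMod, Ideal.Quotient.eq]

theorem mul_self_mem_sumSqMod (I : Ideal A) (a : A) : a * a ∈ sumSqMod I :=
  mem_sumSqMod.2 ⟨a * a, .mul_self a, by simp⟩

theorem mem_sumSqMod_of_mem {I : Ideal A} {a : A} (ha : a ∈ I) : a ∈ sumSqMod I :=
  mem_sumSqMod.2 ⟨0, .zero, by simpa using ha⟩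

theorem map_nonneg_of_isSumSq [Algebra ℝ A] {L : A →ₗ[ℝ] ℝ} (hsq : ∀ a, 0 ≤ L (a * a)) {s : A}
    (hs : IsSumSq s) : 0 ≤ L s := by
  induction hs with
  | zero => rw [map_zero]
  | sq_add a _ ih =>
    rw [map_add]
    exact add_nonneg (hsq a) ih

theorem map_nonneg_of_mem_sumSqMod [Algebra ℝ A] {I : Ideal A} {L : A →ₗ[ℝ] ℝ}
    (hsq : ∀ a, 0 ≤ L (a * a)) (hI : ∀ a ∈ I, L a = 0) {a : A} (ha : a ∈ sumSqMod I) :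
    0 ≤ L a := by
  obtain ⟨s, hs, hsa⟩ := mem_sumSqMod.1 ha
  have hLsa : L s = L a := by rw [← sub_eq_zero, ← map_sub, hI _ hsa]
  exact hLsa ▸ map_nonneg_of_isSumSq hsq hs

theorem nonnegSet_sumSqMod_subset_zeroLocus {σ : Type*} (I : Ideal (MvPolynomial σ ℝ)) :
    nonnegSet (sumSqMod I) ⊆ zeroLocus ℝ I := by
  intro x hx p hp
  have hneg := hx _ (mem_sumSqMod_of_mem (neg_mem hp))
  rw [map_neg, neg_nonneg] at hneg
  exact hneg.antisymm (hx _ (mem_sumSqMod_of_mem hp))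

theorem exists_measure_zeroLocus {σ : Type*} [Fintype σ] {I : Ideal (MvPolynomial σ ℝ)} {r : ℝ}
    (hr : C r - ∑ i, X i ^ 2 ∈ I) {L : MvPolynomial σ ℝ →ₗ[ℝ] ℝ}
    (hsq : ∀ p, 0 ≤ L (p * p)) (hI : ∀ p ∈ I, L p = 0) :
    ∃ μ : Measure (σ → ℝ), IsFiniteMeasure μ ∧ μ (zeroLocus ℝ I)ᶜ = 0 ∧
      ∀ p, L p = ∫ x, eval x p ∂μ := by
  have hT : IsArchimedean (sumSqMod I) :=
    isArchimedean_of_sub_sum_sq_mem (mul_self_mem_sumSqMod I) (mem_sumSqMod_of_mem hr)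
  obtain ⟨μ, hfin, hsupp, hμ⟩ := exists_measure_of_nonneg_of_isArchimedean hT
    fun _ => map_nonneg_of_mem_sumSqMod hsq hI
  exact ⟨μ, hfin, measure_mono_null
    (Set.compl_subset_compl.2 (nonnegSet_sumSqMod_subset_zeroLocus I)) hsupp, hμ⟩

end SumsOfSquaresModIdeal

section MomentMatrices

variable {σ : Type*} {L : MvPolynomial σ ℝ →ₗ[ℝ] ℝ}

theorem map_mul_self_nonneg_of_moment_matrix
    (hL : ∀ (s : Finset (σ →₀ ℕ)) (c : (σ →₀ ℕ) → ℝ),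
      0 ≤ ∑ β ∈ s, ∑ γ ∈ s, c β * c γ * L (monomial β (1 : ℝ) * monomial γ (1 : ℝ)))
    (p : MvPolynomial σ ℝ) : 0 ≤ L (p * p) := by
  convert hL p.support (coeff · p) using 1
  conv_lhs => rw [p.as_sum]
  simp only [Finset.sum_mul_sum, map_sum]
  refine Finset.sum_congr rfl fun β _ => Finset.sum_congr rfl fun γ _ => ?_
  rw [← smul_eq_mul (coeff β p * coeff γ p), ← map_smul, monomial_mul, monomial_mul,
    smul_monomial, mul_one, smul_eq_mul, mul_one]

theorem map_mul_eq_zero_of_monomial {q : MvPolynomial σ ℝ}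
    (hL : ∀ α, L (monomial α (1 : ℝ) * q) = 0) (p : MvPolynomial σ ℝ) : L (p * q) = 0 := by
  induction p using MvPolynomial.induction_on' with
  | monomial α a =>
    have hα : monomial α a = a • monomial α (1 : ℝ) := by rw [smul_monomial, smul_eq_mul, mul_one]
    rw [hα, smul_mul_assoc, map_smul, hL, smul_zero]
  | add p r hp hr => rw [add_mul, map_add, hp, hr, add_zero]

end MomentMatrices

end MomentProblem

open MomentProblem in
theorem limit_functional_representing_measure_sphere_general
    {σ : Type*} [Fintype σ] (L : MvPolynomial σ ℝ →ₗ[ℝ] ℝ)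
    (hmoment : ∀ (s : Finset (σ →₀ ℕ)) (c : (σ →₀ ℕ) → ℝ),
      0 ≤ ∑ β ∈ s, ∑ γ ∈ s, c β * c γ * L (monomial β (1 : ℝ) * monomial γ (1 : ℝ)))
    (hsphere : ∀ α : σ →₀ ℕ,
      L (monomial α (1 : ℝ)) = L (monomial α (1 : ℝ) * ∑ i, X i ^ 2)) :
    ∃ μ : Measure (σ → ℝ), IsFiniteMeasure μ ∧ μ {x | ∑ i, x i ^ 2 = 1}ᶜ = 0 ∧
      ∀ p, L p = ∫ x, eval x p ∂μ := by
  let I : Ideal (MvPolynomial σ ℝ) := Ideal.span {C 1 - ∑ i, X i ^ 2}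
  have hlocus : zeroLocus ℝ I = {x : σ → ℝ | ∑ i, x i ^ 2 = 1} := by
    ext x
    simp [I, zeroLocus_span, sub_eq_zero, eq_comm (a := (1 : ℝ))]
  have hvanish : ∀ p ∈ I, L p = 0 := fun p hp => by
    obtain ⟨q, rfl⟩ := Ideal.mem_span_singleton'.1 hp
    exact map_mul_eq_zero_of_monomial (fun α => by simp [mul_sub, ← hsphere α]) q
  rw [← hlocus]
  exact exists_measure_zeroLocus (Ideal.mem_span_singleton_self _)
    (map_mul_self_nonneg_of_moment_matrix hmoment) hvanish

/-- **Proposition (representing measure on the sphere).**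
If a linear functional `L` on the polynomial ring satisfies `L(1) ≤ 1`, has positive
semidefinite moment matrices of all orders, and satisfies
`L(x^α) = L(x^α·(x₁² + ⋯ + xₙ²))` for all `α`, then `L` is represented by a positive
finite Borel measure supported on the unit sphere. -/
theorem limit_functional_representing_measure_sphere
    {n : ℕ} (L : MvPolynomial (Fin n) ℝ →ₗ[ℝ] ℝ)
    (h1 : L 1 ≤ 1)
    (h2 : ∀ t : ℕ, ∀ s : Finset (Fin n →₀ ℕ), (∀ β ∈ s, (∑ i, β i) ≤ t) →
      ∀ c : (Fin n →₀ ℕ) → ℝ,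
      0 ≤ ∑ β ∈ s, ∑ γ ∈ s, c β * c γ * L (monomial β (1 : ℝ) * monomial γ (1 : ℝ)))
    (h3 : ∀ α : Fin n →₀ ℕ,
      L (monomial α (1 : ℝ)) = L (monomial α (1 : ℝ) * ∑ i, X i ^ 2))
    (S : Set (Fin n → ℝ)) (hS : S = {x : Fin n → ℝ | (∑ i, x i ^ 2) = 1}) :
    ∃ μ : Measure (Fin n → ℝ), IsFiniteMeasure μ ∧ μ Sᶜ = 0 ∧
      ∀ p : MvPolynomial (Fin n) ℝ, L p = ∫ x, eval x p ∂μ := by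
  subst hS
  exact limit_functional_representing_measure_sphere_general L
    (fun s c => h2 _ s (fun β hβ => Finset.le_sup (f := fun β => ∑ i, β i) hβ) c) h3
end
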